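/- arXiv:1109.2251 — 2 statements merged into one kernel-verified Lean document; each statement's English description precedes it below -/
import Mathlib

section
/- Let d be a positive fundamental discriminant, let g = gcd(3, d), and let K₁, …, K_n be pairwise non-isomorphic totally real cubic number fields, each of discriminant d. For each i define r_i : ℕ → ℕ by r_i(m) = #{x ∈ O_{K_i}^0 : Tr_{K_i/ℚ}(x²) = 2·g·m}. If complex numbers λ₁, …, λ_n satisfy λ₁·r_1(m) + ⋯ + λ_n·r_n(m) = 0 for every natural number m, then λ₁ = ⋯ = λ_n = 0. In other words, the theta series f_{K_1}, …, f_{K_n} are linearly independent over ℂ. -/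
/-- An integer `d` is a fundamental discriminant if `d ≠ 1` and either
`d ≡ 1 (mod 4)` and `d` is squarefree, or `d ≡ 0 (mod 4)`, `d/4` is squarefree,
and `d/4 ≡ 2` or `3 (mod 4)`. -/
def IsFundamentalDiscriminant (d : ℤ) : Prop :=
  d ≠ 1 ∧
    ((d % 4 = 1 ∧ Squarefree d) ∨
      (d % 4 = 0 ∧ Squarefree (d / 4) ∧ (d / 4 % 4 = 2 ∨ d / 4 % 4 = 3)))

namespace ThetaIndep
open NumberField

section A1
variable {F : Type} [Field F] [NumberField F]

open Classical in
noncomputable def cl (I : Ideal (𝓞 F)) : ClassGroup (𝓞 F) :=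
  if h : I ≠ ⊥ then ClassGroup.mk0 ⟨I, mem_nonZeroDivisors_iff_ne_zero.mpr h⟩ else 1

lemma cl_of_ne {I : Ideal (𝓞 F)} (h : I ≠ ⊥) :
    cl I = ClassGroup.mk0 ⟨I, mem_nonZeroDivisors_iff_ne_zero.mpr h⟩ := by
  unfold cl; rw [dif_pos h]

lemma cl_mul {I J : Ideal (𝓞 F)} (hI : I ≠ ⊥) (hJ : J ≠ ⊥) : cl (I * J) = cl I * cl J := by
  rw [cl_of_ne hI, cl_of_ne hJ, cl_of_ne (mul_ne_zero hI hJ), ← map_mul]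
  rfl

lemma cl_eq_one_iff {I : Ideal (𝓞 F)} (hI : I ≠ ⊥) : cl I = 1 ↔ ∃ x, I = Ideal.span {x} := by
  rw [cl_of_ne hI, ClassGroup.mk0_eq_one_iff]
  exact ⟨fun h => h.principal, fun h => ⟨h⟩⟩

lemma cl_span (x : 𝓞 F) : cl (Ideal.span {x}) = 1 := by
  by_cases h : Ideal.span {x} = ⊥
  · unfold cl; rw [dif_neg (by simpa using h)]
  · exact (cl_eq_one_iff h).2 ⟨x, rfl⟩

lemma cl_surj (c : ClassGroup (𝓞 F)) : ∃ I : Ideal (𝓞 F), I ≠ ⊥ ∧ cl I = c := by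
  obtain ⟨I, rfl⟩ := ClassGroup.mk0_surjective c
  refine ⟨I, mem_nonZeroDivisors_iff_ne_zero.mp I.2, ?_⟩
  rw [cl_of_ne (mem_nonZeroDivisors_iff_ne_zero.mp I.2)]

lemma cl_one : cl (1 : Ideal (𝓞 F)) = 1 := by
  have := cl_span (1 : 𝓞 F)
  simpa [Ideal.span_singleton_one, ← Ideal.one_eq_top] using this

noncomputable def idl (F : Type) [Field F] [NumberField F] (m : ℕ) : Finset (Ideal (𝓞 F)) :=
  (Ideal.finite_setOfPred_absNorm_eq (S := 𝓞 F) m).toFinset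

lemma mem_idl {m : ℕ} {J : Ideal (𝓞 F)} : J ∈ idl F m ↔ Ideal.absNorm J = m := by
  simp [idl]

lemma ne_bot_of_absNorm {J : Ideal (𝓞 F)} {m : ℕ} (hm : 1 ≤ m) (h : Ideal.absNorm J = m) :
    J ≠ ⊥ := by
  rintro rfl
  simp at h; omega

def EE (φ : ClassGroup (𝓞 F) → ℂ) : Prop := ∀ m : ℕ, 1 ≤ m → ∑ J ∈ idl F m, φ (cl J) = 0

lemma EE_one {φ : ClassGroup (𝓞 F) → ℂ} (h : EE φ) : φ 1 = 0 := by
  have h1 := h 1 le_rfl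
  have : idl F 1 = {1} := by
    ext J
    rw [mem_idl, Ideal.absNorm_eq_one_iff, Finset.mem_singleton, Ideal.one_eq_top]
  rw [this, Finset.sum_singleton, cl_one] at h1
  exact h1


lemma absNorm_natCast (hF : Module.finrank ℚ F = 2) (n : ℕ) : Ideal.absNorm (Ideal.span {(n : 𝓞 F)}) = n ^ 2 := by
  rw [Ideal.absNorm_span_natCast, RingOfIntegers.rank, hF]

lemma exists_conj (hF : Module.finrank ℚ F = 2) {J : Ideal (𝓞 F)} (hJ : J ≠ ⊥) : ∃ J', J' ≠ ⊥ ∧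
    J * J' = Ideal.span {((Ideal.absNorm J : ℕ) : 𝓞 F)} ∧ Ideal.absNorm J' = Ideal.absNorm J ∧
    cl J' = (cl J)⁻¹ := by
  have hd : J ∣ Ideal.span {((Ideal.absNorm J : ℕ) : 𝓞 F)} := by
    rw [Ideal.dvd_span_singleton]; exact Ideal.absNorm_mem J
  obtain ⟨J', h⟩ := hd
  have hn : Ideal.absNorm J ≠ 0 := by rwa [Ne, Ideal.absNorm_eq_zero_iff]
  have h2 := congrArg Ideal.absNorm h
  rw [absNorm_natCast hF, map_mul, sq] at h2
  have h3 : Ideal.absNorm J' = Ideal.absNorm J := (Nat.eq_of_mul_eq_mul_left (Nat.pos_of_ne_zero hn) h2).symm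
  have hJ' : J' ≠ ⊥ := by
    rw [← h3] at hn
    rwa [Ne, Ideal.absNorm_eq_zero_iff] at hn
  refine ⟨J', hJ', h.symm, h3, ?_⟩
  rw [eq_comm, inv_eq_iff_mul_eq_one, ← cl_mul hJ hJ', ← h, cl_span]

lemma EE_inv (hF : Module.finrank ℚ F = 2) {φ : ClassGroup (𝓞 F) → ℂ} (h : EE φ) : EE (fun c => φ c⁻¹) := by
  intro m hm
  rw [← h m hm]
  have hne : ∀ J ∈ idl F m, J ≠ ⊥ := fun J hJ => ne_bot_of_absNorm hm (mem_idl.1 hJ)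
  choose! cj h1 h2 h3 h4 using fun (J : Ideal (𝓞 F)) (hJ : J ≠ ⊥) => exists_conj hF hJ
  refine Finset.sum_bij' (fun J _ => cj J) (fun J _ => cj J) ?_ ?_ ?_ ?_ ?_
  · intro J hJ; rw [mem_idl, h3 J (hne J hJ)]; exact mem_idl.1 hJ
  · intro J hJ; rw [mem_idl, h3 J (hne J hJ)]; exact mem_idl.1 hJ
  · intro J hJ
    have hn := hne J hJ
    have e1 := h2 (cj J) (h1 J hn)
    rw [h3 J hn, ← h2 J hn, mul_comm J] at e1
    exact mul_left_cancel₀ (h1 J hn) e1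
  · intro J hJ
    have hn := hne J hJ
    have e1 := h2 (cj J) (h1 J hn)
    rw [h3 J hn, ← h2 J hn, mul_comm J] at e1
    exact mul_left_cancel₀ (h1 J hn) e1
  · intro J hJ
    rw [h4 J (hne J hJ)]

lemma sum_mul_eq {P : Ideal (𝓞 F)} (hP : P ≠ ⊥) {p m : ℕ} (hp : Ideal.absNorm P = p)
    (hm : 1 ≤ m) (φ : ClassGroup (𝓞 F) → ℂ) [DecidablePred fun K : Ideal (𝓞 F) => P ∣ K] :
    ∑ J ∈ idl F m, φ (cl J * cl P) = ∑ K ∈ (idl F (m * p)).filter (fun K => P ∣ K), φ (cl K) := by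
  have hp0 : 0 < p := by
    rw [← hp]; apply Nat.pos_of_ne_zero; rwa [Ne, Ideal.absNorm_eq_zero_iff]
  refine Finset.sum_bij (fun J _ => J * P) ?_ ?_ ?_ ?_
  · intro J hJ
    rw [Finset.mem_filter, mem_idl, map_mul, hp, mem_idl.1 hJ]
    exact ⟨rfl, dvd_mul_left _ _⟩
  · intro J _ J' _ h
    exact mul_right_cancel₀ hP h
  · intro K hK
    rw [Finset.mem_filter, mem_idl] at hK
    obtain ⟨h1, J, rfl⟩ := hK
    refine ⟨J, ?_, mul_comm _ _⟩
    rw [map_mul, hp, mul_comm] at h1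
    exact mem_idl.2 (Nat.eq_of_mul_eq_mul_right hp0 h1)
  · intro J hJ
    rw [cl_mul (ne_bot_of_absNorm hm (mem_idl.1 hJ)) hP]

lemma dvd_or_dvd {P Q : Ideal (𝓞 F)} {p : ℕ} (hp : p.Prime) (hPp : P.IsPrime) (hQp : Q.IsPrime)
    (hP0 : P ≠ ⊥) (hQ0 : Q ≠ ⊥)
    (hPQ : P * Q = Ideal.span {(p : 𝓞 F)}) {K : Ideal (𝓞 F)} (hK : p ∣ Ideal.absNorm K) :
    P ∣ K ∨ Q ∣ K := by
  obtain ⟨M, hM, hMp, hMK⟩ := Ideal.exists_isMaximal_dvd_of_dvd_absNorm' hp K hK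
  have hpM : (p : 𝓞 F) ∈ M := by
    have : (p : ℤ) ∈ M.under ℤ := by rw [hMp]; exact Ideal.mem_span_singleton_self _
    simpa [Ideal.mem_comap] using this
  have h1 : P * Q ≤ M := by rw [hPQ, Ideal.span_singleton_le_iff_mem]; exact hpM
  rcases (hM.isPrime.mul_le).1 h1 with h | h
  · left
    have := (hPp.isMaximal hP0).eq_of_le hM.ne_top h
    rwa [this]
  · right
    have := (hQp.isMaximal hQ0).eq_of_le hM.ne_top h
    rwa [this]

lemma EE_split {P Q : Ideal (𝓞 F)} {p : ℕ} (hp : p.Prime) (hPp : P.IsPrime) (hQp : Q.IsPrime)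
    (hPQ : P * Q = Ideal.span {(p : 𝓞 F)}) (hNP : Ideal.absNorm P = p) (hNQ : Ideal.absNorm Q = p)
    (hne : P ≠ Q) {φ : ClassGroup (𝓞 F) → ℂ} (h : EE φ) :
    EE (fun c => φ (c * cl P) + φ (c * cl Q)) := by
  classical
  intro m hm
  have hP0 : P ≠ ⊥ := ne_bot_of_absNorm hp.one_lt.le hNP
  have hQ0 : Q ≠ ⊥ := ne_bot_of_absNorm hp.one_lt.le hNQ
  have hcop : IsCoprime P Q := by
    rw [Ideal.isCoprime_iff_sup_eq]
    have := hPp.isMaximal hP0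
    have h2 := hQp.isMaximal hQ0
    exact Ideal.IsMaximal.coprime_of_ne this h2 hne
  rw [Finset.sum_add_distrib, sum_mul_eq hP0 hNP hm, sum_mul_eq hQ0 hNQ hm,
    ← Finset.sum_union_inter, ← Finset.filter_or, ← Finset.filter_and]
  have e1 : (idl F (m * p)).filter (fun K => P ∣ K ∨ Q ∣ K) = idl F (m * p) := by
    rw [Finset.filter_true_of_mem]
    intro K hK
    refine dvd_or_dvd hp hPp hQp hP0 hQ0 hPQ ?_
    rw [mem_idl.1 hK]; exact dvd_mul_left _ _
  rw [e1, h (m * p) (Nat.mul_pos hm hp.pos), zero_add]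
  have e2 : (idl F (m * p)).filter (fun K => P ∣ K ∧ Q ∣ K) =
      (idl F (m * p)).filter (fun K => (P * Q) ∣ K) := by
    apply Finset.filter_congr
    intro K _
    exact ⟨fun h => hcop.mul_dvd h.1 h.2,
      fun h => ⟨(dvd_mul_right _ _).trans h, (dvd_mul_left _ _).trans h⟩⟩
  rw [e2]
  have hPQ0 : P * Q ≠ ⊥ := mul_ne_zero hP0 hQ0
  have hNPQ : Ideal.absNorm (P * Q) = p * p := by rw [map_mul, hNP, hNQ]
  by_cases hd : p ∣ m
  · obtain ⟨k, rfl⟩ := hd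
    have hk : 1 ≤ k := by
      rcases Nat.eq_zero_or_pos k with rfl | h
      · simp at hm
      · exact h
    have := sum_mul_eq hPQ0 hNPQ hk φ
    rw [show p * k * p = k * (p * p) by ring, ← this, ← h k hk]
    refine Finset.sum_congr rfl fun J _ => ?_
    rw [hPQ, cl_span, mul_one]
  · rw [Finset.filter_false_of_mem, Finset.sum_empty]
    rintro K hK ⟨J, rfl⟩
    rw [mem_idl, map_mul, hNPQ] at hK
    apply hd
    refine ⟨Ideal.absNorm J, ?_⟩
    apply Nat.eq_of_mul_eq_mul_right hp.pos
    rw [← hK]; ring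

lemma EE_ram {P : Ideal (𝓞 F)} {p : ℕ} (hp : p.Prime) (hPp : P.IsPrime)
    (hPQ : P * P = Ideal.span {(p : 𝓞 F)}) (hNP : Ideal.absNorm P = p)
    {φ : ClassGroup (𝓞 F) → ℂ} (h : EE φ) :
    EE (fun c => φ (c * cl P)) := by
  classical
  intro m hm
  have hP0 : P ≠ ⊥ := ne_bot_of_absNorm hp.one_lt.le hNP
  rw [sum_mul_eq hP0 hNP hm, Finset.filter_true_of_mem]
  · exact h (m * p) (Nat.mul_pos hm hp.pos)
  · intro K hK
    have := dvd_or_dvd hp hPp hPp hP0 hP0 hPQ (K := K) (by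
      rw [mem_idl.1 hK]; exact dvd_mul_left _ _)
    tauto

lemma prime_cases (hF : Module.finrank ℚ F = 2) {P : Ideal (𝓞 F)} (hPp : P.IsPrime) (hP0 : P ≠ ⊥) :
    cl P = 1 ∨ ∃ (p : ℕ) (Q : Ideal (𝓞 F)), p.Prime ∧ Q.IsPrime ∧
      P * Q = Ideal.span {(p : 𝓞 F)} ∧ Ideal.absNorm P = p ∧ Ideal.absNorm Q = p ∧
      cl Q = (cl P)⁻¹ := by
  have := hPp.isMaximal hP0
  have : Finite (𝓞 F ⧸ P) := Ideal.finiteQuotientOfFreeOfNeBot P hP0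
  obtain ⟨p, k, hk, hpP, hp, hN⟩ := Ideal.exists_prime_and_absNorm_eq_pow P
  have hd : P ∣ Ideal.span {(p : 𝓞 F)} := by rwa [Ideal.dvd_span_singleton]
  obtain ⟨Q, hQ⟩ := hd
  have h2 := congrArg Ideal.absNorm hQ
  rw [absNorm_natCast hF, map_mul, hN] at h2
  have hQ0 : Q ≠ ⊥ := by
    rintro rfl
    simp [hp.ne_zero] at h2
  have hk2 : k ≤ 2 := by
    have : p ^ k ∣ p ^ 2 := ⟨_, h2⟩
    exact (Nat.pow_dvd_pow_iff_le_right hp.one_lt).1 this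
  have hcl : cl Q = (cl P)⁻¹ := by
    rw [eq_comm, inv_eq_iff_mul_eq_one, ← cl_mul hP0 hQ0, ← hQ, cl_span]
  interval_cases k
  · right
    have hNQ : Ideal.absNorm Q = p := by
      apply Nat.eq_of_mul_eq_mul_left hp.pos
      rw [pow_one] at h2
      rw [← h2]; ring
    refine ⟨p, Q, hp, ?_, hQ.symm, by simpa using hN, hNQ, hcl⟩
    apply Ideal.isPrime_of_irreducible_absNorm
    rw [hNQ]; exact hp
  · left
    have hNQ : Ideal.absNorm Q = 1 := by
      apply Nat.eq_of_mul_eq_mul_left (pow_pos hp.pos 2)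
      rw [← h2]; ring
    rw [Ideal.absNorm_eq_one_iff, ← Ideal.one_eq_top] at hNQ
    rw [hNQ, mul_one] at hQ
    rw [← hQ, cl_span]

end A1
end ThetaIndep

namespace ThetaIndep
open NumberField

section A2

noncomputable def ch {G : Type} [CommGroup G] (ψ : AddChar (Additive G) ℂ) (c : G) : ℂ :=
  ψ (Additive.ofMul c)

section grp
variable {G : Type} [CommGroup G]

lemma ch_mul (ψ : AddChar (Additive G) ℂ) (a b : G) : ch ψ (a * b) = ch ψ a * ch ψ b := by
  unfold ch; rw [ofMul_mul, AddChar.map_add_eq_mul]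

lemma ch_one (ψ : AddChar (Additive G) ℂ) : ch ψ 1 = 1 := by
  unfold ch; rw [ofMul_one, AddChar.map_zero_eq_one]

lemma ch_ne (ψ : AddChar (Additive G) ℂ) (a : G) : ch ψ a ≠ 0 := by
  intro h
  have := ch_mul ψ a a⁻¹
  rw [h, mul_inv_cancel, ch_one, zero_mul] at this
  exact one_ne_zero this

lemma ch_inv (ψ : AddChar (Additive G) ℂ) (a : G) : ch ψ a⁻¹ = (ch ψ a)⁻¹ := by
  apply eq_inv_of_mul_eq_one_left
  rw [← ch_mul, inv_mul_cancel, ch_one]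

lemma ch_pow (ψ : AddChar (Additive G) ℂ) (a : G) (n : ℕ) : ch ψ (a ^ n) = ch ψ a ^ n := by
  induction n with
  | zero => simp [ch_one]
  | succ k ih => rw [pow_succ, ch_mul, ih, pow_succ]

lemma mul_ch (ψ ψ' : AddChar (Additive G) ℂ) (a : G) : ch (ψ * ψ') a = ch ψ a * ch ψ' a := rfl

lemma inv_ch (ψ : AddChar (Additive G) ℂ) (a : G) : ch (ψ⁻¹) a = (ch ψ a)⁻¹ := by
  rw [← ch_inv]; rfl

lemma one_ch (a : G) : ch (1 : AddChar (Additive G) ℂ) a = 1 := rfl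

lemma pow_ch (ψ : AddChar (Additive G) ℂ) (a : G) (n : ℕ) : ch (ψ ^ n) a = ch ψ a ^ n := by
  induction n with
  | zero => simp [one_ch]
  | succ k ih => rw [pow_succ, mul_ch, ih, pow_succ]

lemma ch_ext {ψ ψ' : AddChar (Additive G) ℂ} (h : ∀ a, ch ψ a = ch ψ' a) : ψ = ψ' := by
  ext a; exact h a.toMul

lemma fourier [Fintype G] [Fintype (AddChar (Additive G) ℂ)] (f : G → ℂ) (c : G) :
    ∑ ψ : AddChar (Additive G) ℂ, (∑ a : G, f a * ch ψ a⁻¹) * ch ψ c = Fintype.card G * f c := by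
  classical
  have : ∀ a : G, ∑ ψ : AddChar (Additive G) ℂ, ch ψ (a⁻¹ * c) =
      if a = c then (Fintype.card G : ℂ) else 0 := by
    intro a
    have h := AddChar.sum_apply_eq_ite (α := Additive G) (Additive.ofMul (a⁻¹ * c))
    have e : (Additive.ofMul (a⁻¹ * c) = 0) ↔ a = c := by
      rw [ofMul_eq_zero, inv_mul_eq_one]
    simp only [e] at h
    unfold ch
    convert h using 1
    · congr!
    · rw [show Fintype.card (Additive G) = Fintype.card G from Fintype.card_congr Additive.toMul]
  simp_rw [Finset.sum_mul]
  rw [Finset.sum_comm]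
  simp_rw [mul_assoc, ← ch_mul, ← Finset.mul_sum, this]
  simp [mul_comm]

end grp

variable {F : Type} [Field F] [NumberField F]

lemma EE_add {φ φ' : ClassGroup (𝓞 F) → ℂ} (h : EE φ) (h' : EE φ') (a : ℂ) :
    EE (fun c => φ c + a * φ' c) := by
  intro m hm
  rw [Finset.sum_add_distrib, ← Finset.mul_sum, h m hm, h' m hm]; simp

lemma hecke (hF : Module.finrank ℚ F = 2) {P : Ideal (𝓞 F)} (hPp : P.IsPrime) (hP0 : P ≠ ⊥) :
    ∃ ε : ℂ, (ε = 1 ∨ ε = 0) ∧ ∀ φ : ClassGroup (𝓞 F) → ℂ, EE φ →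
      EE (fun c => φ (c * cl P) + ε * φ (c * (cl P)⁻¹)) := by
  rcases prime_cases hF hPp hP0 with h | ⟨p, Q, hp, hQ, hPQ, hNP, hNQ, hcl⟩
  · refine ⟨0, Or.inr rfl, fun φ hφ => ?_⟩
    simpa [h] using hφ
  · by_cases e : P = Q
    · refine ⟨0, Or.inr rfl, fun φ hφ => ?_⟩
      subst e
      simpa using EE_ram hp hPp hPQ hNP hφ
    · refine ⟨1, Or.inl rfl, fun φ hφ => ?_⟩
      have := EE_split hp hPp hQ hPQ hNP hNQ e hφ
      simpa [hcl] using this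

lemma prime_generate (χ : AddChar (Additive (ClassGroup (𝓞 F))) ℂ)
    (h : ∀ P : Ideal (𝓞 F), P.IsPrime → P ≠ ⊥ → ch χ (cl P) = 1) : χ = 1 := by
  apply ch_ext
  intro c
  rw [one_ch]
  obtain ⟨I, hI, rfl⟩ := cl_surj c
  induction I using UniqueFactorizationMonoid.induction_on_prime with
  | h₁ => exact absurd rfl hI
  | h₂ I hI' =>
    obtain rfl : I = 1 := by simpa using hI'
    rw [cl_one, ch_one]
  | h₃ I P hI' hP IH =>
    rw [cl_mul hP.ne_zero hI', ch_mul, IH hI', h P (Ideal.isPrime_of_prime hP) hP.ne_zero, one_mul]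

def AnClaim (F : Type) [Field F] [NumberField F] : Prop :=
  ∀ χ1 χ2 : AddChar (Additive (ClassGroup (𝓞 F))) ℂ, ∀ n : ℕ, Odd n → χ1 ^ n = 1 → χ2 ^ n = 1 →
    χ1 ≠ 1 → χ2 ≠ 1 →
    (∀ P : Ideal (𝓞 F), P.IsPrime → P ≠ ⊥ → ch χ1 (cl P) = 1 ∨ ch χ2 (cl P) = 1) → False

lemma coeff_zero (hF : Module.finrank ℚ F = 2) (hAn : AnClaim F)
    [Fintype (AddChar (Additive (ClassGroup (𝓞 F))) ℂ)]
    (μ : AddChar (Additive (ClassGroup (𝓞 F))) ℂ → ℂ) (hsym : ∀ ψ, μ ψ⁻¹ = μ ψ)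
    (hE : EE (fun c => ∑ ψ, μ ψ * ch ψ c))
    (χ0 : AddChar (Additive (ClassGroup (𝓞 F))) ℂ) {n : ℕ} (hn : Odd n) (hχ : χ0 ^ n = 1) :
    μ χ0 = 0 := by
  classical
  choose! ε hε hT using fun (P : Ideal (𝓞 F)) (h : P.IsPrime ∧ P ≠ ⊥) => hecke hF h.1 h.2
  set t : AddChar (Additive (ClassGroup (𝓞 F))) ℂ → Ideal (𝓞 F) → ℂ :=
    fun ψ P => ch ψ (cl P) + ε P * ch ψ (cl P)⁻¹ with ht
  let sim : AddChar (Additive (ClassGroup (𝓞 F))) ℂ → Prop := fun ψ =>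
    ∀ P : Ideal (𝓞 F), P.IsPrime ∧ P ≠ ⊥ → t ψ P = t χ0 P
  have hsim : ∀ ψ, sim ψ → ψ = χ0 ∨ ψ = χ0⁻¹ := by
    intro ψ hψ
    have h1 : ∀ P : Ideal (𝓞 F), P.IsPrime → P ≠ ⊥ → ch ψ (cl P) = ch χ0 (cl P) ∨
        ch ψ (cl P) = (ch χ0 (cl P))⁻¹ := by
      intro P hP hP0
      have h2 := hψ P ⟨hP, hP0⟩
      simp only [ht, ch_inv] at h2
      rcases hε P ⟨hP, hP0⟩ with e | e
      · rw [e] at h2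
        have hx := ch_ne ψ (cl P)
        have hy := ch_ne χ0 (cl P)
        field_simp at h2
        have h3 : (ch ψ (cl P) - ch χ0 (cl P)) * (ch ψ (cl P) * ch χ0 (cl P) - 1) = 0 := by
          linear_combination h2
        rcases mul_eq_zero.1 h3 with h | h
        · left; exact sub_eq_zero.1 h
        · right; exact eq_inv_of_mul_eq_one_left (sub_eq_zero.1 h)
      · left; simpa [e] using h2
    have hpow : ∀ c, ch χ0 c ^ n = 1 := fun c => by rw [← pow_ch, hχ, one_ch]
    have hψn : ψ ^ n = 1 := by
      apply prime_generate
      intro P hP hP0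
      rw [pow_ch]
      rcases h1 P hP hP0 with h | h
      · rw [h, hpow]
      · rw [h, inv_pow, hpow, inv_one]
    by_contra hcon
    push Not at hcon
    refine hAn (ψ * χ0⁻¹) (ψ * χ0) n hn ?_ ?_ ?_ ?_ ?_
    · rw [mul_pow, inv_pow, hψn, hχ]; simp
    · rw [mul_pow, hψn, hχ]; simp
    · intro h; exact hcon.1 (mul_inv_eq_one.1 h)
    · intro h; exact hcon.2 (mul_eq_one_iff_eq_inv.1 h)
    · intro P hP hP0
      rw [mul_ch, mul_ch, inv_ch]
      have hy := ch_ne χ0 (cl P)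
      rcases h1 P hP hP0 with h | h
      · left; rw [h, mul_inv_cancel₀ hy]
      · right; rw [h, inv_mul_cancel₀ hy]
  have hPex : ∀ ψ, ¬ sim ψ → ∃ P : Ideal (𝓞 F), (P.IsPrime ∧ P ≠ ⊥) ∧ t χ0 P - t ψ P ≠ 0 := by
    intro ψ hψ
    simp only [sim] at hψ
    push Not at hψ
    obtain ⟨P, hP, h⟩ := hψ
    exact ⟨P, hP, fun h' => h (sub_eq_zero.1 h').symm⟩
  choose! PP hPP hPne using hPex
  have step : ∀ S : Finset (AddChar (Additive (ClassGroup (𝓞 F))) ℂ), (∀ ψ ∈ S, ¬ sim ψ) →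
      EE (fun c => ∑ ψ, (μ ψ * ∏ ψ' ∈ S, (t ψ (PP ψ') - t ψ' (PP ψ'))) * ch ψ c) := by
    intro S
    induction S using Finset.induction_on with
    | empty => intro _; simpa using hE
    | insert ψ0 S hS ih =>
      intro hS'
      have ih' := ih (fun ψ h => hS' ψ (Finset.mem_insert_of_mem h))
      have hp := hPP ψ0 (hS' ψ0 (Finset.mem_insert_self _ _))
      have h3 := EE_add (hT _ hp _ ih') ih' (-(t ψ0 (PP ψ0)))
      convert h3 using 2 with c
      rw [Finset.mul_sum, Finset.mul_sum, ← Finset.sum_add_distrib, ← Finset.sum_add_distrib]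
      refine Finset.sum_congr rfl fun ψ _ => ?_
      rw [Finset.prod_insert hS]
      simp only [ht, ch_mul]
      ring
  have hfin := EE_one (step (Finset.univ.filter (fun ψ => ¬ sim ψ)) (by simp))
  simp only [ch_one, mul_one] at hfin
  set S := Finset.univ.filter (fun ψ => ¬ sim ψ) with hSdef
  set A := ∏ ψ' ∈ S, (t χ0 (PP ψ') - t ψ' (PP ψ')) with hA
  have hA0 : A ≠ 0 := by
    rw [hA, Finset.prod_ne_zero_iff]
    intro ψ hψ
    exact hPne ψ (by simpa [hSdef] using hψ)
  have hval : ∀ ψ, μ ψ * ∏ ψ' ∈ S, (t ψ (PP ψ') - t ψ' (PP ψ')) =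
      if sim ψ then μ χ0 * A else 0 := by
    intro ψ
    split_ifs with h
    · have h1 : μ ψ = μ χ0 := by
        rcases hsim ψ h with e | e
        · rw [e]
        · rw [e, hsym]
      rw [h1, hA]
      congr 1
      refine Finset.prod_congr rfl fun ψ' hψ' => ?_
      rw [h (PP ψ') (hPP ψ' (by simpa [hSdef] using hψ'))]
    · have hmem : ψ ∈ S := by simp [hSdef, h]
      rw [Finset.prod_eq_zero hmem (sub_self _), mul_zero]
  simp_rw [hval] at hfin
  rw [← Finset.sum_filter, Finset.sum_const, nsmul_eq_mul] at hfin
  have hcard : ((Finset.univ.filter (fun ψ => sim ψ)).card : ℂ) ≠ 0 := by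
    rw [Nat.cast_ne_zero, Finset.card_ne_zero]
    exact ⟨χ0, by simp [sim]⟩
  rcases mul_eq_zero.1 hfin with h | h
  · exact absurd h hcard
  · exact (mul_eq_zero.1 h).resolve_right hA0

theorem classTheorem (hF : Module.finrank ℚ F = 2) (hAn : AnClaim F) {n : ℕ}
    (c : Fin n → ClassGroup (𝓞 F)) (lam : Fin n → ℂ)
    (h3 : ∀ i j, c i ^ 3 * c j ^ 3 = 1)
    (hne : ∀ i j, c i = c j → i = j) (hne' : ∀ i j, c i = (c j)⁻¹ → i = j)
    (hlin : ∀ m : ℕ, 1 ≤ m → ∑ i, lam i *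
      (Nat.card {J : Ideal (𝓞 F) // Ideal.absNorm J = m ∧ cl J = c i} : ℂ) = 0) :
    ∀ i, lam i = 0 := by
  classical
  have : Fintype (AddChar (Additive (ClassGroup (𝓞 F))) ℂ) := Fintype.ofFinite _
  set f : ClassGroup (𝓞 F) → ℂ := fun a => ∑ i, lam i * (if a = c i then 1 else 0) with hf
  have hEf : EE f := by
    intro m hm
    rw [← hlin m hm]
    simp only [hf]
    rw [Finset.sum_comm]
    refine Finset.sum_congr rfl fun i _ => ?_
    rw [← Finset.mul_sum, Finset.sum_boole]
    congr 2
    have : Nat.card {J : Ideal (𝓞 F) // Ideal.absNorm J = m ∧ cl J = c i} =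
        Nat.card ((idl F m).filter (fun J => cl J = c i)) := by
      apply Nat.card_congr
      apply Equiv.subtypeEquivRight
      intro J
      rw [Finset.mem_filter, mem_idl]
    rw [this, Nat.card_eq_fintype_card, Fintype.card_coe]
  have hEs := EE_add hEf (EE_inv hF hEf) 1
  set μ : AddChar (Additive (ClassGroup (𝓞 F))) ℂ → ℂ := fun ψ =>
    ∑ i, lam i * (ch ψ (c i) + (ch ψ (c i))⁻¹) with hμ
  have hG : (Fintype.card (ClassGroup (𝓞 F)) : ℂ) ≠ 0 := by
    rw [Nat.cast_ne_zero]; exact Fintype.card_ne_zero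
  -- general Fourier computation
  have hfour : ∀ (b : Fin n → ClassGroup (𝓞 F)) (a : ClassGroup (𝓞 F)),
      ∑ ψ, (∑ i, lam i * (ch ψ (b i) + (ch ψ (b i))⁻¹)) * ch ψ a =
      Fintype.card (ClassGroup (𝓞 F)) *
        (∑ i, lam i * ((if a = b i then 1 else 0) + (if a⁻¹ = b i then 1 else 0))) := by
    intro b a
    rw [← fourier (fun a => ∑ i, lam i * ((if a = b i then 1 else 0) + (if a⁻¹ = b i then 1 else 0)))]
    refine Finset.sum_congr rfl fun ψ _ => ?_
    congr 1
    simp_rw [Finset.sum_mul]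
    rw [Finset.sum_comm]
    refine Finset.sum_congr rfl fun i _ => ?_
    simp_rw [mul_assoc, ← Finset.mul_sum, add_mul, inv_eq_iff_eq_inv (b := b i)]
    rw [Finset.sum_add_distrib]
    simp [ch_inv, add_comm]
  have hEμ : EE (fun a => ∑ ψ, μ ψ * ch ψ a) := by
    have h0 : EE (fun _ : ClassGroup (𝓞 F) => (0 : ℂ)) := fun m _ => by simp
    have := EE_add h0 hEs (Fintype.card (ClassGroup (𝓞 F)))
    convert this using 2 with a
    rw [hμ, hfour c a]
    simp only [hf, one_mul, zero_add]
    rw [← Finset.sum_add_distrib]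
    congr 1
    refine Finset.sum_congr rfl fun i _ => ?_
    ring
  have hsym : ∀ ψ, μ ψ⁻¹ = μ ψ := by
    intro ψ
    simp only [hμ, inv_ch, inv_inv]
    refine Finset.sum_congr rfl fun i _ => ?_
    ring
  have hodd : ∀ χ0 : AddChar (Additive (ClassGroup (𝓞 F))) ℂ, ∀ k : ℕ, Odd k → χ0 ^ k = 1 →
      μ χ0 = 0 := fun χ0 k hk h => coeff_zero hF hAn μ hsym hEμ χ0 hk h
  -- t_i = c_i^4
  have hν : ∀ χ : AddChar (Additive (ClassGroup (𝓞 F))) ℂ,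
      ∑ i, lam i * (ch χ (c i ^ 4) + (ch χ (c i ^ 4))⁻¹) = 0 := by
    intro χ
    obtain ⟨a, m, hm, hcard⟩ := Nat.exists_eq_two_pow_mul_odd
      (Fintype.card_ne_zero (α := ClassGroup (𝓞 F)))
    have hχ' : (χ ^ (4 ^ a)) ^ m = 1 := by
      apply ch_ext
      intro b
      rw [one_ch, ← pow_mul, pow_ch, ← ch_pow,
        show 4 ^ a * m = (2 ^ a * m) * 2 ^ a by
          rw [show (4 : ℕ) = 2 * 2 by rfl, mul_pow]; ring, pow_mul, ← hcard, pow_card_eq_one,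
          one_pow, ch_one]
    have h := hodd _ m hm hχ'
    rw [← h, hμ]
    refine Finset.sum_congr rfl fun i _ => ?_
    have hkey : ch (χ ^ (4 ^ a)) (c i) = ch χ (c i ^ 4) := by
      -- both sides
      have h12 : (c i ^ 4) ^ 3 = 1 := by
        have := h3 i i
        calc (c i ^ 4) ^ 3 = (c i ^ 3 * c i ^ 3) * (c i ^ 3 * c i ^ 3) := by
              rw [← pow_add, ← pow_add, ← pow_mul]
          _ = 1 := by rw [this, one_mul]
      have e1 : ch (χ ^ (4 ^ a)) (c i ^ 4) = ch χ (c i ^ 4) := by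
        rw [pow_ch, ← ch_pow]
        congr 1
        have : 4 ^ a % 3 = 1 := by
          rw [Nat.pow_mod]; simp
        rw [pow_eq_pow_mod _ h12, this, pow_one]
      have e2 : ch (χ ^ (4 ^ a)) (c i ^ 3) = 1 := by
        set y := ch (χ ^ (4 ^ a)) (c i ^ 3) with hy
        have y2 : y ^ 2 = 1 := by
          rw [hy, ← ch_pow, sq, h3, ch_one]
        have ym : y ^ m = 1 := by
          rw [hy, ← pow_ch, hχ', one_ch]
        obtain ⟨k, rfl⟩ := hm
        rw [pow_add, pow_mul, y2, one_pow, one_mul, pow_one] at ym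
        exact ym
      rw [← e1, pow_succ, ch_mul, e2, one_mul]
    rw [hkey]
  intro j
  have hfin := hfour (fun i => c i ^ 4) (c j ^ 4)
  simp only [hν, zero_mul, Finset.sum_const_zero] at hfin
  have hfin2 := (mul_eq_zero.1 hfin.symm).resolve_left hG
  have hs : ∀ i, c i ^ 3 = c j ^ 3 := by
    intro i
    rw [eq_inv_of_mul_eq_one_left (h3 i j), ← eq_inv_of_mul_eq_one_left (h3 j j)]
  rw [Finset.sum_eq_single j] at hfin2
  · rcases mul_eq_zero.1 hfin2 with h | h
    · exact h
    · exfalso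
      rw [if_pos rfl] at h
      split_ifs at h <;> norm_num at h
  · intro i _ hij
    rw [if_neg, if_neg]
    · simp
    · intro h
      apply hij
      apply hne'
      have h1 : (c j ^ 3)⁻¹ = c j ^ 3 := inv_eq_of_mul_eq_one_left (h3 j j)
      rw [pow_succ, mul_inv, h1, pow_succ (c i), hs i] at h
      exact (mul_left_cancel h).symm
    · intro h
      apply hij
      apply hne
      rw [pow_succ, pow_succ (c i), hs i] at h
      exact (mul_left_cancel h).symm
  · simp

end A2
end ThetaIndep

namespace ThetaIndep
open NumberField Filter Topology

section A3
variable {F : Type} [Field F] [NumberField F]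

noncomputable def fz (s : ℝ) (I : Ideal (𝓞 F)) : ℝ := (Ideal.absNorm I : ℝ) ^ (-s)

lemma fz_nonneg (s : ℝ) (I : Ideal (𝓞 F)) : 0 ≤ fz s I := by unfold fz; positivity

lemma fz_mul (s : ℝ) (I J : Ideal (𝓞 F)) : fz s (I * J) = fz s I * fz s J := by
  unfold fz
  rw [map_mul, Nat.cast_mul, Real.mul_rpow (by positivity) (by positivity)]

lemma fz_bot {s : ℝ} (hs : 1 < s) : fz s (⊥ : Ideal (𝓞 F)) = 0 := by
  unfold fz
  rw [Ideal.absNorm_bot, Nat.cast_zero, Real.zero_rpow (by linarith)]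

lemma coeff_bigO (F : Type) [Field F] [NumberField F] :
    (fun n : ℕ => ∑ k ∈ Finset.Icc 1 n, (Nat.card {I : Ideal (𝓞 F) // Ideal.absNorm I = k} : ℝ))
      =O[atTop] fun n => (n : ℝ) ^ (1 : ℝ) := by
  have h : Tendsto (fun n : ℕ => (∑ k ∈ Finset.Icc 1 n,
      (Nat.card {I : Ideal (𝓞 F) // Ideal.absNorm I = k} : ℝ)) / (n : ℝ)) atTop
      (𝓝 (dedekindZeta_residue F)) := by
    refine ((Ideal.tendsto_norm_le_div_atTop₀ F).comp tendsto_natCast_atTop_atTop).congr fun n ↦ ?_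
    simp only [Function.comp_apply, Nat.cast_le, ← Nat.cast_sum]
    congr
    rw [← add_left_inj 1, ← Ideal.card_norm_le_eq_card_norm_le_add_one,
      show Finset.Icc 1 n = Finset.Ioc 0 n from Finset.Icc_succ_left_eq_Ioc _ _,
      show 1 = Nat.card {I : Ideal (𝓞 F) // Ideal.absNorm I = 0} by simp [Ideal.absNorm_eq_zero_iff],
      Finset.sum_Ioc_add_eq_sum_Icc (n.zero_le),
      ← Finset.card_preimage_eq_sum_card_image_eq
        (fun k _ ↦ Ideal.finite_setOfPred_absNorm_eq k)]
    simp [Set.coe_eq_subtype]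
  have h2 := h.isBigO_one ℝ
  have h3 := h2.mul (Asymptotics.isBigO_refl (fun n : ℕ => (n : ℝ)) atTop)
  refine (h3.congr' ?_ ?_)
  · filter_upwards [eventually_gt_atTop 0] with n hn
    field_simp
  · filter_upwards with n
    simp

lemma fz_summable_and {s : ℝ} (hs : 1 < s) : Summable (fz s : Ideal (𝓞 F) → ℝ) ∧
    dedekindZeta F s = ((∑' I : Ideal (𝓞 F), fz s I : ℝ) : ℂ) := by
  have hL : LSeriesSummable (fun n => ((Nat.card {I : Ideal (𝓞 F) // Ideal.absNorm I = n} : ℝ) : ℂ))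
      (s : ℂ) := LSeriesSummable_of_sum_norm_bigO_and_nonneg (coeff_bigO F)
        (fun n => Nat.cast_nonneg _) zero_le_one (by simpa using hs)
  have hterm : ∀ n, LSeries.term
      (fun n => ((Nat.card {I : Ideal (𝓞 F) // Ideal.absNorm I = n} : ℝ) : ℂ)) (s : ℂ) n =
      (((Nat.card {I : Ideal (𝓞 F) // Ideal.absNorm I = n} : ℝ) * (n : ℝ) ^ (-s) : ℝ) : ℂ) := by
    intro n
    rcases Nat.eq_zero_or_pos n with rfl | hn
    · simp [Real.zero_rpow (show -s ≠ 0 by linarith)]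
    · rw [LSeries.term_of_ne_zero hn.ne', Complex.ofReal_mul, Real.rpow_neg (by positivity),
        Complex.ofReal_inv, Complex.ofReal_cpow (by positivity)]
      simp [div_eq_mul_inv]
  have hL' : Summable (fun n : ℕ => (Nat.card {I : Ideal (𝓞 F) // Ideal.absNorm I = n} : ℝ) *
      (n : ℝ) ^ (-s)) := by
    exact Complex.summable_ofReal.1 ((summable_congr hterm).1 hL)
  let e := Equiv.sigmaFiberEquiv (fun I : Ideal (𝓞 F) => Ideal.absNorm I)
  have hfin : ∀ n : ℕ, Finite {I : Ideal (𝓞 F) // Ideal.absNorm I = n} := fun n =>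
    Ideal.finite_setOfPred_absNorm_eq n
  have hfib : ∀ n : ℕ, ∀ y : {I : Ideal (𝓞 F) // Ideal.absNorm I = n},
      fz s (e ⟨n, y⟩) = (n : ℝ) ^ (-s) := by
    intro n y
    change (Ideal.absNorm (y : Ideal (𝓞 F)) : ℝ) ^ (-s) = _
    rw [y.2]
  have htf : ∀ n : ℕ, ∑' y : {I : Ideal (𝓞 F) // Ideal.absNorm I = n}, fz s (e ⟨n, y⟩) =
      (Nat.card {I : Ideal (𝓞 F) // Ideal.absNorm I = n} : ℝ) * (n : ℝ) ^ (-s) := by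
    intro n
    simp_rw [hfib]
    rw [tsum_const, nsmul_eq_mul]
  have hS : Summable (fun x => fz s (e x)) := by
    rw [summable_sigma_of_nonneg (fun x => fz_nonneg s _)]
    refine ⟨fun n => ?_, ?_⟩
    · have := hfin n
      exact Summable.of_finite
    · simp_rw [htf]; exact hL'
  have hS' : Summable (fz s : Ideal (𝓞 F) → ℝ) := e.summable_iff.1 hS
  refine ⟨hS', ?_⟩
  rw [← e.tsum_eq (fz s), hS.tsum_sigma]
  · simp_rw [htf]
    rw [Complex.ofReal_tsum]
    simp_rw [← hterm]
    simp [dedekindZeta, LSeries]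

lemma fz_summable {s : ℝ} (hs : 1 < s) : Summable (fz s : Ideal (𝓞 F) → ℝ) :=
  (fz_summable_and hs).1

noncomputable def zeta (F : Type) [Field F] [NumberField F] (s : ℝ) : ℝ :=
  ∑' I : Ideal (𝓞 F), fz s I

lemma zeta_tendsto (F : Type) [Field F] [NumberField F] :
    Tendsto (fun s : ℝ => (s - 1) * zeta F s) (𝓝[>] 1) (𝓝 (dedekindZeta_residue F)) := by
  have h := tendsto_sub_one_mul_dedekindZeta_nhdsGT F
  have h2 : Tendsto (fun s : ℝ => (((s - 1) * zeta F s : ℝ) : ℂ)) (𝓝[>] 1)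
      (𝓝 ((dedekindZeta_residue F : ℝ) : ℂ)) := by
    refine h.congr' ?_
    filter_upwards [self_mem_nhdsWithin] with s hs
    rw [(fz_summable_and hs).2, zeta]
    push_cast
    rfl
  exact (Complex.continuous_re.tendsto _).comp h2

lemma zeta_bound (F : Type) [Field F] [NumberField F] :
    ∃ B : ℝ, ∀ᶠ s in 𝓝[>] (1 : ℝ), (s - 1) * zeta F s ≤ B :=
  ⟨dedekindZeta_residue F + 1, ((zeta_tendsto F).eventually_lt_const (lt_add_one _)).mono
    fun _ h => h.le⟩

lemma zeta_atTop (F : Type) [Field F] [NumberField F] :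
    Tendsto (zeta F) (𝓝[>] 1) atTop := by
  have h := zeta_tendsto F
  have h1 : Tendsto (fun s : ℝ => (s - 1)⁻¹) (𝓝[>] 1) atTop := by
    apply Tendsto.comp tendsto_inv_nhdsGT_zero
    rw [tendsto_nhdsWithin_iff]
    constructor
    · have : Tendsto (fun s : ℝ => s - 1) (𝓝 1) (𝓝 (1 - 1)) := tendsto_id.sub_const 1
      rw [sub_self] at this
      exact this.mono_left nhdsWithin_le_nhds
    · filter_upwards [self_mem_nhdsWithin] with s hs
      simpa using hs
  have h2 := Tendsto.atTop_mul_pos (dedekindZeta_residue_pos F) h1 h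
  refine h2.congr' ?_
  filter_upwards [self_mem_nhdsWithin] with s hs
  have : s - 1 ≠ 0 := (sub_pos.2 hs).ne'
  field_simp

/-- representation of elements of an ideal by ideals of the inverse class -/
lemma exists_rep {I : Ideal (𝓞 F)} (hI : I ≠ ⊥) :
    ∃ e : (𝓞 F)ˣ × {J : Ideal (𝓞 F) // J ≠ ⊥ ∧ cl J = (cl I)⁻¹} ≃ {v : 𝓞 F // v ∈ I ∧ v ≠ 0},
      ∀ x, Ideal.absNorm (Ideal.span {(e x : 𝓞 F)}) = Ideal.absNorm I * Ideal.absNorm (x.2 : Ideal (𝓞 F)) := by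
  have hg : ∀ J : {J : Ideal (𝓞 F) // J ≠ ⊥ ∧ cl J = (cl I)⁻¹}, ∃ g : 𝓞 F, I * (J : Ideal (𝓞 F)) = Ideal.span {g} := by
    rintro ⟨J, hJ, hc⟩
    apply (cl_eq_one_iff (mul_ne_zero hI hJ)).1
    rw [cl_mul hI hJ, hc, mul_inv_cancel]
  choose g hg using hg
  have hspan : ∀ (u : (𝓞 F)ˣ) J, Ideal.span {(u : 𝓞 F) * g J} = I * (J : Ideal (𝓞 F)) := by
    intro u J
    rw [hg, Ideal.span_singleton_eq_span_singleton]
    exact associated_unit_mul_left _ _ u.isUnit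
  have hg0 : ∀ J, g J ≠ 0 := by
    intro J h
    have := hg J
    rw [h] at this
    simp only [Set.singleton_zero, Ideal.span_zero] at this
    exact mul_ne_zero hI J.2.1 this
  have hmem : ∀ x : (𝓞 F)ˣ × {J : Ideal (𝓞 F) // J ≠ ⊥ ∧ cl J = (cl I)⁻¹},
      (x.1 : 𝓞 F) * g x.2 ∈ I := by
    intro x
    have h1 : (x.1 : 𝓞 F) * g x.2 ∈ I * (x.2 : Ideal (𝓞 F)) := by
      have h2 := Ideal.mem_span_singleton_self ((x.1 : 𝓞 F) * g x.2)
      rwa [hspan x.1 x.2] at h2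
    have h3 : I * (x.2 : Ideal (𝓞 F)) ≤ I := Ideal.mul_le_left
    exact h3 h1
  obtain ⟨f, hf0⟩ : ∃ f : (𝓞 F)ˣ × {J : Ideal (𝓞 F) // J ≠ ⊥ ∧ cl J = (cl I)⁻¹} →
      {v : 𝓞 F // v ∈ I ∧ v ≠ 0}, ∀ x, (f x : 𝓞 F) = (x.1 : 𝓞 F) * g x.2 :=
    ⟨fun x => ⟨(x.1 : 𝓞 F) * g x.2, hmem x, mul_ne_zero (Units.ne_zero x.1) (hg0 x.2)⟩, fun _ => rfl⟩
  have hf : Function.Bijective f := by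
    constructor
    · rintro ⟨u, J⟩ ⟨u', J'⟩ h
      have h1 : (u : 𝓞 F) * g J = u' * g J' := by
        have := congrArg Subtype.val h
        rwa [hf0, hf0] at this
      have h2 : I * (J : Ideal (𝓞 F)) = I * J' := by rw [← hspan u, ← hspan u', h1]
      have h3 : J = J' := Subtype.ext (mul_left_cancel₀ hI h2)
      subst h3
      have h4 : u = u' := Units.ext (mul_right_cancel₀ (hg0 J) h1)
      rw [h4]
    · rintro ⟨v, hv, hv0⟩
      obtain ⟨J, hJ⟩ : I ∣ Ideal.span {v} := by rwa [Ideal.dvd_span_singleton]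
      have hv' : Ideal.span {v} ≠ ⊥ := by simpa using hv0
      have hJ0 : J ≠ ⊥ := by
        rintro rfl
        apply hv'
        rw [hJ]; exact mul_zero I
      have hc : cl J = (cl I)⁻¹ := by
        rw [eq_comm, inv_eq_iff_mul_eq_one, ← cl_mul hI hJ0, ← hJ, cl_span]
      have h1 := hg ⟨J, hJ0, hc⟩
      rw [← hJ, Ideal.span_singleton_eq_span_singleton] at h1
      obtain ⟨u, hu⟩ := h1.symm
      exact ⟨⟨u, ⟨J, hJ0, hc⟩⟩, Subtype.ext (by rw [hf0, mul_comm]; exact hu)⟩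
  refine ⟨Equiv.ofBijective f hf, fun x => ?_⟩
  rw [Equiv.ofBijective_apply, hf0, hspan, map_mul]

lemma card_rep {I : Ideal (𝓞 F)} (hI : I ≠ ⊥) {m : ℕ} (hm : 1 ≤ m) :
    Nat.card {v : 𝓞 F // v ∈ I ∧ Ideal.absNorm (Ideal.span {v}) = Ideal.absNorm I * m} =
    Nat.card (𝓞 F)ˣ * Nat.card {J : Ideal (𝓞 F) // Ideal.absNorm J = m ∧ cl J = (cl I)⁻¹} := by
  obtain ⟨e, he⟩ := exists_rep hI
  have hN : 0 < Ideal.absNorm I := by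
    apply Nat.pos_of_ne_zero; rwa [Ne, Ideal.absNorm_eq_zero_iff]
  rw [← Nat.card_prod]
  symm
  have hJ0 : ∀ J : {J : Ideal (𝓞 F) // Ideal.absNorm J = m ∧ cl J = (cl I)⁻¹},
      (J : Ideal (𝓞 F)) ≠ ⊥ := fun J => ne_bot_of_absNorm hm J.2.1
  refine Nat.card_congr (Equiv.ofBijective (fun x => ⟨(e ⟨x.1, ⟨x.2, hJ0 x.2, x.2.2.2⟩⟩ : 𝓞 F),
    (e _).2.1, by rw [he, x.2.2.1]⟩) ⟨?_, ?_⟩)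
  · rintro ⟨u, J, hJ⟩ ⟨u', J', hJ'⟩ h
    have h0 := Subtype.ext_iff.1 h
    simp only at h0
    have h1 := e.injective (Subtype.ext h0)
    simp only [Prod.mk.injEq, Subtype.mk.injEq] at h1
    obtain ⟨rfl, rfl⟩ := h1
    rfl
  · rintro ⟨v, hv, hvN⟩
    have hv0 : v ≠ 0 := by
      rintro rfl
      simp only [Set.singleton_zero, Ideal.span_zero, Ideal.absNorm_bot] at hvN
      have := Nat.mul_pos hN hm
      omega
    obtain ⟨⟨u, J, hJ0', hJc⟩, hx⟩ := e.surjective ⟨v, hv, hv0⟩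
    have h1 := he ⟨u, J, hJ0', hJc⟩
    rw [hx] at h1
    simp only at h1
    rw [hvN] at h1
    exact ⟨⟨u, J, (Nat.eq_of_mul_eq_mul_left hN h1).symm, hJc⟩, by
      apply Subtype.ext; simp only; rw [hx]⟩

end A3
end ThetaIndep

namespace ThetaIndep
open NumberField Filter Topology

section A4
variable {F : Type} [Field F] [NumberField F]

noncomputable def fs (s : ℝ) (v : 𝓞 F) : ℝ := fz s (Ideal.span {v})

lemma fs_nonneg (s : ℝ) (v : 𝓞 F) : 0 ≤ fs s v := fz_nonneg _ _

lemma fs_zero {s : ℝ} (hs : 1 < s) : fs s (0 : 𝓞 F) = 0 := by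
  unfold fs
  rw [Set.singleton_zero, Ideal.span_zero, fz_bot hs]

open Classical in
noncomputable def zc (C : ClassGroup (𝓞 F)) (s : ℝ) : ℝ :=
  ∑' J : Ideal (𝓞 F), if cl J = C then fz s J else 0

open Classical in
lemma zc_summable (C : ClassGroup (𝓞 F)) {s : ℝ} (hs : 1 < s) :
    Summable (fun J : Ideal (𝓞 F) => if cl J = C then fz s J else 0) := by
  refine Summable.of_nonneg_of_le ?_ ?_ (fz_summable (F := F) hs)
  · intro J; split_ifs; exacts [fz_nonneg _ _, le_rfl]
  · intro J; split_ifs; exacts [le_rfl, fz_nonneg _ _]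

lemma zc_nonneg (C : ClassGroup (𝓞 F)) (s : ℝ) : 0 ≤ zc C s := by
  unfold zc
  apply tsum_nonneg
  intro J; split_ifs; exacts [fz_nonneg _ _, le_rfl]

lemma zc_le (C : ClassGroup (𝓞 F)) {s : ℝ} (hs : 1 < s) : zc C s ≤ zeta F s := by
  unfold zc zeta
  refine (zc_summable C hs).tsum_le_tsum ?_ (fz_summable hs)
  intro J; split_ifs; exacts [le_rfl, fz_nonneg _ _]

lemma lat_hasSum [Finite (𝓞 F)ˣ] {I : Ideal (𝓞 F)} (hI : I ≠ ⊥) {s : ℝ} (hs : 1 < s) :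
    HasSum (fun v : I => fs s (v : 𝓞 F))
      (Nat.card (𝓞 F)ˣ * (fz s I * zc (cl I)⁻¹ s)) := by
  classical
  obtain ⟨e, he⟩ := exists_rep hI
  let ι : {v : 𝓞 F // v ∈ I ∧ v ≠ 0} → I := fun v => ⟨v, v.2.1⟩
  have hι : Function.Injective ι := by
    intro a b h
    exact Subtype.ext (congrArg (fun x : I => (x : 𝓞 F)) h)
  rw [← hι.hasSum_iff]
  swap
  · intro x hx
    have : (x : 𝓞 F) = 0 := by
      by_contra h
      exact hx ⟨⟨x, x.2, h⟩, rfl⟩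
    rw [this, fs_zero hs]
  rw [← e.hasSum_iff]
  have hval : ((fun v : I => fs s (v : 𝓞 F)) ∘ ι) ∘ e =
      fun x => (1 : ℝ) * (fz s I * fz s (x.2 : Ideal (𝓞 F))) := by
    funext x
    simp only [Function.comp, ι, fs, fz]
    rw [he, Nat.cast_mul, Real.mul_rpow (by positivity) (by positivity), one_mul]
  rw [hval]
  have h1 : HasSum (fun _ : (𝓞 F)ˣ => (1 : ℝ)) (Nat.card (𝓞 F)ˣ) := by
    have := Fintype.ofFinite (𝓞 F)ˣ
    have h := hasSum_fintype (fun _ : (𝓞 F)ˣ => (1 : ℝ))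
    simpa using h
  have h2 : HasSum (fun J : {J : Ideal (𝓞 F) // J ≠ ⊥ ∧ cl J = (cl I)⁻¹} =>
      fz s I * fz s (J : Ideal (𝓞 F))) (fz s I * zc (cl I)⁻¹ s) := by
    apply HasSum.mul_left
    have h3 := (zc_summable (cl I)⁻¹ hs).hasSum
    have hinj : Function.Injective (fun J : {J : Ideal (𝓞 F) // J ≠ ⊥ ∧ cl J = (cl I)⁻¹} =>
      (J : Ideal (𝓞 F))) := Subtype.val_injective
    rw [← hinj.hasSum_iff] at h3
    · have hfun : ((fun J : Ideal (𝓞 F) => if cl J = (cl I)⁻¹ then fz s J else 0) ∘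
          fun J : {J : Ideal (𝓞 F) // J ≠ ⊥ ∧ cl J = (cl I)⁻¹} => (J : Ideal (𝓞 F))) =
          fun J : {J : Ideal (𝓞 F) // J ≠ ⊥ ∧ cl J = (cl I)⁻¹} => fz s (J : Ideal (𝓞 F)) := by
        funext J
        simp [J.2.2]
      rw [hfun] at h3
      exact h3
    · intro J hJ
      split_ifs with h
      · have : J = ⊥ := by
          by_contra h0
          exact hJ ⟨⟨J, h0, h⟩, rfl⟩
        rw [this, fz_bot hs]
      · rfl
  exact h1.mul h2 (h1.summable.mul_of_nonneg h2.summable (fun _ => zero_le_one)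
    (fun _ => mul_nonneg (fz_nonneg _ _) (fz_nonneg _ _)))

lemma lat_summable [Finite (𝓞 F)ˣ] {s : ℝ} (hs : 1 < s) : Summable (fs s : 𝓞 F → ℝ) := by
  have h := (lat_hasSum (F := F) (I := ⊤) (by simp) hs).summable
  let e : (⊤ : Ideal (𝓞 F)) ≃ 𝓞 F := ⟨fun x => x, fun x => ⟨x, trivial⟩, fun _ => rfl, fun _ => rfl⟩
  exact e.summable_iff.1 h

lemma lat_tsum [Finite (𝓞 F)ˣ] {s : ℝ} (hs : 1 < s) :
    ∑' v : 𝓞 F, fs s v = Nat.card (𝓞 F)ˣ * zc (1 : ClassGroup (𝓞 F)) s := by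
  have h := (lat_hasSum (F := F) (I := ⊤) (by simp) hs).tsum_eq
  let e : (⊤ : Ideal (𝓞 F)) ≃ 𝓞 F := ⟨fun x => x, fun x => ⟨x, trivial⟩, fun _ => rfl, fun _ => rfl⟩
  rw [← e.tsum_eq (fs s)]
  have h1 : cl (⊤ : Ideal (𝓞 F)) = 1 := by rw [← Ideal.one_eq_top, cl_one]
  have h2 : fz s (⊤ : Ideal (𝓞 F)) = 1 := by simp [fz]
  rw [h1, h2, inv_one, one_mul] at h
  exact h

lemma real_est {s t t' : ℝ} (hs : 1 < s) (hs2 : s ≤ 2) (ht : 1 ≤ t) (htt : t ≤ t') :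
    |t ^ (-(2 * s)) - t' ^ (-(2 * s))| ≤ 4 * (t' - t) * t ^ (-3 : ℝ) := by
  have ht0 : 0 < t := by linarith
  have ht0' : 0 < t' := by linarith
  have h1 : t' ^ (-(2 * s)) ≤ t ^ (-(2 * s)) :=
    Real.rpow_le_rpow_of_nonpos ht0 htt (by linarith)
  rw [abs_of_nonneg (by linarith)]
  have hb : 1 + (2 * s) * (t / t' - 1) ≤ (1 + (t / t' - 1)) ^ (2 * s) := by
    apply one_add_mul_self_le_rpow_one_add
    · have : 0 ≤ t / t' := by positivity
      linarith
    · linarith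
  have e1 : (1 + (t / t' - 1)) ^ (2 * s) = t ^ (2 * s) * t' ^ (-(2 * s)) := by
    rw [add_sub_cancel, Real.div_rpow ht0.le ht0'.le, Real.rpow_neg ht0'.le, div_eq_mul_inv]
  rw [e1] at hb
  have e2 : t' ^ (-(2 * s)) = t ^ (-(2 * s)) * (t ^ (2 * s) * t' ^ (-(2 * s))) := by
    rw [← mul_assoc, ← Real.rpow_add ht0]; simp
  have hpos : 0 < t ^ (-(2 * s)) := Real.rpow_pos_of_pos ht0 _
  have h2 : t ^ (-(2 * s)) - t' ^ (-(2 * s)) ≤ t ^ (-(2 * s)) * ((2 * s) * (1 - t / t')) := by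
    rw [e2]
    nlinarith
  have h3 : 1 - t / t' ≤ (t' - t) * t ^ (-1 : ℝ) := by
    rw [Real.rpow_neg_one, ← div_eq_mul_inv]
    have : 1 - t / t' = (t' - t) / t' := by field_simp
    rw [this]
    exact div_le_div_of_nonneg_left (by linarith) ht0 htt
  have h4 : (0:ℝ) ≤ 1 - t / t' := by
    have : t / t' ≤ 1 := (div_le_one ht0').2 htt
    linarith
  have h5 : t ^ (-(2 * s)) * t ^ (-1 : ℝ) ≤ t ^ (-3 : ℝ) := by
    rw [← Real.rpow_add ht0]
    exact Real.rpow_le_rpow_of_exponent_le ht (by linarith)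
  have hp1 : 0 < t ^ (-1 : ℝ) := Real.rpow_pos_of_pos ht0 _
  calc t ^ (-(2 * s)) - t' ^ (-(2 * s)) ≤ t ^ (-(2 * s)) * ((2 * s) * (1 - t / t')) := h2
    _ ≤ t ^ (-(2 * s)) * (4 * ((t' - t) * t ^ (-1 : ℝ))) := by
        gcongr
        linarith
    _ = 4 * (t' - t) * (t ^ (-(2 * s)) * t ^ (-1 : ℝ)) := by ring
    _ ≤ 4 * (t' - t) * t ^ (-3 : ℝ) := by
        apply mul_le_mul_of_nonneg_left h5
        linarith

variable (σ : F →+* ℂ)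

def NormCompat (σ : F →+* ℂ) : Prop :=
  ∀ x : 𝓞 F, ‖σ (x : F)‖ ^ 2 = (Ideal.absNorm (Ideal.span {x}) : ℝ)

lemma fs_eq {σ : F →+* ℂ} (hσ : NormCompat σ) (s : ℝ) (v : 𝓞 F) :
    fs s v = ‖σ (v : F)‖ ^ (-(2 * s)) := by
  unfold fs fz
  rw [← hσ v, ← Real.rpow_natCast, ← Real.rpow_mul (norm_nonneg _)]
  congr 1
  push_cast; ring

lemma one_le_norm {σ : F →+* ℂ} (hσ : NormCompat σ) {v : 𝓞 F} (hv : v ≠ 0) : 1 ≤ ‖σ (v : F)‖ := by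
  have h := hσ v
  have h1 : 1 ≤ Ideal.absNorm (Ideal.span {v}) := by
    apply Nat.one_le_iff_ne_zero.2
    rw [Ne, Ideal.absNorm_eq_zero_iff]
    simpa using hv
  have h2 : (1:ℝ) ≤ ‖σ (v : F)‖ ^ 2 := by rw [h]; exact_mod_cast h1
  nlinarith [norm_nonneg (σ (v : F))]

lemma fs_diff {σ : F →+* ℂ} (hσ : NormCompat σ) {s : ℝ} (hs : 1 < s) (hs2 : s ≤ 2) (r u : 𝓞 F) :
    |fs s (r + u) - fs s u| ≤ (4 * ‖σ (r : F)‖ + ‖σ (r : F)‖ ^ (3:ℝ)) * (fs (3/2) u + fs (3/2) (r + u)) := by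
  have hn : (0:ℝ) ≤ ‖σ (r : F)‖ := norm_nonneg _
  have hC : 0 ≤ (4 * ‖σ (r : F)‖ + ‖σ (r : F)‖ ^ (3:ℝ)) := by positivity
  have hone : ∀ w : 𝓞 F, w ≠ 0 → fs s w ≤ 1 := by
    intro w hw
    rw [fs_eq hσ]
    exact Real.rpow_le_one_of_one_le_of_nonpos (one_le_norm hσ hw) (by linarith)
  have h32 : ∀ w : 𝓞 F, fs (3/2) w = ‖σ (w : F)‖ ^ (-3 : ℝ) := by
    intro w
    rw [fs_eq hσ]; norm_num
  have hr1 : r ≠ 0 → ‖σ (r : F)‖ ^ (3:ℝ) * ‖σ (r : F)‖ ^ (-3 : ℝ) = 1 := by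
    intro h
    have : 0 < ‖σ (r : F)‖ := lt_of_lt_of_le one_pos (one_le_norm hσ h)
    rw [← Real.rpow_add this]; simp
  by_cases hu : u = 0
  · subst hu
    rw [add_zero, fs_zero hs, fs_zero (by norm_num), sub_zero, zero_add, abs_of_nonneg (fs_nonneg _ _)]
    by_cases hr : r = 0
    · subst hr
      rw [fs_zero hs]
      exact mul_nonneg hC (fs_nonneg _ _)
    · have h1 := hone r hr
      rw [h32, add_mul, hr1 hr]
      have : 0 ≤ 4 * ‖σ (r : F)‖ * ‖σ (r : F)‖ ^ (-3 : ℝ) := by positivity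
      linarith
  by_cases hru : r + u = 0
  · have hur : u = -r := eq_neg_of_add_eq_zero_right hru
    have hr : r ≠ 0 := by rintro rfl; simp at hur; exact hu hur
    rw [hru, fs_zero hs, fs_zero (by norm_num), zero_sub, add_zero, abs_neg, abs_of_nonneg (fs_nonneg _ _)]
    have h1 := hone u hu
    have h2 : ‖σ (u : F)‖ = ‖σ (r : F)‖ := by rw [hur]; simp
    rw [h32, h2, add_mul, hr1 hr]
    have : 0 ≤ 4 * ‖σ (r : F)‖ * ‖σ (r : F)‖ ^ (-3 : ℝ) := by positivity
    linarith
  · have t1 := one_le_norm hσ hu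
    have t2 := one_le_norm hσ hru
    have p1 : 0 ≤ fs (3/2) u := fs_nonneg _ _
    have p2 : 0 ≤ fs (3/2) (r + u) := fs_nonneg _ _
    have p3 : 0 ≤ ‖σ (r : F)‖ ^ (3:ℝ) := by positivity
    have hadd : σ ((r + u : 𝓞 F) : F) = σ (r : F) + σ (u : F) := by push_cast; rw [map_add]
    rcases le_total ‖σ (u : F)‖ ‖σ ((r + u : 𝓞 F) : F)‖ with h | h
    · have := real_est hs hs2 t1 h
      rw [abs_sub_comm, fs_eq hσ, fs_eq hσ s (r + u)]
      refine this.trans ?_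
      rw [← h32]
      have h5 : ‖σ ((r + u : 𝓞 F) : F)‖ - ‖σ (u : F)‖ ≤ ‖σ (r : F)‖ := by
        rw [hadd]
        have := norm_add_le (σ (r : F)) (σ (u : F))
        linarith
      nlinarith [mul_nonneg p3 p1, mul_nonneg p3 p2, mul_nonneg hn p2, mul_le_mul_of_nonneg_right h5 p1]
    · have := real_est hs hs2 t2 h
      rw [fs_eq hσ, fs_eq hσ s u]
      refine this.trans ?_
      rw [← h32]
      have h5 : ‖σ (u : F)‖ - ‖σ ((r + u : 𝓞 F) : F)‖ ≤ ‖σ (r : F)‖ := by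
        rw [hadd]
        have := norm_sub_le (σ (r : F) + σ (u : F)) (σ (r : F))
        rw [add_sub_cancel_left] at this
        linarith
      nlinarith [mul_nonneg p3 p1, mul_nonneg p3 p2, mul_nonneg hn p1, mul_le_mul_of_nonneg_right h5 p2]

lemma coset_bound [Finite (𝓞 F)ˣ] {σ : F →+* ℂ} (hσ : NormCompat σ) {I : Ideal (𝓞 F)} (hI : I ≠ ⊥) :
    ∃ B : ℝ, ∀ s : ℝ, 1 < s → s ≤ 2 →
      |∑' v : 𝓞 F, fs s v - Ideal.absNorm I * ∑' v : I, fs s (v : 𝓞 F)| ≤ B := by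
  classical
  have hfin : Finite (𝓞 F ⧸ I) := Ideal.finiteQuotientOfFreeOfNeBot I hI
  have : Fintype (𝓞 F ⧸ I) := Fintype.ofFinite _
  let rep : (𝓞 F ⧸ I) → 𝓞 F := Quotient.out
  have hrep : ∀ q, Ideal.Quotient.mk I (rep q) = q := fun q => Quotient.out_eq q
  have hbij : Function.Bijective (fun x : (𝓞 F ⧸ I) × I => rep x.1 + (x.2 : 𝓞 F)) := by
    have h1 : ∀ (q : 𝓞 F ⧸ I) (a : I), Ideal.Quotient.mk I (rep q + (a : 𝓞 F)) = q := by
      intro q a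
      rw [map_add, hrep, Ideal.Quotient.eq_zero_iff_mem.2 a.2, add_zero]
    constructor
    · rintro ⟨q, a⟩ ⟨q', a'⟩ h
      have h : rep q + (a : 𝓞 F) = rep q' + (a' : 𝓞 F) := h
      have h2 : q = q' := by rw [← h1 q a, h, h1]
      subst h2
      rw [Subtype.ext (add_left_cancel h)]
    · intro v
      refine ⟨(Ideal.Quotient.mk I v, ⟨v - rep (Ideal.Quotient.mk I v), ?_⟩), ?_⟩
      · rw [← Ideal.Quotient.eq_zero_iff_mem, map_sub, hrep, sub_self]
      · exact add_sub_cancel _ _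
  obtain ⟨e, he⟩ : ∃ e : (𝓞 F ⧸ I) × I ≃ 𝓞 F, ∀ x, e x = rep x.1 + (x.2 : 𝓞 F) :=
    ⟨Equiv.ofBijective _ hbij, fun _ => rfl⟩
  set H := ∑' v : 𝓞 F, fs (3/2) v with hH
  let Cq : (𝓞 F ⧸ I) → ℝ := fun q => 4 * ‖σ (rep q : F)‖ + ‖σ (rep q : F)‖ ^ (3:ℝ)
  have hCq : ∀ q, 0 ≤ Cq q := fun q => by simp only [Cq]; positivity
  refine ⟨∑ q, Cq q * (H + H), ?_⟩
  intro s hs hs2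
  have hS := lat_summable (F := F) hs
  have hSh := lat_summable (F := F) (s := 3/2) (by norm_num)
  have hinj1 : Function.Injective (fun a : I => (a : 𝓞 F)) := Subtype.val_injective
  have hinj2 : ∀ q, Function.Injective (fun a : I => rep q + (a : 𝓞 F)) := fun q a b h =>
    Subtype.ext (add_left_cancel h)
  have hcard : (Ideal.absNorm I : ℝ) = ∑ q : 𝓞 F ⧸ I, (1:ℝ) := by
    rw [Finset.sum_const, nsmul_eq_mul, mul_one, Finset.card_univ, Ideal.absNorm_apply,
      Submodule.cardQuot_apply, Nat.card_eq_fintype_card]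
  have e1 : ∑' v : 𝓞 F, fs s v = ∑ q, ∑' a : I, fs s (rep q + (a : 𝓞 F)) := by
    have hse : Summable (fun x => fs s (e x)) := e.summable_iff.2 hS
    rw [← e.tsum_eq (fs s), hse.tsum_prod, tsum_fintype]
    simp_rw [he]
  rw [e1, hcard, Finset.sum_mul, ← Finset.sum_sub_distrib]
  refine (Finset.abs_sum_le_sum_abs _ _).trans (Finset.sum_le_sum fun q _ => ?_)
  have s1 : Summable (fun a : I => fs s (rep q + (a : 𝓞 F))) := hS.comp_injective (hinj2 q)
  have s2 : Summable (fun a : I => fs s (a : 𝓞 F)) := hS.comp_injective hinj1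
  have s3 : Summable (fun a : I => fs (3/2) (rep q + (a : 𝓞 F))) := hSh.comp_injective (hinj2 q)
  have s4 : Summable (fun a : I => fs (3/2) (a : 𝓞 F)) := hSh.comp_injective hinj1
  rw [one_mul, ← s1.tsum_sub s2]
  have hb : ∀ a : I, ‖fs s (rep q + (a : 𝓞 F)) - fs s (a : 𝓞 F)‖ ≤
      Cq q * (fs (3/2) (a : 𝓞 F) + fs (3/2) (rep q + (a : 𝓞 F))) := fun a =>
    fs_diff hσ hs hs2 (rep q) a
  have hb2 := tsum_of_norm_bounded ((s4.add s3).mul_left (Cq q)).hasSum hb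
  refine hb2.trans ?_
  rw [tsum_mul_left, s4.tsum_add s3]
  apply mul_le_mul_of_nonneg_left _ (hCq q)
  apply add_le_add
  · exact (tsum_comp_le_tsum_of_inj hSh (fun v => fs_nonneg _ _) hinj1)
  · exact (tsum_comp_le_tsum_of_inj hSh (fun v => fs_nonneg _ _) (hinj2 q))

lemma zc_diff [Finite (𝓞 F)ˣ] {σ : F →+* ℂ} (hσ : NormCompat σ) (C : ClassGroup (𝓞 F)) :
    ∃ B : ℝ, ∀ᶠ s in 𝓝[>] (1:ℝ), |zc C s - zc (1 : ClassGroup (𝓞 F)) s| ≤ B := by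
  obtain ⟨I, hI, hIC⟩ := cl_surj C⁻¹
  obtain ⟨B, hB⟩ := coset_bound hσ hI
  obtain ⟨Z, hZ⟩ := zeta_bound F
  have hN : 0 < Ideal.absNorm I := by
    apply Nat.pos_of_ne_zero; rwa [Ne, Ideal.absNorm_eq_zero_iff]
  have hN' : (1:ℝ) ≤ Ideal.absNorm I := by exact_mod_cast hN
  have hlog : 0 ≤ Real.log (Ideal.absNorm I) := Real.log_nonneg hN'
  refine ⟨B + Real.log (Ideal.absNorm I) * Z, ?_⟩
  have h2 : ∀ᶠ s in 𝓝[>] (1:ℝ), s < 2 := by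
    apply eventually_nhdsWithin_of_eventually_nhds
    exact eventually_lt_nhds (by norm_num)
  filter_upwards [hZ, h2, self_mem_nhdsWithin] with s hsZ hs2 hs1
  have hs : 1 < s := hs1
  have h := hB s hs hs2.le
  rw [lat_tsum hs, (lat_hasSum hI hs).tsum_eq, hIC, inv_inv] at h
  have hw : (1:ℝ) ≤ Nat.card (𝓞 F)ˣ := by exact_mod_cast Nat.card_pos
  set z1 : ℝ := zc (1 : ClassGroup (𝓞 F)) s
  set w : ℝ := ((Nat.card (𝓞 F)ˣ : ℕ) : ℝ)
  set N : ℝ := ((Ideal.absNorm I : ℕ) : ℝ) with hNdef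
  have hfz : N * fz s I = N ^ (1 - s) := by
    unfold fz
    rw [← hNdef, sub_eq_add_neg, Real.rpow_add (by linarith), Real.rpow_one]
  have e1 : w * z1 - N * (w * (fz s I * zc C s)) = w * (z1 - N ^ (1 - s) * zc C s) := by
    rw [← hfz]; ring
  rw [e1, abs_mul, abs_of_nonneg (by linarith)] at h
  have h3 : |z1 - N ^ (1 - s) * zc C s| ≤ B := by
    have := abs_nonneg (z1 - N ^ (1 - s) * zc C s)
    nlinarith
  have h4 : N ^ (1 - s) ≤ 1 := Real.rpow_le_one_of_one_le_of_nonpos hN' (by linarith)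
  have h5 : 1 - N ^ (1 - s) ≤ (s - 1) * Real.log N := by
    rw [Real.rpow_def_of_pos (by linarith)]
    have := Real.add_one_le_exp (Real.log N * (1 - s))
    linarith
  have hz0 := zc_nonneg C s
  have hz1 := zc_le C hs
  have h6 : (1 - N ^ (1 - s)) * zc C s ≤ Real.log N * Z := by
    calc (1 - N ^ (1 - s)) * zc C s ≤ ((s - 1) * Real.log N) * zeta F s := by
          apply mul_le_mul h5 hz1 hz0
          exact mul_nonneg (by linarith) hlog
      _ = Real.log N * ((s - 1) * zeta F s) := by ring
      _ ≤ Real.log N * Z := mul_le_mul_of_nonneg_left hsZ hlog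
  have h7 : 0 ≤ (1 - N ^ (1 - s)) * zc C s := mul_nonneg (by linarith) hz0
  have e2 : zc C s - z1 = (1 - N ^ (1 - s)) * zc C s - (z1 - N ^ (1 - s) * zc C s) := by ring
  rw [e2]
  rw [abs_le] at h3 ⊢
  constructor <;> linarith

noncomputable def LL (χ : AddChar (Additive (ClassGroup (𝓞 F))) ℂ) (s : ℝ) (J : Ideal (𝓞 F)) : ℂ :=
  ch χ (cl J) * (fz s J : ℂ)

lemma ch_norm (χ : AddChar (Additive (ClassGroup (𝓞 F))) ℂ) (c : ClassGroup (𝓞 F)) :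
    ‖ch χ c‖ = 1 := by
  have h : ch χ c ^ Nat.card (ClassGroup (𝓞 F)) = 1 := by
    rw [← ch_pow, pow_card_eq_one', ch_one]
  exact Complex.norm_eq_one_of_pow_eq_one h Nat.card_pos.ne'

lemma LL_norm (χ : AddChar (Additive (ClassGroup (𝓞 F))) ℂ) (s : ℝ) (J : Ideal (𝓞 F)) :
    ‖LL χ s J‖ = fz s J := by
  unfold LL
  rw [norm_mul, ch_norm, one_mul, Complex.norm_real, Real.norm_of_nonneg (fz_nonneg _ _)]

lemma L_bound [Finite (𝓞 F)ˣ] {σ : F →+* ℂ} (hσ : NormCompat σ)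
    (χ : AddChar (Additive (ClassGroup (𝓞 F))) ℂ) (hχ : χ ≠ 1) :
    ∃ B : ℝ, ∀ᶠ s in 𝓝[>] (1:ℝ), ‖∑' J : Ideal (𝓞 F), LL χ s J‖ ≤ B := by
  classical
  choose B hB using fun C => zc_diff hσ C
  refine ⟨∑ C, B C, ?_⟩
  filter_upwards [eventually_all.2 hB, self_mem_nhdsWithin] with s hs hs1
  have hs1' : 1 < s := hs1
  have e1 : ∀ J : Ideal (𝓞 F), LL χ s J = ∑ C, ch χ C * ((if cl J = C then fz s J else 0 : ℝ) : ℂ) := by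
    intro J
    rw [Finset.sum_eq_single (cl J)]
    · simp [LL]
    · intro C _ h
      rw [if_neg h.symm]; simp
    · simp
  have hsum : ∀ C, Summable (fun J : Ideal (𝓞 F) =>
      ch χ C * ((if cl J = C then fz s J else 0 : ℝ) : ℂ)) := by
    intro C
    apply Summable.mul_left
    rw [Complex.summable_ofReal]
    exact zc_summable C hs1'
  have e2 : ∑' J : Ideal (𝓞 F), LL χ s J = ∑ C, ch χ C * (zc C s : ℂ) := by
    simp_rw [e1]
    rw [Summable.tsum_finsetSum (fun C _ => hsum C)]
    refine Finset.sum_congr rfl fun C _ => ?_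
    rw [tsum_mul_left, zc, Complex.ofReal_tsum]
  have h0 : ∑ C, ch χ C = 0 := by
    have : ∃ b, ch χ b ≠ 1 := by
      by_contra h
      push Not at h
      exact hχ (ch_ext (fun a => by rw [h a, one_ch]))
    obtain ⟨b, hb⟩ := this
    have h1 : ch χ b * ∑ C, ch χ C = ∑ C, ch χ C := by
      rw [Finset.mul_sum]
      simp_rw [← ch_mul]
      exact Fintype.sum_equiv (Equiv.mulLeft b) _ _ (fun _ => rfl)
    have h2 : (ch χ b - 1) * ∑ C, ch χ C = 0 := by rw [sub_mul, h1, one_mul, sub_self]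
    exact (mul_eq_zero.1 h2).resolve_left (sub_ne_zero.2 hb)
  have e3 : ∑ C, ch χ C * (zc C s : ℂ) = ∑ C, ch χ C * ((zc C s - zc (1 : ClassGroup (𝓞 F)) s : ℝ) : ℂ) := by
    have : ∑ C, ch χ C * (zc C s : ℂ) = ∑ C, ch χ C * ((zc C s - zc (1 : ClassGroup (𝓞 F)) s : ℝ) : ℂ) +
        (∑ C, ch χ C) * (zc (1 : ClassGroup (𝓞 F)) s : ℂ) := by
      rw [Finset.sum_mul, ← Finset.sum_add_distrib]
      refine Finset.sum_congr rfl fun C _ => ?_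
      push_cast; ring
    rw [this, h0, zero_mul, add_zero]
  rw [e2, e3]
  refine (norm_sum_le _ _).trans (Finset.sum_le_sum fun C _ => ?_)
  rw [norm_mul, ch_norm, one_mul, Complex.norm_real]
  exact hs C

end A4
end ThetaIndep

namespace ThetaIndep
open NumberField Filter Topology

section A5
variable {F : Type} [Field F] [NumberField F]

abbrev Pr (F : Type) [Field F] [NumberField F] : Type :=
  {P : Ideal (𝓞 F) // P.IsPrime ∧ P ≠ ⊥}

open Classical in
noncomputable def gS (f : Ideal (𝓞 F) → ℂ) (S : Finset (Pr F)) (J : Ideal (𝓞 F)) : ℂ :=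
  if ∀ P ∈ S, ¬ (P : Ideal (𝓞 F)) ∣ J then f J else 0

lemma gS_norm_le (f : Ideal (𝓞 F) → ℂ) (S : Finset (Pr F)) (J : Ideal (𝓞 F)) :
    ‖gS f S J‖ ≤ ‖f J‖ := by
  unfold gS
  split_ifs
  · exact le_rfl
  · simp

lemma gS_summable {f : Ideal (𝓞 F) → ℂ} (hf : Summable (fun J => ‖f J‖)) (S : Finset (Pr F)) :
    Summable (gS f S) :=
  Summable.of_norm_bounded hf (gS_norm_le f S)

lemma sieve {f : Ideal (𝓞 F) → ℂ} (hmul : ∀ I J, f (I * J) = f I * f J)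
    (hf : Summable (fun J => ‖f J‖)) (S : Finset (Pr F)) :
    (∏ P ∈ S, (1 - f (P : Ideal (𝓞 F)))) * ∑' J, f J = ∑' J, gS f S J := by
  classical
  induction S using Finset.induction_on with
  | empty => simp [gS]
  | insert P S hP ih =>
    rw [Finset.prod_insert hP, mul_assoc, ih, sub_mul, one_mul, ← tsum_mul_left]
    have hPp : Prime (P : Ideal (𝓞 F)) := Ideal.prime_of_isPrime P.2.2 P.2.1
    have e1 : ∀ J, f P * gS f S J = gS f S (P * J) := by
      intro J
      have : (∀ Q ∈ S, ¬ (Q : Ideal (𝓞 F)) ∣ J) ↔ (∀ Q ∈ S, ¬ (Q : Ideal (𝓞 F)) ∣ P * J) := by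
        refine forall₂_congr fun Q hQ => not_congr ⟨fun h => h.mul_left _, fun h => ?_⟩
        have hQp : Prime (Q : Ideal (𝓞 F)) := Ideal.prime_of_isPrime Q.2.2 Q.2.1
        rcases hQp.dvd_or_dvd h with h | h
        · exfalso
          have h1 : (P : Ideal (𝓞 F)) ≤ Q := Ideal.le_of_dvd h
          have h2 := (P.2.1.isMaximal P.2.2).eq_of_le Q.2.1.ne_top h1
          have h3 : P = Q := Subtype.ext h2
          rw [h3] at hP; exact hP hQ
        · exact h
      unfold gS
      simp only [this, hmul]
      split_ifs
      · rfl
      · simp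
    simp_rw [e1]
    have hinj : Function.Injective (fun J : Ideal (𝓞 F) => (P : Ideal (𝓞 F)) * J) :=
      fun a b h => mul_left_cancel₀ P.2.2 h
    have e2 : ∑' J, gS f S (P * J) = ∑' K, (if (P : Ideal (𝓞 F)) ∣ K then gS f S K else 0) := by
      have h9 := hinj.tsum_eq
        (f := fun K : Ideal (𝓞 F) => if (P : Ideal (𝓞 F)) ∣ K then gS f S K else 0) (by
          intro K hK
          rw [Function.mem_support] at hK
          by_cases h : (P : Ideal (𝓞 F)) ∣ K
          · obtain ⟨J, rfl⟩ := h
            exact ⟨J, rfl⟩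
          · rw [if_neg h] at hK
            exact absurd rfl hK)
      rw [← h9]
      simp
    have hs2 : Summable (fun K : Ideal (𝓞 F) => if (P : Ideal (𝓞 F)) ∣ K then gS f S K else 0) := by
      refine Summable.of_norm_bounded hf (fun K => ?_)
      split_ifs
      · exact gS_norm_le f S K
      · simp
    rw [e2, ← (gS_summable hf S).tsum_sub hs2]
    refine tsum_congr fun K => ?_
    unfold gS
    simp only [Finset.forall_mem_insert]
    by_cases h : (P : Ideal (𝓞 F)) ∣ K <;> simp [h]

lemma euler {f : Ideal (𝓞 F) → ℂ} (hmul : ∀ I J, f (I * J) = f I * f J)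
    (h0 : f ⊥ = 0) (h1 : f 1 = 1) (hf : Summable (fun J => ‖f J‖)) :
    Tendsto (fun S : Finset (Pr F) => (∏ P ∈ S, (1 - f (P : Ideal (𝓞 F)))) * ∑' J, f J)
      atTop (𝓝 1) := by
  classical
  simp_rw [sieve hmul hf]
  have hlim : ∑' J : Ideal (𝓞 F), (if J = 1 then (1:ℂ) else 0) = 1 := by
    rw [tsum_ite_eq]
  rw [← hlim]
  refine tendsto_tsum_of_dominated_convergence hf ?_ (Eventually.of_forall fun S J => gS_norm_le f S J)
  intro J
  apply tendsto_nhds_of_eventually_eq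
  by_cases hJ0 : J = ⊥
  · subst hJ0
    filter_upwards with S
    have : (⊥ : Ideal (𝓞 F)) ≠ 1 := by
      rw [Ideal.one_eq_top]; exact bot_ne_top
    rw [if_neg this]
    unfold gS
    simp [h0]
  by_cases hJ1 : J = 1
  · subst hJ1
    filter_upwards with S
    unfold gS
    rw [if_pos rfl, if_pos, h1]
    intro P _ h
    exact P.2.1.ne_top (by rw [← Ideal.one_eq_top]; exact isUnit_iff_eq_one.1 (isUnit_of_dvd_one h))
  · obtain ⟨P, hP, hPJ⟩ := WfDvdMonoid.exists_irreducible_factor (a := J)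
      (by rwa [Ideal.isUnit_iff, ← Ideal.one_eq_top]) hJ0
    have hPp : Prime P := hP.prime
    have : (⟨P, Ideal.isPrime_of_prime hPp, hPp.ne_zero⟩ : Pr F) ∈ (Set.univ : Set (Pr F)) := trivial
    filter_upwards [eventually_ge_atTop ({⟨P, Ideal.isPrime_of_prime hPp, hPp.ne_zero⟩} : Finset (Pr F))] with S hS
    rw [if_neg hJ1]
    unfold gS
    rw [if_neg]
    push Not
    exact ⟨⟨P, Ideal.isPrime_of_prime hPp, hPp.ne_zero⟩, hS (Finset.mem_singleton_self _), hPJ⟩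

lemma unit_est {w : ℂ} {n : ℕ} (hn : Odd n) (hw : w ^ n = 1) (hw1 : ‖w‖ = 1) : ‖1 - w‖ < 2 := by
  have h1 : ‖1 - w‖ ≤ 2 := by
    have := norm_sub_le (1:ℂ) w
    rw [hw1, norm_one] at this
    linarith
  refine lt_of_le_of_ne h1 fun h => ?_
  have e1 : ‖1 - w‖ ^ 2 = 4 := by rw [h]; norm_num
  have e2 : ‖w‖ ^ 2 = 1 := by rw [hw1]; norm_num
  rw [← Complex.normSq_eq_norm_sq, Complex.normSq_apply] at e1 e2
  simp at e1
  have hre : w.re = -1 := by nlinarith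
  have him : w.im = 0 := by
    rw [hre] at e2; nlinarith
  have : w = -1 := Complex.ext (by simpa using hre) (by simpa using him)
  rw [this, hn.neg_one_pow] at hw
  norm_num at hw

lemma real_pow_est {x δ : ℝ} {k : ℕ} (hx : 0 ≤ x) (hx2 : x ≤ 1 / 2) (hδ : 0 ≤ δ) (hδ1 : δ ≤ 1)
    (hk : 2 ≤ k * δ) : (1 - δ * x) ^ k ≤ 1 - x := by
  have h0 : 0 ≤ δ * x := by positivity
  have h1 : 1 - δ * x ≤ (1 + δ * x)⁻¹ := by
    rw [le_inv_comm₀ (by nlinarith) (by linarith)]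
    rw [← one_div, le_div_iff₀ (by nlinarith)]
    nlinarith
  have h2 : (1 - δ * x) ^ k ≤ ((1 + δ * x)⁻¹) ^ k := pow_le_pow_left₀ (by nlinarith) h1 k
  have h3 : 1 + k * (δ * x) ≤ (1 + δ * x) ^ k := one_add_mul_le_pow (by linarith) k
  refine h2.trans ?_
  rw [inv_pow, inv_le_comm₀ (by positivity) (by linarith)]
  refine le_trans ?_ h3
  rw [← one_div, div_le_iff₀ (by linarith)]
  have h4 : 2 * x ≤ k * (δ * x) := by nlinarith
  nlinarith [mul_nonneg hx (by linarith : (0:ℝ) ≤ 1 - 2 * x),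
    mul_nonneg (by linarith : (0:ℝ) ≤ k * (δ * x) - 2 * x) (by linarith : (0:ℝ) ≤ 1 - x)]

lemma LL_mul (χ : AddChar (Additive (ClassGroup (𝓞 F))) ℂ) {s : ℝ} (hs : 1 < s) (I J : Ideal (𝓞 F)) :
    LL χ s (I * J) = LL χ s I * LL χ s J := by
  unfold LL
  rw [fz_mul]
  by_cases hI : I = ⊥
  · subst hI; rw [fz_bot hs]; simp
  by_cases hJ : J = ⊥
  · subst hJ; rw [fz_bot hs]; simp
  rw [cl_mul hI hJ, ch_mul]
  push_cast; ring

lemma LL_euler (χ : AddChar (Additive (ClassGroup (𝓞 F))) ℂ) {s : ℝ} (hs : 1 < s) :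
    Tendsto (fun S : Finset (Pr F) => (∏ P ∈ S, ‖1 - LL χ s (P : Ideal (𝓞 F))‖) *
      ‖∑' J : Ideal (𝓞 F), LL χ s J‖) atTop (𝓝 1) := by
  have h := (euler (f := LL χ s) (LL_mul χ hs) (by simp [LL, fz_bot hs])
    (by unfold LL fz; rw [cl_one, ch_one]; simp) (by simp_rw [LL_norm]; exact fz_summable hs)).norm
  simpa [norm_mul, norm_prod] using h

lemma prime_fz {s : ℝ} (hs : 1 < s) (P : Pr F) : fz s (P : Ideal (𝓞 F)) ≤ 1 / 2 := by
  have h1 : 2 ≤ Ideal.absNorm (P : Ideal (𝓞 F)) := by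
    have a : Ideal.absNorm (P : Ideal (𝓞 F)) ≠ 0 := by
      rw [Ne, Ideal.absNorm_eq_zero_iff]; exact P.2.2
    have b : Ideal.absNorm (P : Ideal (𝓞 F)) ≠ 1 := by
      rw [Ne, Ideal.absNorm_eq_one_iff]; exact P.2.1.ne_top
    omega
  have h2 : (2:ℝ) ≤ Ideal.absNorm (P : Ideal (𝓞 F)) := by exact_mod_cast h1
  unfold fz
  calc (Ideal.absNorm (P : Ideal (𝓞 F)) : ℝ) ^ (-s) ≤ (2:ℝ) ^ (-s) :=
        Real.rpow_le_rpow_of_nonpos (by norm_num) h2 (by linarith)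
    _ ≤ (2:ℝ) ^ (-1 : ℝ) := Real.rpow_le_rpow_of_exponent_le (by norm_num) (by linarith)
    _ = 1 / 2 := by rw [Real.rpow_neg_one]; norm_num

theorem anClaim [Finite (𝓞 F)ˣ] {σ : F →+* ℂ} (hσ : NormCompat σ) : AnClaim F := by
  classical
  intro χ1 χ2 n hn h1 h2 hne1 hne2 hP
  have hpow : ∀ (χ : AddChar (Additive (ClassGroup (𝓞 F))) ℂ), χ ^ n = 1 → ∀ c, ‖1 - ch χ c‖ < 2 := by
    intro χ h c
    exact unit_est hn (by rw [← pow_ch, h, one_ch]) (ch_norm χ c)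
  have hδ : ∀ χ : AddChar (Additive (ClassGroup (𝓞 F))) ℂ, χ ^ n = 1 → ∃ δ : ℝ, 0 < δ ∧
      ∀ c, ‖1 - ch χ c‖ ≤ 2 - δ := by
    intro χ h
    obtain ⟨c0, hc0⟩ := Finite.exists_max (fun c => ‖1 - ch χ c‖)
    exact ⟨2 - ‖1 - ch χ c0‖, by linarith [hpow χ h c0], fun c => by linarith [hc0 c]⟩
  obtain ⟨δ1, hδ1, hb1⟩ := hδ χ1 h1
  obtain ⟨δ2, hδ2, hb2⟩ := hδ χ2 h2
  obtain ⟨δ, hδ0, hδle1, hδl1, hδl2⟩ : ∃ δ : ℝ, 0 < δ ∧ δ ≤ 1 ∧ δ ≤ δ1 ∧ δ ≤ δ2 :=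
    ⟨min 1 (min δ1 δ2), by positivity, by simp, by simp, by simp⟩
  obtain ⟨k, hk⟩ := exists_nat_ge (2 / δ)
  rw [div_le_iff₀ hδ0] at hk
  -- pointwise estimate
  have hone : ∀ (w : ℂ) (x : ℝ), 0 ≤ x → x ≤ 1 / 2 → ‖1 - w‖ ≤ 2 - δ → ‖1 - w * x‖ ≤ 1 + (1 - δ) * x := by
    intro w x hx hx2 hw
    have e : 1 - w * x = ((1 - x : ℝ) : ℂ) + (x : ℂ) * (1 - w) := by push_cast; ring
    rw [e]
    refine (norm_add_le _ _).trans ?_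
    rw [norm_mul, Complex.norm_real, Complex.norm_real, Real.norm_of_nonneg (by linarith),
      Real.norm_of_nonneg hx]
    nlinarith
  have hpt : ∀ (s : ℝ), 1 < s → ∀ P : Pr F,
      (‖1 - LL χ1 s (P : Ideal (𝓞 F))‖ * ‖1 - LL χ2 s (P : Ideal (𝓞 F))‖) ^ k ≤
        ‖1 - LL 1 s (P : Ideal (𝓞 F))‖ := by
    intro s hs P
    have hx := fz_nonneg s (P : Ideal (𝓞 F))
    have hx2 := prime_fz hs P
    have h3 : ‖1 - LL 1 s (P : Ideal (𝓞 F))‖ = 1 - fz s (P : Ideal (𝓞 F)) := by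
      unfold LL
      rw [one_ch, one_mul, ← Complex.ofReal_one, ← Complex.ofReal_sub, Complex.norm_real,
        Real.norm_of_nonneg (by linarith)]
    have h4 : ‖1 - LL χ1 s (P : Ideal (𝓞 F))‖ * ‖1 - LL χ2 s (P : Ideal (𝓞 F))‖ ≤
        1 - δ * fz s (P : Ideal (𝓞 F)) := by
      have a1 := hone (ch χ1 (cl (P : Ideal (𝓞 F)))) _ hx hx2 ((hb1 _).trans (by linarith))
      have a2 := hone (ch χ2 (cl (P : Ideal (𝓞 F)))) _ hx hx2 ((hb2 _).trans (by linarith))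
      have hone' : ∀ χ : AddChar (Additive (ClassGroup (𝓞 F))) ℂ, ch χ (cl (P : Ideal (𝓞 F))) = 1 →
          ‖1 - LL χ s (P : Ideal (𝓞 F))‖ = 1 - fz s (P : Ideal (𝓞 F)) := by
        intro χ h
        rw [← h3]; unfold LL; rw [h, one_ch]
      rcases hP P P.2.1 P.2.2 with h | h
      · rw [hone' χ1 h]
        calc _ ≤ (1 - fz s (P : Ideal (𝓞 F))) * (1 + (1 - δ) * fz s (P : Ideal (𝓞 F))) :=
              mul_le_mul_of_nonneg_left a2 (by linarith)
          _ ≤ _ := by nlinarith [mul_nonneg (sub_nonneg.2 hδle1) (mul_nonneg hx hx)]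
      · rw [hone' χ2 h]
        calc _ ≤ (1 + (1 - δ) * fz s (P : Ideal (𝓞 F))) * (1 - fz s (P : Ideal (𝓞 F))) :=
              mul_le_mul_of_nonneg_right a1 (by linarith)
          _ ≤ _ := by nlinarith [mul_nonneg (sub_nonneg.2 hδle1) (mul_nonneg hx hx)]
    rw [h3]
    exact (pow_le_pow_left₀ (by positivity) h4 k).trans
      (real_pow_est hx hx2 hδ0.le hδle1 hk)
  have hmain : ∀ s : ℝ, 1 < s → zeta F s ≤
      (‖∑' J : Ideal (𝓞 F), LL χ1 s J‖ * ‖∑' J : Ideal (𝓞 F), LL χ2 s J‖) ^ k := by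
    intro s hs
    have t1 := LL_euler χ1 hs
    have t2 := LL_euler χ2 hs
    have t3 := LL_euler (1 : AddChar (Additive (ClassGroup (𝓞 F))) ℂ) hs
    have hz0 : 0 ≤ zeta F s := tsum_nonneg fun J => fz_nonneg s J
    have hz : ‖∑' J : Ideal (𝓞 F), LL 1 s J‖ = zeta F s := by
      have : ∀ J : Ideal (𝓞 F), LL 1 s J = ((fz s J : ℝ) : ℂ) := by
        intro J; unfold LL; rw [one_ch, one_mul]
      simp_rw [this]
      rw [← Complex.ofReal_tsum, Complex.norm_real, Real.norm_of_nonneg]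
      · rfl
      · exact hz0
    rw [hz] at t3
    set L1 := ‖∑' J : Ideal (𝓞 F), LL χ1 s J‖
    set L2 := ‖∑' J : Ideal (𝓞 F), LL χ2 s J‖
    have t4 := ((t1.mul t2).pow k).mul_const (zeta F s)
    have t5 := t3.mul_const ((L1 * L2) ^ k)
    have := le_of_tendsto_of_tendsto' t4 t5 (fun S => ?_)
    · simpa using this
    · have hS : (∏ P ∈ S, (‖1 - LL χ1 s (P : Ideal (𝓞 F))‖ * ‖1 - LL χ2 s (P : Ideal (𝓞 F))‖)) ^ k ≤
          ∏ P ∈ S, ‖1 - LL 1 s (P : Ideal (𝓞 F))‖ := by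
        rw [← Finset.prod_pow]
        exact Finset.prod_le_prod (fun P _ => by positivity) (fun P _ => hpt s hs P)
      rw [Finset.prod_mul_distrib] at hS
      have hnn : 0 ≤ zeta F s * (L1 * L2) ^ k := by positivity
      calc _ = ((∏ P ∈ S, ‖1 - LL χ1 s (P : Ideal (𝓞 F))‖) *
              (∏ P ∈ S, ‖1 - LL χ2 s (P : Ideal (𝓞 F))‖)) ^ k * (zeta F s * (L1 * L2) ^ k) := by ring
        _ ≤ (∏ P ∈ S, ‖1 - LL 1 s (P : Ideal (𝓞 F))‖) * (zeta F s * (L1 * L2) ^ k) :=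
            mul_le_mul_of_nonneg_right hS hnn
        _ = _ := by ring
  obtain ⟨B1, hB1⟩ := L_bound hσ χ1 hne1
  obtain ⟨B2, hB2⟩ := L_bound hσ χ2 hne2
  have hbig := (zeta_atTop F).eventually_gt_atTop ((B1 * B2) ^ k)
  obtain ⟨s, ⟨⟨hs1, hs2⟩, hs3⟩, hs4⟩ := (((hB1.and hB2).and hbig).and self_mem_nhdsWithin).exists
  have h5 := hmain s hs4
  have h6 : (‖∑' J : Ideal (𝓞 F), LL χ1 s J‖ * ‖∑' J : Ideal (𝓞 F), LL χ2 s J‖) ^ k ≤ (B1 * B2) ^ k := by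
    apply pow_le_pow_left₀ (by positivity)
    exact mul_le_mul hs1 hs2 (norm_nonneg _) ((norm_nonneg _).trans hs1)
  linarith

end A5
end ThetaIndep

namespace ThetaIndep
open NumberField

section B1

/-- Fundamental discriminant condition (without `D ≠ 1`). -/
def FD (D : ℤ) : Prop :=
  (D % 4 = 1 ∧ Squarefree D) ∨ (D % 4 = 0 ∧ Squarefree (D / 4) ∧ (D / 4 % 4 = 2 ∨ D / 4 % 4 = 3))

/-- Presentation of an imaginary quadratic field of discriminant `D`. -/
structure QF (F : Type) [Field F] [NumberField F] (D : ℤ) where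
  δ : F
  hδ : δ * δ = (D : F)
  span : ∀ x : F, ∃ p r : ℚ, x = p + r * δ
  cj : F →+* F
  cjδ : cj δ = -δ
  σ : F →+* ℂ
  σδ : σ δ = Complex.I * (Real.sqrt (-D) : ℝ)
  rank : Module.finrank ℚ F = 2
  neg : D < 0
  fd : FD D

lemma exists_QF (D : ℤ) (hD : D < 0) (hf : FD D) :
    ∃ (F : Type) (_ : Field F) (_ : NumberField F), Nonempty (QF F D) := by
  have hfact : Fact (∀ r : ℚ, r ^ 2 ≠ (D : ℚ) + 0 * r) := ⟨fun r h => by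
    have h1 : (D : ℚ) < 0 := by exact_mod_cast hD
    nlinarith [sq_nonneg r]⟩
  have hr : Module.finrank ℚ (QuadraticAlgebra ℚ (D : ℚ) 0) = 2 := QuadraticAlgebra.finrank_eq_two _ _
  let nf : NumberField (QuadraticAlgebra ℚ (D : ℚ) 0) :=
    { to_charZero := inferInstance
      to_finiteDimensional := by
        have : Module.Finite ℚ (QuadraticAlgebra ℚ (D : ℚ) 0) := inferInstance
        convert this }
  refine ⟨QuadraticAlgebra ℚ (D : ℚ) 0, inferInstance, nf, ⟨?_⟩⟩
  have hs : (Complex.I * (Real.sqrt (-D) : ℝ)) * (Complex.I * (Real.sqrt (-D) : ℝ)) =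
      (D : ℚ) • (1:ℂ) + (0:ℚ) • (Complex.I * (Real.sqrt (-D) : ℝ)) := by
    have h1 : ((Real.sqrt (-D) : ℝ) : ℂ) * (Real.sqrt (-D) : ℝ) = -D := by
      rw [← Complex.ofReal_mul, Real.mul_self_sqrt]
      · push_cast; rfl
      · have : (D : ℝ) < 0 := by exact_mod_cast hD
        linarith
    rw [mul_mul_mul_comm, Complex.I_mul_I, h1]
    simp [Algebra.smul_def]
  exact
    { δ := QuadraticAlgebra.omega
      hδ := by ext <;> simp
      span := fun x => ⟨x.re, x.im, by
        ext
        · simp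
        · simp⟩
      cj := starRingEnd _
      cjδ := by
        rw [starRingEnd_apply]
        ext <;> simp
      σ := (QuadraticAlgebra.lift ⟨_, hs⟩).toRingHom
      σδ := by simp [QuadraticAlgebra.lift]
      rank := by convert hr
      neg := hD
      fd := hf }

variable {F : Type} [Field F] [NumberField F] {D : ℤ} (Q : QF F D)

namespace QF

lemma cj_rat (p : ℚ) : Q.cj (p : F) = p := map_ratCast _ _

lemma cj_coord (p r : ℚ) : Q.cj (p + r * Q.δ) = p - r * Q.δ := by
  rw [map_add, map_mul, cj_rat, cj_rat, cjδ]; ring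

lemma cj_cj (x : F) : Q.cj (Q.cj x) = x := by
  obtain ⟨p, r, rfl⟩ := Q.span x
  rw [cj_coord]
  have := Q.cj_coord p (-r)
  push_cast at this
  rw [neg_mul, ← sub_eq_add_neg] at this
  rw [this]; ring

lemma σ_coord (p r : ℚ) : Q.σ (p + r * Q.δ) = ⟨p, r * Real.sqrt (-D)⟩ := by
  rw [map_add, map_mul, map_ratCast, map_ratCast, σδ]
  apply Complex.ext <;> simp

lemma sqrt_pos (Q : QF F D) : 0 < Real.sqrt (-D) := by
  apply Real.sqrt_pos.2
  have : (D : ℝ) < 0 := by exact_mod_cast Q.neg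
  linarith

lemma coord_inj {p r p' r' : ℚ} (h : (p : F) + r * Q.δ = p' + r' * Q.δ) : p = p' ∧ r = r' := by
  have h1 := congrArg Q.σ h
  rw [σ_coord, σ_coord, Complex.mk.injEq] at h1
  refine ⟨by exact_mod_cast h1.1, ?_⟩
  have := mul_right_cancel₀ Q.sqrt_pos.ne' h1.2
  exact_mod_cast this

lemma nrm (p r : ℚ) : ((p : F) + r * Q.δ) * Q.cj (p + r * Q.δ) = ((p ^ 2 - r ^ 2 * D : ℚ) : F) := by
  rw [cj_coord]
  have := Q.hδ
  push_cast
  linear_combination (-(r:F)^2) * this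

lemma norm_σ (p r : ℚ) : ‖Q.σ (p + r * Q.δ)‖ ^ 2 = ((p ^ 2 - r ^ 2 * D : ℚ) : ℝ) := by
  rw [σ_coord, ← Complex.normSq_eq_norm_sq, Complex.normSq_mk]
  have : Real.sqrt (-D) * Real.sqrt (-D) = -D := by
    rw [Real.mul_self_sqrt]
    have : (D : ℝ) < 0 := by exact_mod_cast Q.neg
    linarith
  push_cast
  linear_combination (r:ℝ)^2 * this

/-- integrality criterion -/
lemma int_of (x : F) (t n : ℤ) (ht : x + Q.cj x = t) (hn : x * Q.cj x = n) : IsIntegral ℤ x := by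
  refine ⟨Polynomial.X ^ 2 - Polynomial.C t * Polynomial.X + Polynomial.C n, by monicity!, ?_⟩
  simp only [Polynomial.eval₂_add, Polynomial.eval₂_sub, Polynomial.eval₂_pow, Polynomial.eval₂_X,
    Polynomial.eval₂_mul, Polynomial.eval₂_C]
  simp only [eq_intCast]
  rw [← ht, ← hn]; ring

lemma int_cj {x : F} (h : IsIntegral ℤ x) : IsIntegral ℤ (Q.cj x) := by
  exact map_isIntegral_int Q.cj h

lemma rat_int {q : ℚ} (h : IsIntegral ℤ (q : F)) : ∃ t : ℤ, q = t := by
  have h1 : IsIntegral ℤ (algebraMap ℚ F q) := by simpa using h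
  rw [isIntegral_algebraMap_iff (algebraMap ℚ F).injective] at h1
  obtain ⟨t, ht⟩ := IsIntegrallyClosed.isIntegral_iff.1 h1
  exact ⟨t, by simpa using ht.symm⟩

lemma sq_int {s : ℤ} (hs : Squarefree s) {q : ℚ} {k : ℤ} (h : q ^ 2 * s = k) : ∃ n : ℤ, q = n := by
  have hden : (q.den : ℤ) * q.den ∣ s := by
    have h1 : (q.num ^ 2 * s : ℤ) = k * (q.den * q.den) := by
      have hd : (q.den : ℚ) ≠ 0 := by exact_mod_cast q.den_ne_zero
      have : (q.num : ℚ) = q * q.den := (Rat.mul_den_eq_num q).symm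
      have h2 : ((q.num : ℚ) ^ 2 * s) = k * (q.den * q.den) := by rw [this, ← h]; ring
      exact_mod_cast h2
    have hc : IsCoprime ((q.den : ℤ) * q.den) (q.num ^ 2) := by
      have : IsCoprime (q.den : ℤ) q.num := by
        rw [Int.isCoprime_iff_nat_coprime]
        simpa using q.reduced.symm
      exact (IsCoprime.mul_left this this).pow_right
    exact hc.dvd_of_dvd_mul_left ⟨k, by rw [h1]; ring⟩
  have hu := hs _ hden
  have : q.den = 1 := by
    rw [Int.ofNat_isUnit] at hu
    exact Nat.isUnit_iff.1 hu
  exact ⟨q.num, (Rat.coe_int_num_of_den_eq_one this).symm⟩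

lemma int_coord {x : F} (h : IsIntegral ℤ x) :
    ∃ m n : ℤ, 2 ∣ m - n * D ∧ x = ((m / 2 : ℚ) : F) + ((n / 2 : ℚ) : F) * Q.δ := by
  obtain ⟨p, r, rfl⟩ := Q.span x
  have h1 : IsIntegral ℤ (((2 * p : ℚ)) : F) := by
    have := h.add (Q.int_cj h)
    rw [cj_coord] at this
    have e : ((2 * p : ℚ) : F) = p + r * Q.δ + (p - r * Q.δ) := by push_cast; ring
    rw [e]; exact this
  have h2 : IsIntegral ℤ ((p ^ 2 - r ^ 2 * D : ℚ) : F) := by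
    rw [← nrm]; exact h.mul (Q.int_cj h)
  obtain ⟨m, hm⟩ := rat_int h1
  obtain ⟨k, hk⟩ := rat_int h2
  have hp : p = m / 2 := by linarith
  subst hp
  rcases Q.fd with ⟨h4, hs⟩ | ⟨h4, hs, hs4⟩
  · have e1 : (2 * r) ^ 2 * D = ((m ^ 2 - 4 * k : ℤ) : ℚ) := by push_cast; linarith
    obtain ⟨n, hn⟩ := sq_int hs e1
    refine ⟨m, n, ?_, ?_⟩
    · rw [hn] at e1
      have e2 : n ^ 2 * D = m ^ 2 - 4 * k := by exact_mod_cast e1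
      have e3 : 2 ∣ (m - n * D) * (m - n * D) := by
        have : (m - n * D) * (m - n * D) = 2 * (n ^ 2 * D * ((1 + D) / 2) + 2 * k - m * n * D) := by
          have h5 : (1 + D) = 2 * ((1 + D) / 2) := by omega
          linear_combination (-1:ℤ) * e2 + n ^ 2 * D * h5
        exact ⟨_, this⟩
      exact (Int.prime_two.dvd_or_dvd e3).elim id id
    · rw [← hn]; push_cast; ring
  · obtain ⟨s, hs1⟩ : ∃ s, D = 4 * s := ⟨D / 4, by omega⟩
    have hs2 : D / 4 = s := by omega
    rw [hs2] at hs hs4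
    have hD' : (D : ℚ) = 4 * s := by rw [hs1]; push_cast; ring
    have e1 : (4 * r) ^ 2 * s = ((m ^ 2 - 4 * k : ℤ) : ℚ) := by
      rw [hD'] at hk; push_cast; linarith
    obtain ⟨n, hn⟩ := sq_int hs e1
    rw [hn] at e1
    have e2 : n ^ 2 * s = m ^ 2 - 4 * k := by exact_mod_cast e1
    have e3 : n % 2 = 0 ∧ m % 2 = 0 := by
      have e4 : (n ^ 2 * s) % 4 = (m ^ 2) % 4 := by omega
      rcases Int.emod_two_eq_zero_or_one n with a | a <;>
      rcases Int.emod_two_eq_zero_or_one m with b | b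
      · exact ⟨a, b⟩
      · exfalso
        obtain ⟨n', rfl⟩ : ∃ n', n = 2 * n' := ⟨n / 2, by omega⟩
        obtain ⟨m', rfl⟩ : ∃ m', m = 2 * m' + 1 := ⟨m / 2, by omega⟩
        ring_nf at e4; omega
      · exfalso
        obtain ⟨n', rfl⟩ : ∃ n', n = 2 * n' + 1 := ⟨n / 2, by omega⟩
        obtain ⟨m', rfl⟩ : ∃ m', m = 2 * m' := ⟨m / 2, by omega⟩
        ring_nf at e4; omega
      · exfalso
        obtain ⟨n', rfl⟩ : ∃ n', n = 2 * n' + 1 := ⟨n / 2, by omega⟩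
        obtain ⟨m', rfl⟩ : ∃ m', m = 2 * m' + 1 := ⟨m / 2, by omega⟩
        ring_nf at e4; omega
    obtain ⟨n', rfl⟩ : ∃ n', n = 2 * n' := ⟨n / 2, by omega⟩
    refine ⟨m, n', ?_, ?_⟩
    · rw [hs1]
      have : n' * (4 * s) = 2 * (2 * n' * s) := by ring
      omega
    · have : r = n' / 2 := by push_cast at hn; linarith
      rw [this]

lemma coord_int {m n : ℤ} (h : 2 ∣ m - n * D) :
    IsIntegral ℤ (((m / 2 : ℚ) : F) + ((n / 2 : ℚ) : F) * Q.δ) := by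
  have h4 : 4 ∣ m ^ 2 - n ^ 2 * D := by
    obtain ⟨k, hk⟩ := h
    obtain rfl : m = n * D + 2 * k := by linarith
    have : 4 ∣ D * D - D := by
      rcases Q.fd with ⟨h4, -⟩ | ⟨h4, -⟩
      · obtain ⟨j, hj⟩ : ∃ j, D = 4 * j + 1 := ⟨D / 4, by omega⟩
        exact ⟨j * D, by rw [hj]; ring⟩
      · obtain ⟨j, hj⟩ : ∃ j, D = 4 * j := ⟨D / 4, by omega⟩
        exact ⟨j * D - j, by rw [hj]; ring⟩
    obtain ⟨l, hl⟩ := this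
    exact ⟨n ^ 2 * l + n * D * k + k ^ 2, by linear_combination n ^ 2 * hl⟩
  obtain ⟨k, hk⟩ := h4
  refine Q.int_of _ m k ?_ ?_
  · rw [cj_coord]; push_cast; ring
  · rw [nrm]
    have : (m / 2 : ℚ) ^ 2 - (n / 2) ^ 2 * D = k := by
      have : ((m ^ 2 - n ^ 2 * D : ℤ) : ℚ) = 4 * k := by rw [hk]; push_cast; ring
      push_cast at this; linarith
    rw [this]; simp

end QF
end B1
end ThetaIndep

namespace ThetaIndep
open NumberField

section B2
set_option linter.unusedSectionVars false
variable {F : Type} [Field F] [NumberField F] {D : ℤ} (Q : QF F D)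

lemma co_mul (x y : 𝓞 F) : ((x * y : 𝓞 F) : F) = (x : F) * (y : F) := rfl
lemma co_add (x y : 𝓞 F) : ((x + y : 𝓞 F) : F) = (x : F) + (y : F) := rfl
lemma co_int (k : ℤ) : (((k : ℤ) : 𝓞 F) : F) = (k : F) := map_intCast (algebraMap (𝓞 F) F) k
lemma co_nat (k : ℕ) : (((k : ℕ) : 𝓞 F) : F) = (k : F) := map_natCast (algebraMap (𝓞 F) F) k
lemma co_integral (x : 𝓞 F) : IsIntegral ℤ (x : F) := RingOfIntegers.isIntegral_coe x

namespace QF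

noncomputable def cjE : F ≃+* F :=
  RingEquiv.ofRingHom Q.cj Q.cj (by ext x; exact Q.cj_cj x) (by ext x; exact Q.cj_cj x)

noncomputable def cjR : 𝓞 F ≃+* 𝓞 F := RingOfIntegers.mapRingEquiv Q.cjE

lemma cjR_coe (x : 𝓞 F) : ((Q.cjR x : 𝓞 F) : F) = Q.cj (x : F) := rfl

lemma mul_cj (x : 𝓞 F) : ∃ k : ℕ, (x : F) * Q.cj x = k ∧ ‖Q.σ (x : F)‖ ^ 2 = (k : ℝ) := by
  obtain ⟨m, n, h, hx⟩ := Q.int_coord (co_integral x)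
  have h2 : IsIntegral ℤ ((x : F) * Q.cj x) :=
    (co_integral x).mul (Q.int_cj (co_integral x))
  rw [hx, nrm] at h2
  obtain ⟨t, ht⟩ := rat_int h2
  have h0 : (0:ℚ) ≤ t := by
    rw [← ht]
    have : (D : ℚ) < 0 := by exact_mod_cast Q.neg
    nlinarith [sq_nonneg (m / 2 : ℚ), mul_nonneg (sq_nonneg (n / 2 : ℚ)) (neg_nonneg.2 this.le)]
  have h0' : 0 ≤ t := by exact_mod_cast h0
  obtain ⟨k, rfl⟩ := Int.eq_ofNat_of_zero_le h0'
  refine ⟨k, ?_, ?_⟩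
  · rw [hx, nrm, ht]; simp
  · rw [hx, norm_σ, ht]; simp

lemma absNorm_eq {x : 𝓞 F} {k : ℕ} (h : (x : F) * Q.cj x = k) : Ideal.absNorm (Ideal.span {x}) = k := by
  have h1 : x * Q.cjR x = (k : 𝓞 F) := by
    apply RingOfIntegers.ext
    rw [co_mul, cjR_coe, h, co_nat]
  have h2 : Ideal.absNorm (Ideal.span {Q.cjR x}) = Ideal.absNorm (Ideal.span {x}) := by
    rw [Ideal.absNorm_span_singleton, Ideal.absNorm_span_singleton]
    congr 1
    exact Algebra.norm_eq_of_algEquiv (Q.cjR.toIntAlgEquiv) x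
  have h3 : Ideal.absNorm (Ideal.span {x}) ^ 2 = k ^ 2 := by
    rw [← absNorm_natCast Q.rank k, ← h1, ← Ideal.span_singleton_mul_span_singleton, map_mul, h2, sq]
  exact Nat.pow_left_injective two_ne_zero h3

lemma coe_absNorm (x : 𝓞 F) : ((Ideal.absNorm (Ideal.span {x}) : ℕ) : F) = x * Q.cj x := by
  obtain ⟨k, h, -⟩ := Q.mul_cj x
  rw [Q.absNorm_eq h, h]

lemma normCompat : NormCompat Q.σ := by
  intro x
  obtain ⟨k, h, h2⟩ := Q.mul_cj x
  rw [Q.absNorm_eq h, h2]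

lemma finite_units (Q : QF F D) : Finite (𝓞 F)ˣ := by
  have : ∀ u : (𝓞 F)ˣ, ∃ v : Set.Icc (-2 : ℤ) 2 × Set.Icc (-2 : ℤ) 2,
      ((u : 𝓞 F) : F) = (((v.1 : ℤ) / 2 : ℚ) : F) + (((v.2 : ℤ) / 2 : ℚ) : F) * Q.δ := by
    intro u
    obtain ⟨m, n, h, hx⟩ := Q.int_coord (co_integral (u : 𝓞 F))
    have h1 : Ideal.absNorm (Ideal.span {(u : 𝓞 F)}) = 1 := by
      rw [Ideal.span_singleton_eq_top.2 u.isUnit, Ideal.absNorm_top]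
    have h2 := Q.coe_absNorm (u : 𝓞 F)
    rw [h1, hx, nrm] at h2
    have h3 : (1:ℚ) = (m / 2 : ℚ) ^ 2 - (n / 2) ^ 2 * D := by
      exact_mod_cast h2
    have h4 : m ^ 2 - n ^ 2 * D = 4 := by
      have : (m : ℚ) ^ 2 - n ^ 2 * D = 4 := by linarith
      exact_mod_cast this
    have hD := Q.neg
    have hm : m ^ 2 ≤ 4 := by nlinarith [sq_nonneg n]
    have hn : n ^ 2 ≤ 4 := by nlinarith [sq_nonneg n, sq_nonneg m]
    exact ⟨⟨⟨m, by constructor <;> nlinarith⟩, ⟨n, by constructor <;> nlinarith⟩⟩, hx⟩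
  choose f hf using this
  apply Finite.of_injective f
  intro u v h
  apply Units.ext
  apply RingOfIntegers.ext
  rw [hf u, hf v, h]

/-- the element `(m + n δ)/2` -/
noncomputable def el (m n : ℤ) (h : 2 ∣ m - n * D) : 𝓞 F := ⟨_, Q.coord_int h⟩

lemma el_coe (m n : ℤ) (h : 2 ∣ m - n * D) :
    ((Q.el m n h : 𝓞 F) : F) = ((m / 2 : ℚ) : F) + ((n / 2 : ℚ) : F) * Q.δ := rfl

lemma el_inj {m n m' n' : ℤ} {h : 2 ∣ m - n * D} {h' : 2 ∣ m' - n' * D}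
    (e : Q.el m n h = Q.el m' n' h') : m = m' ∧ n = n' := by
  have e1 := congrArg (fun x : 𝓞 F => (x : F)) e
  simp only [el_coe] at e1
  obtain ⟨a, b⟩ := Q.coord_inj e1
  constructor
  · have : (m : ℚ) = m' := by linarith
    exact_mod_cast this
  · have : (n : ℚ) = n' := by linarith
    exact_mod_cast this

lemma exists_el (x : 𝓞 F) : ∃ m n h, x = Q.el m n h := by
  obtain ⟨m, n, h, hx⟩ := Q.int_coord (co_integral x)
  exact ⟨m, n, h, RingOfIntegers.ext hx⟩

lemma el_add {m n m' n' : ℤ} (h : 2 ∣ m - n * D) (h' : 2 ∣ m' - n' * D) (h'' : 2 ∣ (m + m') - (n + n') * D) :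
    Q.el m n h + Q.el m' n' h' = Q.el (m + m') (n + n') h'' := by
  apply RingOfIntegers.ext
  rw [co_add, el_coe, el_coe, el_coe]
  push_cast; ring

lemma el_smul {m n : ℤ} (k : ℤ) (h : 2 ∣ m - n * D) (h'' : 2 ∣ k * m - k * n * D) :
    k • Q.el m n h = Q.el (k * m) (k * n) h'' := by
  apply RingOfIntegers.ext
  rw [zsmul_eq_mul, co_mul, el_coe, el_coe, co_int]
  push_cast; ring

lemma el_eq {m n : ℤ} (h : 2 ∣ m - n * D) {x : F} (hx : x = ((m / 2 : ℚ) : F) + ((n / 2 : ℚ) : F) * Q.δ) :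
    ((Q.el m n h : 𝓞 F) : F) = x := by rw [hx, el_coe]

lemma el_absNorm {m n : ℤ} (h : 2 ∣ m - n * D) {k : ℕ} (hk : m ^ 2 - n ^ 2 * D = 4 * k) :
    Ideal.absNorm (Ideal.span {Q.el m n h}) = k := by
  apply Q.absNorm_eq
  rw [el_coe, nrm]
  have : (m / 2 : ℚ) ^ 2 - (n / 2) ^ 2 * D = k := by
    have : ((m ^ 2 - n ^ 2 * D : ℤ) : ℚ) = 4 * k := by rw [hk]; push_cast; ring
    push_cast at this; linarith
  rw [this]; simp

/-- ℤ-linear coordinates on the ring of integers -/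
noncomputable def ringMap : (Fin 2 → ℤ) →ₗ[ℤ] 𝓞 F where
  toFun v := Q.el (2 * v 0 + v 1 * D) (v 1) ⟨v 0, by ring⟩
  map_add' v w := by
    rw [Q.el_add (h'' := ⟨v 0 + w 0, by ring⟩)]
    congr 1
    simp; ring
  map_smul' k v := by
    rw [RingHom.id_apply, Q.el_smul (h'' := ⟨k * v 0, by ring⟩)]
    congr 1
    simp; ring

lemma ringMap_bij : Function.Bijective Q.ringMap := by
  constructor
  · intro v w h
    obtain ⟨h1, h2⟩ := Q.el_inj (h := ⟨v 0, by ring⟩) (h' := ⟨w 0, by ring⟩) h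
    ext i
    fin_cases i
    · simp only [Fin.zero_eta]
      rw [h2] at h1; linarith
    · exact h2
  · intro x
    obtain ⟨m, n, ⟨k, hk⟩, rfl⟩ := Q.exists_el x
    refine ⟨![k, n], ?_⟩
    have : m = 2 * k + n * D := by linarith
    subst this
    rfl

noncomputable def ringBasis : Module.Basis (Fin 2) ℤ (𝓞 F) :=
  Module.Basis.ofEquivFun (LinearEquiv.ofBijective Q.ringMap Q.ringMap_bij).symm

lemma ringBasis_repr (v : Fin 2 → ℤ) (i : Fin 2) : Q.ringBasis.repr (Q.ringMap v) i = v i := by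
  rw [← Module.Basis.equivFun_apply]
  unfold ringBasis
  rw [Module.Basis.equivFun_ofEquivFun]
  have : (LinearEquiv.ofBijective Q.ringMap Q.ringMap_bij).symm (Q.ringMap v) = v := by
    rw [LinearEquiv.symm_apply_eq]; rfl
  rw [this]

end QF

/-- the ideal attached to a form -/
structure Form (D : ℤ) where
  a : ℤ
  b : ℤ
  c : ℤ
  pos : 0 < a
  disc : b ^ 2 - 4 * a * c = D

namespace Form
variable (f : Form D)

def q (x y : ℤ) : ℤ := f.a * x ^ 2 + f.b * x * y + f.c * y ^ 2

lemma par (x y : ℤ) : 2 ∣ (2 * f.a * x + f.b * y) - y * D := by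
  have h := f.disc
  have : 2 ∣ f.b - f.b ^ 2 := by
    rcases Int.emod_two_eq_zero_or_one f.b with h | h
    · obtain ⟨k, hk⟩ : ∃ k, f.b = 2 * k := ⟨f.b / 2, by omega⟩
      exact ⟨k - 2 * k ^ 2, by rw [hk]; ring⟩
    · obtain ⟨k, hk⟩ : ∃ k, f.b = 2 * k + 1 := ⟨f.b / 2, by omega⟩
      exact ⟨-k - 2 * k ^ 2, by rw [hk]; ring⟩
  obtain ⟨k, hk⟩ := this
  exact ⟨f.a * x + k * y + 2 * f.a * f.c * y, by linear_combination y * hk + y * h⟩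

noncomputable def β (x y : ℤ) : 𝓞 F := Q.el (2 * f.a * x + f.b * y) y (f.par x y)

lemma β_inj {x y x' y' : ℤ} (h : f.β Q x y = f.β Q x' y') : x = x' ∧ y = y' := by
  obtain ⟨h1, h2⟩ := Q.el_inj h
  refine ⟨?_, h2⟩
  rw [h2] at h1
  have : f.a * (x - x') = 0 := by linarith
  rcases mul_eq_zero.1 this with h | h
  · exact absurd h f.pos.ne'
  · linarith

lemma q_nonneg (Q : QF F D) (x y : ℤ) : 0 ≤ f.q x y := by
  have h := f.disc
  have h1 : 4 * f.a * f.q x y = (2 * f.a * x + f.b * y) ^ 2 + (-D) * y ^ 2 := by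
    unfold q; linear_combination (-y ^ 2) * h
  have h2 : 0 ≤ 4 * f.a * f.q x y := by
    rw [h1]; have := Q.neg; nlinarith [sq_nonneg (2 * f.a * x + f.b * y), mul_nonneg (by linarith : 0 ≤ -D) (sq_nonneg y)]
  have := f.pos
  by_contra hneg
  push Not at hneg
  nlinarith

lemma β_absNorm (x y : ℤ) :
    (Ideal.absNorm (Ideal.span {f.β Q x y}) : ℤ) = f.a * f.q x y := by
  obtain ⟨k, hk⟩ := Int.eq_ofNat_of_zero_le (mul_nonneg f.pos.le (f.q_nonneg Q x y))
  have : Ideal.absNorm (Ideal.span {f.β Q x y}) = k := by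
    apply Q.el_absNorm
    have h := f.disc
    have h2 : 4 * (f.a * f.q x y) = 4 * k := by rw [hk]
    rw [← h2]; unfold q; linear_combination (y ^ 2) * h
  rw [this, hk]

noncomputable def idealMap : (Fin 2 → ℤ) →ₗ[ℤ] 𝓞 F where
  toFun v := f.β Q (v 0) (v 1)
  map_add' v w := by
    unfold β
    rw [Q.el_add (h'' := by
      have := f.par (v 0 + w 0) (v 1 + w 1)
      ring_nf at this ⊢; exact this)]
    congr 1
    simp; ring
  map_smul' k v := by
    unfold β
    rw [RingHom.id_apply, Q.el_smul (h'' := by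
      have := f.par (k * v 0) (k * v 1)
      ring_nf at this ⊢; exact this)]
    congr 1
    simp; ring

noncomputable def idl : Ideal (𝓞 F) where
  carrier := Set.range (fun v : ℤ × ℤ => f.β Q v.1 v.2)
  add_mem' := by
    rintro _ _ ⟨v, rfl⟩ ⟨w, rfl⟩
    exact ⟨(v.1 + w.1, v.2 + w.2), (f.idealMap Q).map_add ![v.1, v.2] ![w.1, w.2]⟩
  zero_mem' := ⟨(0, 0), (f.idealMap Q).map_zero⟩
  smul_mem' := by
    rintro r _ ⟨v, rfl⟩
    obtain ⟨m, n, h, rfl⟩ := Q.exists_el r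
    have hb := f.par 0 1
    obtain ⟨k, hk⟩ : 2 ∣ m - n * f.b := by
      obtain ⟨k1, h1⟩ := h
      obtain ⟨k2, h2⟩ := hb
      exact ⟨k1 - n * k2, by linear_combination h1 - n * h2⟩
    refine ⟨(k * v.1 - f.c * n * v.2, (k + n * f.b) * v.2 + n * f.a * v.1), ?_⟩
    obtain rfl : m = n * f.b + 2 * k := by linarith
    apply RingOfIntegers.ext
    simp only [β, smul_eq_mul, co_mul, Q.el_coe]
    have h2 := Q.hδ
    have h3 : (D : F) = (f.b : F) ^ 2 - 4 * f.a * f.c := by exact_mod_cast congrArg (Int.cast : ℤ → F) f.disc.symm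
    rw [h3] at h2
    push_cast
    linear_combination (-(n:F) * v.2 / 4) * h2

lemma mem_idl {x : 𝓞 F} : x ∈ f.idl Q ↔ ∃ u v, x = f.β Q u v := by
  constructor
  · rintro ⟨v, rfl⟩; exact ⟨_, _, rfl⟩
  · rintro ⟨u, v, rfl⟩; exact ⟨(u, v), rfl⟩

noncomputable def idealMap' : (Fin 2 → ℤ) →ₗ[ℤ] f.idl Q :=
  LinearMap.codRestrict ((f.idl Q).restrictScalars ℤ) (f.idealMap Q) (fun v => (f.mem_idl Q).2 ⟨v 0, v 1, rfl⟩)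

lemma idealMap'_bij : Function.Bijective (f.idealMap' Q) := by
  constructor
  · intro v w h
    obtain ⟨h1, h2⟩ := f.β_inj Q (congrArg (fun x : f.idl Q => (x : 𝓞 F)) h)
    ext i
    fin_cases i
    · exact h1
    · exact h2
  · rintro ⟨x, hx⟩
    obtain ⟨u, v, rfl⟩ := (f.mem_idl Q).1 hx
    exact ⟨![u, v], rfl⟩

noncomputable def idealBasis : Module.Basis (Fin 2) ℤ (f.idl Q) :=
  Module.Basis.ofEquivFun (LinearEquiv.ofBijective (f.idealMap' Q) (f.idealMap'_bij Q)).symm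

lemma idealBasis_apply (i : Fin 2) :
    ((f.idealBasis Q i : f.idl Q) : 𝓞 F) = f.idealMap Q (Pi.single i 1) := by
  unfold idealBasis
  rw [Module.Basis.coe_ofEquivFun]
  rfl

lemma absNorm_idl : (Ideal.absNorm (f.idl Q) : ℤ) = f.a := by
  rw [← Ideal.natAbs_det_basis_change Q.ringBasis (f.idl Q) (f.idealBasis Q)]
  obtain ⟨k, hk⟩ := f.par 0 1
  have e0 : ((f.idealBasis Q 0 : f.idl Q) : 𝓞 F) = Q.ringMap ![f.a, 0] := by
    rw [idealBasis_apply]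
    change Q.el _ _ (f.par _ _) = Q.el _ _ ⟨_, by ring⟩
    congr 1
    simp
  have e1 : ((f.idealBasis Q 1 : f.idl Q) : 𝓞 F) = Q.ringMap ![k, 1] := by
    rw [idealBasis_apply]
    change Q.el _ _ (f.par _ _) = Q.el _ _ ⟨_, by ring⟩
    congr 1
    simp
    linarith
  rw [Module.Basis.det_apply, Matrix.det_fin_two]
  simp only [Module.Basis.toMatrix_apply, Function.comp, e0, e1, QF.ringBasis_repr]
  simp [f.pos.le]

lemma idl_ne_bot : f.idl Q ≠ ⊥ := by
  intro h
  have := f.absNorm_idl Q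
  rw [h] at this
  simp at this
  exact f.pos.ne this

lemma card_form {m : ℕ} (hm : 1 ≤ m) :
    Nat.card {v : ℤ × ℤ // f.q v.1 v.2 = m} = Nat.card (𝓞 F)ˣ *
      Nat.card {J : Ideal (𝓞 F) // Ideal.absNorm J = m ∧ cl J = (cl (f.idl Q))⁻¹} := by
  rw [← card_rep (f.idl_ne_bot Q) hm]
  have key : ∀ v : ℤ × ℤ, f.q v.1 v.2 = m ↔
      Ideal.absNorm (Ideal.span {f.β Q v.1 v.2}) = Ideal.absNorm (f.idl Q) * m := by
    intro v
    rw [← @Nat.cast_inj ℤ, β_absNorm, Nat.cast_mul, absNorm_idl]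
    constructor
    · intro h; rw [h]
    · intro h; exact mul_left_cancel₀ f.pos.ne' h
  apply Nat.card_congr
  refine Equiv.ofBijective (fun v => ⟨f.β Q v.1.1 v.1.2, (f.mem_idl Q).2 ⟨_, _, rfl⟩, (key v.1).1 v.2⟩) ⟨?_, ?_⟩
  · rintro ⟨v, hv⟩ ⟨w, hw⟩ h
    obtain ⟨h1, h2⟩ := f.β_inj Q (congrArg Subtype.val h)
    exact Subtype.ext (Prod.ext h1 h2)
  · rintro ⟨x, hx, hx2⟩
    obtain ⟨u, v, rfl⟩ := (f.mem_idl Q).1 hx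
    exact ⟨⟨(u, v), (key (u, v)).2 hx2⟩, rfl⟩

end Form
end B2
end ThetaIndep

namespace ThetaIndep
open NumberField

section B3
set_option linter.unusedSectionVars false
variable {F : Type} [Field F] [NumberField F] {D : ℤ}

lemma ideal_cube {I A B : Ideal (𝓞 F)} (hI : I ≠ ⊥) (hA : A ≠ ⊥)
    (h : ∀ x ∈ I, Ideal.span {x} ^ 3 * B ≤ A) : I ^ 3 * B ≤ A := by
  by_contra hc
  set C := I ^ 3 * B ⊔ A with hC
  have hC0 : C ≠ ⊥ := fun h0 => hA (le_bot_iff.1 (h0 ▸ le_sup_right))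
  obtain ⟨A', hA'⟩ : C ∣ A := Ideal.dvd_iff_le.2 le_sup_right
  obtain ⟨B', hB'⟩ : C ∣ I ^ 3 * B := Ideal.dvd_iff_le.2 le_sup_left
  have htop : B' ⊔ A' = ⊤ := by
    have h1 : C * (B' ⊔ A') = C * ⊤ := by
      rw [Ideal.mul_sup, ← hA', ← hB', Ideal.mul_top]
    exact mul_left_cancel₀ hC0 h1
  have hAt : A' ≠ ⊤ := by
    intro h1
    rw [h1, Ideal.mul_top] at hA'
    exact hc (hA' ▸ le_sup_left)
  obtain ⟨M, hM, hAM⟩ := Ideal.exists_le_maximal A' hAt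
  have hBM : ¬ B' ≤ M := by
    intro h1
    exact hM.ne_top (top_le_iff.1 (htop ▸ sup_le h1 hAM))
  have hlt : ¬ I ≤ I * M := by
    intro h1
    have h2 : I * M = I * ⊤ := by rw [Ideal.mul_top]; exact le_antisymm Ideal.mul_le_left h1
    exact hM.ne_top (mul_left_cancel₀ hI h2)
  obtain ⟨x, hx, hxM⟩ := Set.not_subset.1 hlt
  obtain ⟨J, hJ⟩ : I ∣ Ideal.span {x} := by rwa [Ideal.dvd_span_singleton]
  have hJM : ¬ J ≤ M := by
    intro h1
    apply hxM
    have : x ∈ Ideal.span {x} := Ideal.mem_span_singleton_self x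
    rw [hJ] at this
    exact Ideal.mul_mono_right h1 this
  have h3 := h x hx
  have h4 : Ideal.span {x} ^ 3 * B = C * (J ^ 3 * B') := by
    rw [hJ, mul_pow, mul_assoc, mul_comm (J ^ 3), ← mul_assoc, hB', mul_assoc, mul_comm B']
  rw [h4, hA'] at h3
  have h5 : J ^ 3 * B' ≤ A' := by
    rw [← Ideal.dvd_iff_le] at h3 ⊢
    exact (mul_dvd_mul_iff_left hC0).1 h3
  have h6 := (hM.isPrime.mul_le).1 (h5.trans hAM)
  rcases h6 with h6 | h6
  · exact hJM ((Ideal.IsPrime.pow_le_iff (by norm_num)).1 h6)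
  · exact hBM h6

/-- relation between d, g and D -/
def Par (d g D : ℤ) : Prop :=
  (g = 1 ∧ D = -3 * d ∧ ¬ (3:ℤ) ∣ d) ∨ (g = 3 ∧ d = -3 * D ∧ ¬ (3:ℤ) ∣ D)

lemma Par.rel {d g D : ℤ} (h : Par d g D) : g ^ 2 * D = -3 * d := by
  rcases h with ⟨rfl, rfl, -⟩ | ⟨rfl, rfl, -⟩ <;> ring

lemma Par.gpos {d g D : ℤ} (h : Par d g D) : 0 < g := by
  rcases h with ⟨rfl, rfl, -⟩ | ⟨rfl, rfl, -⟩ <;> norm_num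

lemma par2 {e N I N' I' : ℤ} (h : 2 ∣ N ^ 2 + e * I ^ 2) (h' : 2 ∣ N' ^ 2 + e * I' ^ 2) :
    2 ∣ N * N' + e * (I * I') := by
  rw [← even_iff_two_dvd] at *
  simp only [Int.even_add, Int.even_mul, Int.even_pow] at *
  tauto

lemma integ {d g D N I N' I' q q' : ℤ} (hp : Par d g D)
    (h : 27 * N ^ 2 + d * I ^ 2 = 4 * g ^ 3 * q ^ 3)
    (h' : 27 * N' ^ 2 + d * I' ^ 2 = 4 * g ^ 3 * q' ^ 3) :
    2 * g ^ 3 ∣ 27 * (N * N') + d * (I * I') := by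
  rcases hp with ⟨rfl, rfl, -⟩ | ⟨rfl, rfl, h3⟩
  · have := par2 (e := d) (N := N) (I := I) (N' := N') (I' := I') (by omega) (by omega)
    omega
  · have key : ∀ N I q : ℤ, 27 * N ^ 2 + (-3 * D) * I ^ 2 = 4 * 3 ^ 3 * q ^ 3 → 3 ∣ I := by
      intro N I q h
      have : 3 ∣ D * I ^ 2 := ⟨3 * N ^ 2 - 12 * q ^ 3, by linarith⟩
      rcases Int.prime_three.dvd_or_dvd this with h | h
      · exact absurd h h3
      · exact Int.prime_three.dvd_of_dvd_pow h
    obtain ⟨J, rfl⟩ := key _ _ _ h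
    obtain ⟨J', rfl⟩ := key _ _ _ h'
    have e1 : N ^ 2 + (-D) * J ^ 2 = 4 * q ^ 3 := by linarith
    have e2 : N' ^ 2 + (-D) * J' ^ 2 = 4 * q' ^ 3 := by linarith
    obtain ⟨k, hk⟩ := par2 (e := -D) (N := N) (I := J) (N' := N') (I' := J') ⟨2 * q ^ 3, by linarith⟩
      ⟨2 * q' ^ 3, by linarith⟩
    exact ⟨k, by linear_combination 27 * hk⟩

/-- the element `(27 N + 3 g I δ)/2` -/
noncomputable def alp (Q : QF F D) (g N I : ℤ) : F :=
  (((27 * N) / 2 : ℚ) : F) + (((3 * g * I) / 2 : ℚ) : F) * Q.δ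

lemma alp_cj (Q : QF F D) (g N I : ℤ) : Q.cj (alp Q g N I) = alp Q g N (-I) := by
  unfold alp
  rw [Q.cj_coord]; push_cast; ring

lemma alp_mul (Q : QF F D) {d g : ℤ} (hp : Par d g D) (N I N' I' : ℤ) :
    alp Q g N I * alp Q g N' I' = 27 * ((((27 * N * N' - d * I * I') / 4 : ℚ) : F) +
      (((3 * g * (N * I' + N' * I)) / 4 : ℚ) : F) * Q.δ) := by
  have h1 : (g : F) ^ 2 * D = -3 * d := by exact_mod_cast congrArg (Int.cast : ℤ → F) hp.rel
  have h2 := Q.hδ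
  unfold alp
  push_cast
  linear_combination (9 * (g:F) ^ 2 * I * I' / 4) * h2 + (9 * (I:F) * I' / 4) * h1

lemma alp_norm (Q : QF F D) {d g q : ℤ} (hp : Par d g D) {N I : ℤ}
    (h : 27 * N ^ 2 + d * I ^ 2 = 4 * g ^ 3 * q ^ 3) :
    alp Q g N I * alp Q g N (-I) = 27 * g ^ 3 * q ^ 3 := by
  rw [alp_mul Q hp]
  have h1 : (27 : F) * N ^ 2 + d * I ^ 2 = 4 * g ^ 3 * q ^ 3 := by
    exact_mod_cast congrArg (Int.cast : ℤ → F) h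
  push_cast
  linear_combination (27 / 4 : F) * h1

lemma kap (Q : QF F D) {d g q q' : ℤ} (hp : Par d g D) {N I N' I' : ℤ}
    (hq : 0 ≤ q) (hq' : 0 ≤ q')
    (h : 27 * N ^ 2 + d * I ^ 2 = 4 * g ^ 3 * q ^ 3)
    (h' : 27 * N' ^ 2 + d * I' ^ 2 = 4 * g ^ 3 * q' ^ 3) :
    ∃ κ : 𝓞 F, 27 * (g : F) ^ 3 * κ = alp Q g N I * alp Q g N' I' ∧
      (κ : F) * Q.cj κ = ((q * q' : ℤ) : F) ^ 3 ∧
      (Ideal.absNorm (Ideal.span {κ}) : ℤ) = (q * q') ^ 3 := by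
  obtain ⟨t, ht⟩ := integ (N' := N') (I' := -I') (q' := q') hp h (by rw [neg_sq]; exact h')
  have hg : (g : F) ≠ 0 := by exact_mod_cast hp.gpos.ne'
  have h27 : 27 * (g : F) ^ 3 ≠ 0 := mul_ne_zero (by norm_num) (pow_ne_zero _ hg)
  set x : F := (alp Q g N I * alp Q g N' I') / (27 * (g : F) ^ 3) with hx
  have hcx : Q.cj x = (alp Q g N (-I) * alp Q g N' (-I')) / (27 * (g : F) ^ 3) := by
    rw [hx, map_div₀, map_mul, alp_cj, alp_cj, map_mul, map_pow, map_intCast, map_ofNat]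
  have htr : x + Q.cj x = t := by
    rw [hcx, hx, alp_mul Q hp, alp_mul Q hp, ← add_div, div_eq_iff h27]
    have h1 : (27 : F) * (N * N') + d * (I * (-I')) = 2 * g ^ 3 * t := by
      exact_mod_cast congrArg (Int.cast : ℤ → F) ht
    push_cast
    linear_combination (27 / 2 : F) * h1
  have hnm : x * Q.cj x = ((q * q' : ℤ) : F) ^ 3 := by
    rw [hcx, hx, div_mul_div_comm, div_eq_iff (mul_ne_zero h27 h27)]
    have e1 := alp_norm Q hp h
    have e2 := alp_norm Q hp h'
    push_cast
    linear_combination (alp Q g N' I' * alp Q g N' (-I')) * e1 + (27 * (g : F) ^ 3 * q ^ 3) * e2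
  have hIntg : IsIntegral ℤ x := Q.int_of x t ((q * q') ^ 3) htr (by rw [hnm]; push_cast; ring)
  obtain ⟨k, hk⟩ := Int.eq_ofNat_of_zero_le (pow_nonneg (mul_nonneg hq hq') 3)
  refine ⟨⟨x, hIntg⟩, ?_, hnm, ?_⟩
  · change 27 * (g : F) ^ 3 * x = _
    rw [hx]; field_simp
  · rw [hk]
    congr 1
    apply Q.absNorm_eq
    change x * Q.cj x = _
    rw [hnm]
    have : ((((q * q') ^ 3 : ℤ)) : F) = k := by rw [hk]; simp
    rw [← this]; push_cast; ring

/-- cubic data -/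
structure CD (Q : QF F D) (d g : ℤ) where
  f : Form D
  N : ℤ → ℤ → ℤ
  I : ℤ → ℤ → ℤ
  rel : ∀ x y, 27 * N x y ^ 2 + d * I x y ^ 2 = 4 * g ^ 3 * f.q x y ^ 3
  cub : ∀ x y, alp Q g (N x y) (I x y) * (f.a : F) ^ 3 =
    alp Q g (N 1 0) (I 1 0) * (f.β Q x y : F) ^ 3

lemma Form.q10 (f : Form D) : f.q 1 0 = f.a := by unfold Form.q; ring
lemma Form.q01 (f : Form D) : f.q 0 1 = f.c := by unfold Form.q; ring
lemma Form.q11 (f : Form D) : f.q 1 1 = f.a + f.b + f.c := by unfold Form.q; ring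

theorem torsion (Q : QF F D) {d g : ℤ} (hp : Par d g D) (A A' : CD Q d g) :
    cl (A.f.idl Q) ^ 3 * cl (A'.f.idl Q) ^ 3 = 1 := by
  have hK := fun x y z w => kap Q hp (A.f.q_nonneg Q x y) (A'.f.q_nonneg Q z w) (A.rel x y) (A'.rel z w)
  obtain ⟨κ, hκ, hκn, hκa⟩ := hK 1 0 1 0
  rw [A.f.q10, A'.f.q10] at hκn hκa
  have hg : (g : F) ≠ 0 := by exact_mod_cast hp.gpos.ne'
  have h27 : 27 * (g : F) ^ 3 ≠ 0 := mul_ne_zero (by norm_num) (pow_ne_zero _ hg)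
  have ha : ((A.f.a * A'.f.a : ℤ) : F) ^ 3 ≠ 0 := by
    have := A.f.pos.ne'
    have := A'.f.pos.ne'
    apply pow_ne_zero
    exact_mod_cast mul_ne_zero (A.f.pos.ne') (A'.f.pos.ne')
  have hκ0 : (κ : F) ≠ 0 := by
    intro h0; rw [h0, zero_mul] at hκn; exact ha hκn.symm
  have key : ∀ x y z w, ∃ m : 𝓞 F, A.f.β Q x y ^ 3 * A'.f.β Q z w ^ 3 = Q.cjR κ * m := by
    intro x y z w
    obtain ⟨m, hm, -, -⟩ := hK x y z w
    refine ⟨m, ?_⟩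
    apply RingOfIntegers.ext
    have e : ((A.f.β Q x y ^ 3 * A'.f.β Q z w ^ 3 : 𝓞 F) : F) =
      (A.f.β Q x y : F) ^ 3 * (A'.f.β Q z w : F) ^ 3 := rfl
    rw [e, co_mul, Q.cjR_coe]
    apply mul_left_cancel₀ hκ0
    apply mul_left_cancel₀ h27
    have c1 := A.cub x y
    have c2 := A'.cub z w
    push_cast at hκn
    linear_combination ((A.f.β Q x y : F) ^ 3 * (A'.f.β Q z w : F) ^ 3) * hκ
      - (27 * (g : F) ^ 3 * m) * hκn - ((A.f.a : F) * A'.f.a) ^ 3 * hm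
      - (alp Q g (A'.N 1 0) (A'.I 1 0) * (A'.f.β Q z w : F) ^ 3) * c1
      - (alp Q g (A.N x y) (A.I x y) * (A.f.a : F) ^ 3) * c2
  have hκ0' : Q.cjR κ ≠ 0 := by
    intro h0
    apply hκ0
    have : κ = 0 := Q.cjR.injective (by rw [h0, map_zero])
    rw [this]; rfl
  have hspan : Ideal.span {Q.cjR κ} ≠ ⊥ := by
    rwa [Ne, Ideal.span_singleton_eq_bot]
  have step1 : ∀ y ∈ A'.f.idl Q, A.f.idl Q ^ 3 * Ideal.span {y} ^ 3 ≤ Ideal.span {Q.cjR κ} := by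
    intro y hy
    refine ideal_cube (A.f.idl_ne_bot Q) hspan ?_
    intro x hx
    obtain ⟨u, v, rfl⟩ := (A.f.mem_idl Q).1 hx
    obtain ⟨z, w, rfl⟩ := (A'.f.mem_idl Q).1 hy
    obtain ⟨m, hm⟩ := key u v z w
    rw [Ideal.span_singleton_pow, Ideal.span_singleton_pow, Ideal.span_singleton_mul_span_singleton, hm,
      Ideal.span_singleton_le_span_singleton]
    exact Dvd.intro _ rfl
  have step2 : A'.f.idl Q ^ 3 * A.f.idl Q ^ 3 ≤ Ideal.span {Q.cjR κ} := by
    refine ideal_cube (A'.f.idl_ne_bot Q) hspan ?_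
    intro y hy
    rw [mul_comm]; exact step1 y hy
  obtain ⟨T, hT⟩ := Ideal.dvd_iff_le.2 step2
  have hn : Ideal.absNorm (Ideal.span {Q.cjR κ}) = Ideal.absNorm (Ideal.span {κ}) := by
    obtain ⟨k, hk, -⟩ := Q.mul_cj κ
    rw [Q.absNorm_eq hk]
    apply Q.absNorm_eq
    rw [Q.cjR_coe, Q.cj_cj, mul_comm, hk]
  have hT1 : Ideal.absNorm T = 1 := by
    have h1 := congrArg (fun J => (Ideal.absNorm J : ℤ)) hT
    simp only [map_mul, map_pow, Nat.cast_mul, Nat.cast_pow, Form.absNorm_idl, hn, hκa] at h1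
    have h2 : (A.f.a * A'.f.a) ^ 3 * (Ideal.absNorm T : ℤ) = (A.f.a * A'.f.a) ^ 3 * 1 := by
      rw [← h1]; ring
    have h3 := mul_left_cancel₀ (pow_ne_zero 3 (mul_ne_zero (A.f.pos.ne') (A'.f.pos.ne'))) h2
    exact_mod_cast h3
  rw [Ideal.absNorm_eq_one_iff] at hT1
  rw [hT1, Ideal.mul_top] at hT
  have hb := A.f.idl_ne_bot Q
  have hb' := A'.f.idl_ne_bot Q
  have hcp : ∀ J : Ideal (𝓞 F), J ≠ ⊥ → cl (J ^ 3) = cl J ^ 3 := by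
    intro J hJ
    rw [pow_succ, pow_two, cl_mul (mul_ne_zero hJ hJ) hJ, cl_mul hJ hJ, pow_succ, pow_two]
  rw [← hcp _ hb, ← hcp _ hb', mul_comm, ← cl_mul (pow_ne_zero _ hb') (pow_ne_zero _ hb), hT, cl_span]

end B3
end ThetaIndep

namespace ThetaIndep
open NumberField

section B4
set_option linter.unusedSectionVars false
variable {F : Type} [Field F] [NumberField F] {D : ℤ}

lemma Form.prim (f : Form D) (hD : FD D) (p : ℤ) (hp : Prime p) (ha : p ∣ f.a) (hb : p ∣ f.b)
    (hc : p ∣ f.c) : False := by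
  obtain ⟨a, ha⟩ := ha
  obtain ⟨b, hb⟩ := hb
  obtain ⟨c, hc⟩ := hc
  have h := f.disc
  rw [ha, hb, hc] at h
  have hDp : D = p * p * (b ^ 2 - 4 * a * c) := by rw [← h]; ring
  rcases hD with ⟨-, hs⟩ | ⟨h4, hs, hs4⟩
  · exact hp.not_unit (hs p ⟨_, hDp⟩)
  · obtain ⟨s, hs1⟩ : ∃ s, D = 4 * s := ⟨D / 4, by omega⟩
    have hs2 : D / 4 = s := by omega
    rw [hs2] at hs hs4
    by_cases h2 : p ∣ 2
    · have hpp : p * p = 4 := by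
        have hpa : p.natAbs = 2 := by
          have h3 : p.natAbs ∣ 2 := by
            have := Int.natAbs_dvd_natAbs.2 h2
            simpa using this
          exact (Nat.prime_dvd_prime_iff_eq (Int.prime_iff_natAbs_prime.1 hp) Nat.prime_two).1 h3
        have := Int.natAbs_mul_self (a := p)
        rw [hpa] at this
        push_cast at this; linarith
      rw [hpp] at hDp
      have e : s = b ^ 2 - 4 * (a * c) := by linarith
      rcases Int.emod_two_eq_zero_or_one b with hb2 | hb2
      · obtain ⟨k, rfl⟩ : ∃ k, b = 2 * k := ⟨b / 2, by omega⟩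
        ring_nf at e; omega
      · obtain ⟨k, rfl⟩ : ∃ k, b = 2 * k + 1 := ⟨b / 2, by omega⟩
        ring_nf at e; omega
    · have h5 : IsCoprime (p * p) 4 := by
        have : IsCoprime p 2 := (Prime.coprime_iff_not_dvd hp).2 h2
        have h6 := (IsCoprime.mul_right this this)
        norm_num at h6
        exact IsCoprime.mul_left h6 h6
      have h6 : p * p ∣ 4 * s := ⟨_, by rw [← hs1]; exact hDp⟩
      exact hp.not_unit (hs p (h5.dvd_of_dvd_mul_left h6))

lemma rat_of_cubes (f : Form D) (hD : FD D) (r : ℚ) {k1 k2 k3 : ℤ} (h1 : r * (f.a : ℚ) ^ 3 = k1)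
    (h2 : r * (f.c : ℚ) ^ 3 = k2) (h3 : r * ((f.a + f.b + f.c : ℤ) : ℚ) ^ 3 = k3) : ∃ t : ℤ, r = t := by
  have key : ∀ (x k : ℤ), r * (x : ℚ) ^ 3 = k → ((r.den : ℕ) : ℤ) ∣ x ^ 3 := by
    intro x k h
    have hn : r.num * x ^ 3 = r.den * k := by
      have : (r.num : ℚ) = r * r.den := (Rat.mul_den_eq_num r).symm
      have h2 : (r.num : ℚ) * x ^ 3 = r.den * k := by rw [this, ← h]; ring
      exact_mod_cast h2
    have hc : IsCoprime (r.den : ℤ) r.num := by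
      rw [Int.isCoprime_iff_nat_coprime]
      simpa using r.reduced.symm
    exact hc.dvd_of_dvd_mul_left ⟨k, hn⟩
  by_cases hd : r.den = 1
  · exact ⟨r.num, (Rat.coe_int_num_of_den_eq_one hd).symm⟩
  · exfalso
    obtain ⟨p, hp, hpd⟩ := Nat.exists_prime_and_dvd hd
    have hp' : Prime (p : ℤ) := Nat.prime_iff_prime_int.1 hp
    have hpd' : (p : ℤ) ∣ r.den := by exact_mod_cast hpd
    have a1 := hp'.dvd_of_dvd_pow (hpd'.trans (key _ _ h1))
    have a2 := hp'.dvd_of_dvd_pow (hpd'.trans (key _ _ h2))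
    have a3 := hp'.dvd_of_dvd_pow (hpd'.trans (key _ _ h3))
    refine f.prim hD p hp' a1 ?_ a2
    have : f.b = (f.a + f.b + f.c) - f.a - f.c := by ring
    rw [this]
    exact (a3.sub a1).sub a2

lemma unit_lemma (Q : QF F D) {d g : ℤ} (hp : Par d g D) (hd1 : d ≠ 1) (hd12 : d ≠ 12)
    (f : Form D) (N I N' I' : ℤ → ℤ → ℤ)
    (rel : ∀ x y, 27 * N x y ^ 2 + d * I x y ^ 2 = 4 * g ^ 3 * f.q x y ^ 3)
    (rel' : ∀ x y, 27 * N' x y ^ 2 + d * I' x y ^ 2 = 4 * g ^ 3 * f.q x y ^ 3)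
    (u : F) (hu : ∀ x y, alp Q g (N' x y) (I' x y) = u * alp Q g (N x y) (I x y)) :
    ∃ ε : ℤ, (ε = 1 ∨ ε = -1) ∧ ∀ x y, N' x y = ε * N x y := by
  have hg : (g : F) ≠ 0 := by exact_mod_cast hp.gpos.ne'
  have h27 : 27 * (g : F) ^ 3 ≠ 0 := mul_ne_zero (by norm_num) (pow_ne_zero _ hg)
  have ha : (f.a : F) ≠ 0 := by exact_mod_cast f.pos.ne'
  have hu' : ∀ x y, alp Q g (N' x y) (-I' x y) = Q.cj u * alp Q g (N x y) (-I x y) := by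
    intro x y
    rw [← alp_cj, ← alp_cj, hu, map_mul]
  have hnorm : u * Q.cj u = 1 := by
    have e1 := alp_norm Q hp (rel 1 0)
    have e2 := alp_norm Q hp (rel' 1 0)
    rw [hu, hu', f.q10] at e2
    rw [f.q10] at e1
    have h0 : 27 * (g : F) ^ 3 * f.a ^ 3 ≠ 0 := mul_ne_zero h27 (pow_ne_zero _ ha)
    apply mul_right_cancel₀ h0
    linear_combination e2 - u * Q.cj u * e1
  obtain ⟨p, r, rfl⟩ := Q.span u
  have htr : ∀ x y, ∃ t : ℤ, (2 * p) * ((f.q x y : ℤ) : ℚ) ^ 3 = t := by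
    intro x y
    obtain ⟨t, ht⟩ := integ hp (rel x y) (rel' x y)
    refine ⟨t, ?_⟩
    have e1 := alp_norm Q hp (rel x y)
    have e3 := alp_mul Q hp (N' x y) (I' x y) (N x y) (-I x y)
    have e4 := alp_mul Q hp (N' x y) (-I' x y) (N x y) (I x y)
    rw [hu] at e3
    rw [hu'] at e4
    rw [Q.cj_coord] at e4
    have h1 : (27 : F) * (N x y * N' x y) + d * (I x y * I' x y) = 2 * g ^ 3 * t := by
      exact_mod_cast congrArg (Int.cast : ℤ → F) ht
    have h2 : (2 * (p : F)) * (f.q x y : F) ^ 3 = t := by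
      apply mul_left_cancel₀ h27
      push_cast at e3 e4
      linear_combination e3 + e4 + (27 / 2 : F) * h1 - 2 * p * e1
    exact_mod_cast h2
  obtain ⟨t1, ht1⟩ := htr 1 0
  obtain ⟨t2, ht2⟩ := htr 0 1
  obtain ⟨t3, ht3⟩ := htr 1 1
  rw [f.q10] at ht1
  rw [f.q01] at ht2
  rw [f.q11] at ht3
  obtain ⟨t, ht⟩ := rat_of_cubes f Q.fd (2 * p) ht1 ht2 ht3
  have hIntg : IsIntegral ℤ ((p : F) + r * Q.δ) := by
    refine Q.int_of _ t 1 ?_ (by rw [hnorm]; simp)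
    rw [Q.cj_coord]
    have : 2 * (p : F) = t := by exact_mod_cast congrArg (Rat.cast : ℚ → F) ht
    linear_combination this
  obtain ⟨m, n, hmn, hx⟩ := Q.int_coord hIntg
  rw [hx, Q.nrm] at hnorm
  have h3 : (m / 2 : ℚ) ^ 2 - (n / 2) ^ 2 * D = 1 := by exact_mod_cast hnorm
  have h4 : m ^ 2 - n ^ 2 * D = 4 := by
    have : (m : ℚ) ^ 2 - n ^ 2 * D = 4 := by linarith
    exact_mod_cast this
  have hD := Q.neg
  have hDlt : D < -4 := by
    rcases Q.fd with ⟨hq, -⟩ | ⟨hq, -⟩ <;> rcases hp with ⟨-, h5, h6⟩ | ⟨-, h5, h6⟩ <;> omega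
  have hn0 : n = 0 := by
    by_contra hn
    have : 1 ≤ n ^ 2 := by
      have := sq_nonneg n
      have : n ^ 2 ≠ 0 := pow_ne_zero 2 hn
      omega
    nlinarith [sq_nonneg m]
  subst hn0
  have hm : (m - 2) * (m + 2) = 0 := by linarith
  have fin : ∀ ε : ℤ, m = 2 * ε → ∀ x y, N' x y = ε * N x y := by
    intro ε hε x y
    have h5 := hu x y
    have h6 := hu' x y
    rw [hx] at h5 h6
    rw [Q.cj_coord] at h6
    have h7 : (27 : F) * N' x y = 27 * ((ε : F) * N x y) := by
      have e : (m : F) = 2 * ε := by exact_mod_cast congrArg (Int.cast : ℤ → F) hε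
      unfold alp at h5 h6
      push_cast at h5 h6
      rw [e] at h5 h6
      linear_combination h5 + h6
    have h8 : (N' x y : F) = ε * N x y := mul_left_cancel₀ (by norm_num) h7
    exact_mod_cast h8
  rcases mul_eq_zero.1 hm with h | h
  · exact ⟨1, Or.inl rfl, fin 1 (by omega)⟩
  · exact ⟨-1, Or.inr rfl, fin (-1) (by omega)⟩

lemma Form.a_ne (f : Form D) : (f.a : F) ≠ 0 := by exact_mod_cast f.pos.ne'

lemma alp10_ne (Q : QF F D) {d g : ℤ} (hp : Par d g D) (A : CD Q d g) :
    alp Q g (A.N 1 0) (A.I 1 0) ≠ 0 := by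
  intro h0
  have := alp_norm Q hp (A.rel 1 0)
  have hg : (g : F) ≠ 0 := by exact_mod_cast hp.gpos.ne'
  rw [h0, zero_mul, A.f.q10] at this
  exact mul_ne_zero (mul_ne_zero (by norm_num) (pow_ne_zero _ hg)) (pow_ne_zero _ A.f.a_ne) this.symm

lemma absNorm_span_int (hF : Module.finrank ℚ F = 2) {a : ℤ} (ha : 0 < a) :
    (Ideal.absNorm (Ideal.span {(a : 𝓞 F)}) : ℤ) = a ^ 2 := by
  obtain ⟨k, rfl⟩ := Int.eq_ofNat_of_zero_le ha.le
  rw [Int.cast_natCast, absNorm_natCast hF]; push_cast; ring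

lemma absNorm_span_mul (x y : 𝓞 F) : Ideal.absNorm (Ideal.span {x * y}) =
    Ideal.absNorm (Ideal.span {x}) * Ideal.absNorm (Ideal.span {y}) := by
  rw [← Ideal.span_singleton_mul_span_singleton, map_mul]

lemma case_same (Q : QF F D) {d g : ℤ} (hp : Par d g D) (hd1 : d ≠ 1) (hd12 : d ≠ 12)
    (A A' : CD Q d g) (h : cl (A.f.idl Q) = cl (A'.f.idl Q)) :
    ∃ (ε u v : ℤ), (ε = 1 ∨ ε = -1) ∧ A'.f.q u v = A.f.q 1 0 ∧ A'.N u v = ε * A.N 1 0 := by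
  have hb := A.f.idl_ne_bot Q
  have hb' := A'.f.idl_ne_bot Q
  obtain ⟨J, hJ0, hJ, hJn, hJc⟩ := exists_conj Q.rank hb'
  obtain ⟨x, hx⟩ := (cl_eq_one_iff (mul_ne_zero hb hJ0)).1 (by
    rw [cl_mul hb hJ0, h, hJc, mul_inv_cancel])
  have hn' : ((Ideal.absNorm (A'.f.idl Q) : ℕ) : 𝓞 F) = (A'.f.a : 𝓞 F) := by
    rw [← A'.f.absNorm_idl Q]; simp
  rw [hn'] at hJ
  have hxn : (Ideal.absNorm (Ideal.span {x}) : ℤ) = A.f.a * A'.f.a := by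
    rw [← hx, map_mul, hJn, Nat.cast_mul, A.f.absNorm_idl, A'.f.absNorm_idl]
  have hx0 : x ≠ 0 := by
    rintro rfl
    rw [Set.singleton_zero, Ideal.span_zero] at hxn
    simp at hxn
    rcases hxn with h | h
    · exact A.f.pos.ne' h
    · exact A'.f.pos.ne' h
  have hx0' : (x : F) ≠ 0 := by
    intro h0; exact hx0 (RingOfIntegers.ext h0)
  have key : ∀ s t, ∃ w : ℤ × ℤ, (A'.f.a : 𝓞 F) * A.f.β Q s t = x * A'.f.β Q w.1 w.2 := by
    intro s t
    have h1 : (A'.f.a : 𝓞 F) * A.f.β Q s t ∈ Ideal.span {x} * A'.f.idl Q := by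
      rw [← hx, mul_assoc, mul_comm J, hJ, mul_comm]
      exact Ideal.mul_mem_mul (Ideal.mem_span_singleton_self _) ((A.f.mem_idl Q).2 ⟨s, t, rfl⟩)
    obtain ⟨z, hz, hz2⟩ := Ideal.mem_span_singleton_mul.1 h1
    obtain ⟨u, v, rfl⟩ := (A'.f.mem_idl Q).1 hz
    exact ⟨(u, v), hz2.symm⟩
  choose φ hφ using key
  have hq : ∀ s t, A'.f.q (φ s t).1 (φ s t).2 = A.f.q s t := by
    intro s t
    have h1 := congrArg (fun y => (Ideal.absNorm (Ideal.span {y}) : ℤ)) (hφ s t)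
    simp only [absNorm_span_mul, Nat.cast_mul, Form.β_absNorm, absNorm_span_int Q.rank A'.f.pos, hxn] at h1
    have h2 : A'.f.a ^ 2 * A.f.a ≠ 0 := mul_ne_zero (pow_ne_zero _ A'.f.pos.ne') A.f.pos.ne'
    apply mul_left_cancel₀ h2
    linear_combination -h1
  set ρ := alp Q g (A.N 1 0) (A.I 1 0) with hρ
  set ρ' := alp Q g (A'.N 1 0) (A'.I 1 0) with hρ'
  have hρ0 : ρ ≠ 0 := alp10_ne Q hp A
  obtain ⟨ε, hε, hN⟩ := unit_lemma Q hp hd1 hd12 A.f A.N A.I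
    (fun s t => A'.N (φ s t).1 (φ s t).2) (fun s t => A'.I (φ s t).1 (φ s t).2) A.rel
    (fun s t => by rw [← hq s t]; exact A'.rel _ _) (ρ' * A.f.a ^ 3 / (x ^ 3 * ρ)) (by
      intro s t
      have e0 : (A'.f.a : F) * (A.f.β Q s t : F) = x * (A'.f.β Q (φ s t).1 (φ s t).2 : F) := by
        have := congrArg (fun y : 𝓞 F => (y : F)) (hφ s t)
        simpa only [co_mul, co_int] using this
      have e1 := A.cub s t
      have e2 := A'.cub (φ s t).1 (φ s t).2
      rw [← hρ] at e1
      rw [← hρ'] at e2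
      have h2 : (A'.f.a : F) ≠ 0 := A'.f.a_ne
      rw [div_mul_eq_mul_div, eq_div_iff (mul_ne_zero (pow_ne_zero _ hx0') hρ0)]
      apply mul_left_cancel₀ (pow_ne_zero 3 h2)
      have e3 := congrArg (fun y => y ^ 3) e0
      simp only [mul_pow] at e3
      linear_combination (x : F) ^ 3 * ρ * e2 - ρ' * (A'.f.a : F) ^ 3 * e1 - ρ * ρ' * e3)
  exact ⟨ε, (φ 1 0).1, (φ 1 0).2, hε, hq 1 0, hN 1 0⟩

lemma conj_mem (Q : QF F D) (f : Form D) (x y x' y' : ℤ) :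
    (f.a : 𝓞 F) ∣ Q.cjR (f.β Q x y) * f.β Q x' y' := by
  have hb := f.par 0 1
  have hpar : 2 ∣ (2 * f.a * x * x' + f.b * (x * y' + x' * y) + 2 * f.c * y * y') - (x * y' - x' * y) * D := by
    obtain ⟨k, hk⟩ := hb
    have : f.b = D + 2 * k := by linarith
    rw [this]
    exact ⟨f.a * x * x' + D * x' * y + k * (x * y' + x' * y) + f.c * y * y', by ring⟩
  refine ⟨Q.el _ _ hpar, ?_⟩
  apply RingOfIntegers.ext
  rw [co_mul, co_mul, Q.cjR_coe, co_int]
  unfold Form.β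
  rw [Q.el_coe, Q.el_coe, Q.el_coe, Q.cj_coord]
  have h2 := Q.hδ
  have h3 : (D : F) = (f.b : F) ^ 2 - 4 * f.a * f.c := by
    exact_mod_cast congrArg (Int.cast : ℤ → F) f.disc.symm
  push_cast
  linear_combination (-(y:F) * y' / 4) * h2 - (y : F) * y' / 4 * h3

lemma case_inv (Q : QF F D) {d g : ℤ} (hp : Par d g D) (hd1 : d ≠ 1) (hd12 : d ≠ 12)
    (A A' : CD Q d g) (h : cl (A.f.idl Q) = (cl (A'.f.idl Q))⁻¹) :
    ∃ (ε u v : ℤ), (ε = 1 ∨ ε = -1) ∧ A'.f.q u v = A.f.q 1 0 ∧ A'.N u v = ε * A.N 1 0 := by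
  have hb := A.f.idl_ne_bot Q
  have hb' := A'.f.idl_ne_bot Q
  obtain ⟨x, hx⟩ := (cl_eq_one_iff (mul_ne_zero hb hb')).1 (by
    rw [cl_mul hb hb', h, inv_mul_cancel])
  have hxn : (Ideal.absNorm (Ideal.span {x}) : ℤ) = A.f.a * A'.f.a := by
    rw [← hx, map_mul, Nat.cast_mul, A.f.absNorm_idl, A'.f.absNorm_idl]
  have key : ∀ s t, ∃ w : ℤ × ℤ, x * Q.cjR (A.f.β Q s t) = (A.f.a : 𝓞 F) * A'.f.β Q w.1 w.2 := by
    intro s t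
    have h0 : Ideal.span {Q.cjR (A.f.β Q s t)} * A.f.idl Q ≤ Ideal.span {(A.f.a : 𝓞 F)} := by
      rw [Ideal.span_singleton_mul_le_iff]
      intro z hz
      obtain ⟨u, v, rfl⟩ := (A.f.mem_idl Q).1 hz
      exact Ideal.mem_span_singleton.2 (conj_mem Q A.f s t u v)
    have h1 : x * Q.cjR (A.f.β Q s t) ∈ Ideal.span {(A.f.a : 𝓞 F)} * A'.f.idl Q := by
      refine Ideal.mul_mono_left h0 ?_
      rw [mul_assoc, hx, mul_comm x]
      exact Ideal.mul_mem_mul (Ideal.mem_span_singleton_self _) (Ideal.mem_span_singleton_self _)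
    obtain ⟨z, hz, hz2⟩ := Ideal.mem_span_singleton_mul.1 h1
    obtain ⟨u, v, rfl⟩ := (A'.f.mem_idl Q).1 hz
    exact ⟨(u, v), hz2.symm⟩
  choose φ hφ using key
  have hcj : ∀ z : 𝓞 F, Ideal.absNorm (Ideal.span {Q.cjR z}) = Ideal.absNorm (Ideal.span {z}) := by
    intro z
    obtain ⟨k, hk, -⟩ := Q.mul_cj z
    rw [Q.absNorm_eq hk]
    apply Q.absNorm_eq
    rw [Q.cjR_coe, Q.cj_cj, mul_comm, hk]
  have hq : ∀ s t, A'.f.q (φ s t).1 (φ s t).2 = A.f.q s t := by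
    intro s t
    have h1 := congrArg (fun y => (Ideal.absNorm (Ideal.span {y}) : ℤ)) (hφ s t)
    simp only [absNorm_span_mul, Nat.cast_mul, Form.β_absNorm, absNorm_span_int Q.rank A.f.pos, hxn, hcj] at h1
    have h2 : A.f.a ^ 2 * A'.f.a ≠ 0 := mul_ne_zero (pow_ne_zero _ A.f.pos.ne') A'.f.pos.ne'
    apply mul_left_cancel₀ h2
    linear_combination -h1
  set ρ := alp Q g (A.N 1 0) (-A.I 1 0) with hρ
  set ρ' := alp Q g (A'.N 1 0) (A'.I 1 0) with hρ'
  have hρ0 : ρ ≠ 0 := by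
    rw [hρ, ← alp_cj]
    intro h0
    exact alp10_ne Q hp A ((map_eq_zero Q.cj).1 h0)
  obtain ⟨ε, hε, hN⟩ := unit_lemma Q hp hd1 hd12 A.f A.N (fun s t => -A.I s t)
    (fun s t => A'.N (φ s t).1 (φ s t).2) (fun s t => A'.I (φ s t).1 (φ s t).2)
    (fun s t => by rw [neg_sq]; exact A.rel s t)
    (fun s t => by rw [← hq s t]; exact A'.rel _ _) (ρ' * x ^ 3 / ((A'.f.a : F) ^ 3 * ρ)) (by
      intro s t
      have e0 : (x : F) * Q.cj (A.f.β Q s t : F) = (A.f.a : F) * (A'.f.β Q (φ s t).1 (φ s t).2 : F) := by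
        have := congrArg (fun y : 𝓞 F => (y : F)) (hφ s t)
        simpa only [co_mul, co_int, Q.cjR_coe] using this
      have e1 := congrArg Q.cj (A.cub s t)
      rw [map_mul, map_mul, alp_cj, alp_cj, map_pow, map_pow, map_intCast] at e1
      have e2 := A'.cub (φ s t).1 (φ s t).2
      rw [← hρ] at e1
      rw [← hρ'] at e2
      have h2 : (A.f.a : F) ≠ 0 := A.f.a_ne
      rw [div_mul_eq_mul_div, eq_div_iff (mul_ne_zero (pow_ne_zero _ A'.f.a_ne) hρ0)]
      apply mul_left_cancel₀ (pow_ne_zero 3 h2)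
      have e3 := congrArg (fun y => y ^ 3) e0
      simp only [mul_pow] at e3
      linear_combination (A.f.a : F) ^ 3 * ρ * e2 - ρ' * (x : F) ^ 3 * e1 - ρ * ρ' * e3)
  exact ⟨ε, (φ 1 0).1, (φ 1 0).2, hε, hq 1 0, hN 1 0⟩

end B4
end ThetaIndep

namespace ThetaIndep
section C1
open NumberField
variable {K : Type*} [Field K] [NumberField K]

/-- Three complex embeddings of a cubic field computing the trace. -/
theorem exists_emb (h3 : Module.finrank ℚ K = 3) :
    ∃ φ : Fin 3 → (K →+* ℂ), ∀ x : K,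
      ((Algebra.trace ℚ K x : ℚ) : ℂ) = φ 0 x + φ 1 x + φ 2 x := by
  have hc : Fintype.card (K →ₐ[ℚ] ℂ) = 3 := by rw [AlgHom.card]; exact h3
  let e : Fin 3 ≃ (K →ₐ[ℚ] ℂ) := (Fintype.equivFinOfCardEq hc).symm
  refine ⟨fun i => (e i : K →+* ℂ), fun x => ?_⟩
  have h := trace_eq_sum_embeddings (K := ℚ) (L := K) ℂ (x := x)
  rw [← Equiv.sum_comp e] at h
  rw [Fin.sum_univ_three] at h
  simpa using h

theorem det_emb (φ : Fin 3 → (K →+* ℂ)) (hφ : ∀ x : K,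
      ((Algebra.trace ℚ K x : ℚ) : ℂ) = φ 0 x + φ 1 x + φ 2 x)
    (b : Module.Basis (Fin 3) ℤ (𝓞 K)) :
    (Matrix.of (fun i j => φ i (b j : K))).det ^ 2 = ((discr K : ℤ) : ℂ) := by
  rw [← NumberField.discr_eq_discr K b, Algebra.discr_def]
  have : ((Algebra.traceMatrix ℤ b).det : ℂ) =
      ((Algebra.traceMatrix ℤ b).map (Int.castRingHom ℂ)).det := by
    rw [← RingHom.mapMatrix_apply, ← RingHom.map_det]; rfl
  rw [this, sq]
  conv_lhs => rw [← Matrix.det_transpose]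
  nth_rewrite 2 [← Matrix.det_transpose]
  rw [Matrix.transpose_transpose, ← Matrix.det_mul]
  congr 1
  ext i j
  rw [Matrix.mul_apply, Fin.sum_univ_three]
  simp only [Matrix.transpose_apply, Matrix.of_apply, Matrix.map_apply, Algebra.traceMatrix_apply,
    Algebra.traceForm_apply]
  have h1 := hφ ((b i * b j : 𝓞 K) : K)
  rw [← Algebra.coe_trace_int] at h1
  simpa using h1.symm

theorem real_discr (h3 : Module.finrank ℚ K = 3)
    (htr : ∀ (φ : K →+* ℂ) (x : K), (φ x).im = 0) : 20 < |discr K| := by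
  have : IsTotallyReal K := ⟨fun v => by
    by_contra hv
    rw [InfinitePlace.not_isReal_iff_isComplex] at hv
    obtain ⟨φ, hφ, -⟩ := hv
    apply hφ
    ext x
    apply Complex.conj_eq_iff_im.2 (htr φ x)⟩
  have h := NumberField.abs_discr_ge' K
  rw [IsTotallyReal.nrComplexPlaces_eq_zero, h3] at h
  norm_num [Nat.factorial] at h
  have : (20 : ℝ) < |(discr K : ℝ)| := by linarith
  exact_mod_cast this

/-- Basis of the trace zero module completed to a basis of the ring of integers. -/
theorem exists_basis (h3 : Module.finrank ℚ K = 3) :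
    ∃ (b : Module.Basis (Fin 3) ℤ (𝓞 K)) (k : ℤ), (k ∣ 3) ∧
      Algebra.trace ℤ (𝓞 K) (b 0) = k ∧ Algebra.trace ℤ (𝓞 K) (b 1) = 0 ∧
      Algebra.trace ℤ (𝓞 K) (b 2) = 0 := by
  let T : 𝓞 K →ₗ[ℤ] ℤ := Algebra.trace ℤ (𝓞 K)
  have hr : Module.finrank ℤ (𝓞 K) = 3 := by rw [RingOfIntegers.rank, h3]
  have h1 : T 1 = 3 := by
    have := Algebra.trace_algebraMap_of_basis (R := ℤ) (S := 𝓞 K) (Module.finBasis ℤ (𝓞 K)) 1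
    simp only [map_one, Fintype.card_fin, hr] at this
    simpa [T] using this
  obtain ⟨k, hk⟩ := (IsPrincipalIdealRing.principal (LinearMap.range T)).principal
  have hk3 : k ∣ 3 := by
    rw [← Ideal.mem_span_singleton]
    have : (3 : ℤ) ∈ LinearMap.range T := ⟨1, h1⟩
    rw [hk] at this
    exact this
  have hk0 : k ≠ 0 := by rintro rfl; norm_num at hk3
  obtain ⟨t, ht⟩ : k ∈ LinearMap.range T := by rw [hk]; exact Submodule.mem_span_singleton_self k
  let B0 := Module.finBasis ℤ (LinearMap.ker T)
  let B := Module.Basis.mkFinCons t B0 (by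
      intro c x hx hc
      have := congrArg T hc
      rw [map_add, map_smul, LinearMap.mem_ker.1 hx, ht, map_zero, smul_eq_mul, add_zero] at this
      exact (mul_eq_zero.1 this).resolve_right hk0) (by
      intro z
      have : T z ∈ LinearMap.range T := ⟨z, rfl⟩
      rw [hk] at this
      obtain ⟨c, hc⟩ := Submodule.mem_span_singleton.1 this
      refine ⟨-c, ?_⟩
      rw [LinearMap.mem_ker, map_add, map_smul, ht, ← hc]
      simp)
  have hn : Module.finrank ℤ (LinearMap.ker T) + 1 = 3 := by
    have := Module.finrank_eq_card_basis B
    rw [hr, Fintype.card_fin] at this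
    exact this.symm
  have hB : (B : Fin _ → 𝓞 K) = Fin.cons t ((↑) ∘ B0) := Module.Basis.coe_mkFinCons _ _ _ _
  have key : ∀ i : Fin (Module.finrank ℤ (LinearMap.ker T)+1), T (B i) = if i = 0 then k else 0 := by
    intro i
    rw [hB]
    refine Fin.cases ?_ (fun j => ?_) i
    · simp [ht]
    · simp only [Fin.cons_succ, Function.comp, Fin.succ_ne_zero, if_false]
      exact LinearMap.mem_ker.1 (B0 j).2
  refine ⟨B.reindex (finCongr hn), k, hk3, ?_, ?_, ?_⟩ <;>
  · rw [Module.Basis.reindex_apply]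
    refine (key _).trans ?_
    simp [Fin.ext_iff]
end C1
end ThetaIndep

namespace ThetaIndep
section C2
open NumberField
variable {K : Type*} [Field K] [NumberField K]

theorem int_of_rat (w : ℂ) (r : ℚ) (hw : IsIntegral ℤ w) (hr : w = (r : ℂ)) : ∃ n : ℤ, w = n := by
  have h : IsIntegral ℤ r := by
    rw [← isIntegral_algebraMap_iff (B := ℂ) (algebraMap ℚ ℂ).injective]
    rw [hr] at hw
    simpa using hw
  obtain ⟨n, hn⟩ := IsIntegrallyClosed.isIntegral_iff.1 h
  refine ⟨n, ?_⟩
  rw [hr, ← hn]; simp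

theorem sym_int (φ : Fin 3 → (K →+* ℂ)) (hφ : ∀ x : K,
      ((Algebra.trace ℚ K x : ℚ) : ℂ) = φ 0 x + φ 1 x + φ 2 x)
    (x : 𝓞 K) (hx : Algebra.trace ℤ (𝓞 K) x = 0) :
    ∃ e N : ℤ, φ 0 x + φ 1 x + φ 2 x = 0 ∧
      -(φ 0 x * φ 1 x + φ 0 x * φ 2 x + φ 1 x * φ 2 x) = e ∧ φ 0 x * φ 1 x * φ 2 x = N := by
  have h0 : φ 0 x + φ 1 x + φ 2 x = 0 := by
    rw [← hφ, ← Algebra.coe_trace_int, hx]; simp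
  have hi : ∀ i, IsIntegral ℤ (φ i x) := fun i =>
    (RingOfIntegers.isIntegral_coe x).map ((φ i).toIntAlgHom)
  have h2 := hφ ((x : K) ^ 2)
  have h3 := hφ ((x : K) ^ 3)
  simp only [map_pow] at h2 h3
  obtain ⟨e, he⟩ := int_of_rat (-(φ 0 x * φ 1 x + φ 0 x * φ 2 x + φ 1 x * φ 2 x))
    (Algebra.trace ℚ K ((x : K) ^ 2) / 2)
    (((((hi 0).mul (hi 1)).add ((hi 0).mul (hi 2))).add ((hi 1).mul (hi 2))).neg) (by
      push_cast; rw [h2]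
      have : φ 2 x = - φ 0 x - φ 1 x := by linear_combination h0
      rw [this]; ring)
  obtain ⟨N, hN⟩ := int_of_rat (φ 0 x * φ 1 x * φ 2 x)
    (Algebra.trace ℚ K ((x : K) ^ 3) / 3) (((hi 0).mul (hi 1)).mul (hi 2)) (by
      push_cast; rw [h3]
      have : φ 2 x = - φ 0 x - φ 1 x := by linear_combination h0
      rw [this]; ring)
  exact ⟨e, N, h0, he, hN⟩

theorem vand_int (φ : Fin 3 → (K →+* ℂ)) (b : Module.Basis (Fin 3) ℤ (𝓞 K)) (x : 𝓞 K) :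
    ∃ I : ℤ, (φ 1 x - φ 0 x) * (φ 2 x - φ 0 x) * (φ 2 x - φ 1 x) =
      I * (Matrix.of (fun i j => φ i (b j : K))).det := by
  let P : Matrix (Fin 3) (Fin 3) ℤ := Matrix.of fun k j => b.repr (x ^ (j : ℕ)) k
  refine ⟨P.det, ?_⟩
  have h1 : (P.det : ℂ) = (P.map (Int.castRingHom ℂ)).det := by
    rw [← RingHom.mapMatrix_apply, ← RingHom.map_det]; rfl
  have h2 : (Matrix.of (fun i j => φ i (b j : K))) * (P.map (Int.castRingHom ℂ)) =
      Matrix.of (fun (i j : Fin 3) => (φ i x) ^ (j : ℕ)) := by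
    ext i j
    rw [Matrix.mul_apply]
    simp only [Matrix.of_apply, Matrix.map_apply, P]
    have h := b.sum_repr (x ^ (j : ℕ))
    have h' := congrArg (fun y : 𝓞 K => φ i (y : K)) h
    simp only [map_sum, map_pow] at h'
    rw [← h']
    apply Finset.sum_congr rfl
    intro k _
    rw [zsmul_eq_mul, map_mul, map_mul]
    simp [mul_comm]
  rw [h1, mul_comm (Matrix.det (P.map _)), ← Matrix.det_mul, h2, Matrix.det_fin_three]
  simp only [Matrix.of_apply]
  norm_num
  ring

/-- Data of the trace zero lattice, before normalising the sign. -/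
theorem lattice_data (h3 : Module.finrank ℚ K = 3) {d : ℤ} (hd : discr K = d) (h9 : ¬ (9 : ℤ) ∣ d)
    (hdpos : 0 < d) :
    ∃ (φ : Fin 3 → (K →+* ℂ)) (u v : 𝓞 K),
      (∀ x : K, ((Algebra.trace ℚ K x : ℚ) : ℂ) = φ 0 x + φ 1 x + φ 2 x) ∧
      Algebra.trace ℤ (𝓞 K) u = 0 ∧ Algebra.trace ℤ (𝓞 K) v = 0 ∧
      (∀ x : 𝓞 K, Algebra.trace ℤ (𝓞 K) x = 0 → ∃ s t : ℤ, x = s • u + t • v) ∧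
      (∀ s t : ℤ, s • u + t • v = 0 → s = 0 ∧ t = 0) ∧
      φ 0 u * φ 1 v - φ 1 u * φ 0 v = ((Real.sqrt d : ℝ) : ℂ) ∧
      (∀ x : 𝓞 K, ∃ I : ℤ, (φ 1 x - φ 0 x) * (φ 2 x - φ 0 x) * (φ 2 x - φ 1 x) =
        I * ((Real.sqrt d : ℝ) : ℂ)) ∧
      (∀ (x : 𝓞 K) (e : ℤ), Algebra.trace ℤ (𝓞 K) x = 0 → 3 ∣ d →
        -(φ 0 x * φ 1 x + φ 0 x * φ 2 x + φ 1 x * φ 2 x) = e → 3 ∣ e) := by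
  obtain ⟨φ, hφ⟩ := exists_emb h3
  obtain ⟨b, k, hk3, hb0, hb1, hb2⟩ := exists_basis h3
  have hk0 : k ≠ 0 := by rintro rfl; norm_num at hk3
  have hE := det_emb φ hφ b
  have hV := vand_int φ b
  obtain ⟨E, hEdef⟩ : ∃ E, E = (Matrix.of (fun i j => φ i (b j : K))).det := ⟨_, rfl⟩
  rw [← hEdef, hd] at hE
  simp only [← hEdef] at hV
  have s0 : φ 0 (b 0) + φ 1 (b 0) + φ 2 (b 0) = (k : ℂ) := by
    rw [← hφ, ← Algebra.coe_trace_int, hb0]; simp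
  have s1 : φ 0 (b 1) + φ 1 (b 1) + φ 2 (b 1) = 0 := by
    rw [← hφ, ← Algebra.coe_trace_int, hb1]; simp
  have s2 : φ 0 (b 2) + φ 1 (b 2) + φ 2 (b 2) = 0 := by
    rw [← hφ, ← Algebra.coe_trace_int, hb2]; simp
  have hEW : E = k * (φ 0 (b 1) * φ 1 (b 2) - φ 1 (b 1) * φ 0 (b 2)) := by
    rw [hEdef, Matrix.det_fin_three]
    simp only [Matrix.of_apply]
    rw [show φ 2 (b 0) = k - φ 0 (b 0) - φ 1 (b 0) by linear_combination s0,
      show φ 2 (b 1) = - φ 0 (b 1) - φ 1 (b 1) by linear_combination s1,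
      show φ 2 (b 2) = - φ 0 (b 2) - φ 1 (b 2) by linear_combination s2]
    ring
  have hdiv : ∀ (x : 𝓞 K) (e : ℤ), Algebra.trace ℤ (𝓞 K) x = 0 → 3 ∣ d →
        -(φ 0 x * φ 1 x + φ 0 x * φ 2 x + φ 1 x * φ 2 x) = e → (3 : ℤ) ∣ e := by
    intro x e hx h3d he
    obtain ⟨e', N, h0, he', hN⟩ := sym_int φ hφ x hx
    obtain ⟨I, hI⟩ := hV x
    have hsq : ((4 * e ^ 3 - 27 * N ^ 2 : ℤ) : ℂ) = ((d * I ^ 2 : ℤ) : ℂ) := by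
      push_cast
      have : (I * E) ^ 2 = (d : ℂ) * I ^ 2 := by rw [mul_pow, hE]; ring
      rw [← this, ← hI, ← he, ← hN]
      rw [show φ 2 x = - φ 0 x - φ 1 x by linear_combination h0]
      ring
    have hz : 4 * e ^ 3 - 27 * N ^ 2 = d * I ^ 2 := by exact_mod_cast hsq
    obtain ⟨d', rfl⟩ := h3d
    have : (3 : ℤ) ∣ e ^ 3 := by
      have : (3 : ℤ) ∣ 4 * e ^ 3 := ⟨d' * I ^ 2 + 9 * N ^ 2, by linear_combination hz⟩
      omega
    exact Int.prime_three.dvd_of_dvd_pow this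
  have hk1 : k ^ 2 = 1 := by
    have : k.natAbs ∣ 3 := by simpa using Int.natAbs_dvd_natAbs.2 hk3
    rcases (Nat.dvd_prime Nat.prime_three).1 this with h | h
    · rw [← Int.natAbs_sq, h]; rfl
    · exfalso
      have hk9 : k ^ 2 = 9 := by rw [← Int.natAbs_sq, h]; rfl
      obtain ⟨e1, -, -, he1, -⟩ := sym_int φ hφ (b 1) hb1
      obtain ⟨e2, -, -, he2, -⟩ := sym_int φ hφ (b 2) hb2
      obtain ⟨e3, -, h3', he3, -⟩ := sym_int φ hφ (b 1 + b 2) (by rw [map_add, hb1, hb2, add_zero])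
      have hk9' : (k : ℂ) ^ 2 = 9 := by exact_mod_cast hk9
      have hD : ((-3 * ((e3 - e1 - e2) ^ 2 - 4 * e1 * e2) : ℤ) : ℂ) = ((d : ℤ) : ℂ) := by
        rw [← hE, hEW, mul_pow, hk9']
        push_cast
        rw [← he1, ← he2, ← he3]
        simp only [map_add]
        rw [show φ 2 (b 1) = - φ 0 (b 1) - φ 1 (b 1) by linear_combination s1,
          show φ 2 (b 2) = - φ 0 (b 2) - φ 1 (b 2) by linear_combination s2]
        ring
      have hz : -3 * ((e3 - e1 - e2) ^ 2 - 4 * e1 * e2) = d := by exact_mod_cast hD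
      have h3d : 3 ∣ d := ⟨-((e3 - e1 - e2) ^ 2 - 4 * e1 * e2), by rw [← hz]; ring⟩
      obtain ⟨f1, rfl⟩ := hdiv _ _ hb1 h3d he1
      obtain ⟨f2, rfl⟩ := hdiv _ _ hb2 h3d he2
      obtain ⟨f3, rfl⟩ := hdiv _ _ (by rw [map_add, hb1, hb2, add_zero]) h3d he3
      exact h9 ⟨-3 * ((f3 - f1 - f2) ^ 2 - 4 * f1 * f2), by rw [← hz]; ring⟩
  have hspan : ∀ x : 𝓞 K, Algebra.trace ℤ (𝓞 K) x = 0 → ∃ s t : ℤ, x = s • b 1 + t • b 2 := by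
    intro x hx
    have h := b.sum_repr x
    rw [Fin.sum_univ_three] at h
    refine ⟨b.repr x 1, b.repr x 2, ?_⟩
    have h' := congrArg (Algebra.trace ℤ (𝓞 K)) h
    rw [hx, map_add, map_add, map_smul, map_smul, map_smul, hb0, hb1, hb2] at h'
    simp only [smul_eq_mul, mul_zero, add_zero, mul_eq_zero, hk0, or_false] at h'
    rw [h', zero_smul, zero_add] at h
    exact h.symm
  have hind : ∀ s t : ℤ, s • b 1 + t • b 2 = 0 → s = 0 ∧ t = 0 := by
    intro s t h
    have := Fintype.linearIndependent_iff.1 b.linearIndependent ![0, s, t] (by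
      rw [Fin.sum_univ_three]; simpa using h)
    exact ⟨by simpa using this 1, by simpa using this 2⟩
  have hk1' : (k : ℂ) ^ 2 = 1 := by exact_mod_cast hk1
  have hW : (φ 0 (b 1) * φ 1 (b 2) - φ 1 (b 1) * φ 0 (b 2)) ^ 2 = ((Real.sqrt d : ℝ) : ℂ) ^ 2 := by
    have h1 : ((Real.sqrt d : ℝ) : ℂ) ^ 2 = d := by
      have : (Real.sqrt d) ^ 2 = (d : ℝ) := Real.sq_sqrt (by exact_mod_cast hdpos.le)
      rw [← Complex.ofReal_pow, this]; simp
    rw [h1, ← hE, hEW, mul_pow, hk1', one_mul]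
  rcases sq_eq_sq_iff_eq_or_eq_neg.1 hW with hW | hW
  · refine ⟨φ, b 1, b 2, hφ, hb1, hb2, hspan, hind, hW, fun x => ?_, hdiv⟩
    obtain ⟨I, hI⟩ := hV x
    refine ⟨I * k, ?_⟩
    rw [hI, hEW, hW]; push_cast; ring
  · refine ⟨φ, b 1, -b 2, hφ, hb1, by rw [map_neg, hb2, neg_zero], fun x hx => ?_,
      fun s t h => ?_, ?_, fun x => ?_, hdiv⟩
    · obtain ⟨s, t, h⟩ := hspan x hx
      exact ⟨s, -t, by rw [h]; simp⟩
    · have := hind s (-t) (by rw [← h]; simp)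
      exact ⟨this.1, by omega⟩
    · simp only [map_neg]
      linear_combination -hW
    · obtain ⟨I, hI⟩ := hV x
      refine ⟨-(I * k), ?_⟩
      rw [hI, hEW, hW]; push_cast; ring
end C2
end ThetaIndep

namespace ThetaIndep
section C3
open NumberField
variable {F : Type} [Field F] [NumberField F] {D : ℤ}
variable {K : Type*} [Field K] [NumberField K]

theorem zcube (x0 x1 x2 T : ℂ) (hT : T ^ 2 = 3) (h : x0 + x1 + x2 = 0) :
    (3 / 2 * x0 + Complex.I * T / 2 * (x0 + 2 * x1)) ^ 3 =
      27 / 2 * (x0 * x1 * x2) - 3 / 2 * T * ((x1 - x0) * (x2 - x0) * (x2 - x1)) * Complex.I := by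
  have hx : x2 = -x0 - x1 := by linear_combination h
  have hI : Complex.I ^ 2 = -1 := Complex.I_sq
  rw [hx]
  generalize Complex.I = i at *
  linear_combination (3 * (3 / 2 * x0) * (1 / 4) * (x0 + 2 * x1) ^ 2 * T ^ 2 + i * T * T ^ 2 / 8 * (x0 + 2 * x1) ^ 3) * hI +
    (-3 * (3 / 2 * x0) * (1 / 4) * (x0 + 2 * x1) ^ 2 - i * T / 8 * (x0 + 2 * x1) ^ 3) * hT

theorem zmul (u0 u1 v0 v1 T : ℂ) (hT : T ^ 2 = 3) :
    (u0 ^ 2 + u0 * u1 + u1 ^ 2) * (3 / 2 * v0 + Complex.I * T / 2 * (v0 + 2 * v1)) =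
      (3 / 2 * u0 + Complex.I * T / 2 * (u0 + 2 * u1)) *
      ((2 * u0 * v0 + u0 * v1 + u1 * v0 + 2 * u1 * v1) + Complex.I * T * (u0 * v1 - u1 * v0)) / 2 := by
  have hI : Complex.I ^ 2 = -1 := Complex.I_sq
  generalize Complex.I = i at *
  linear_combination (-(1 / 4) * T ^ 2 * (u0 + 2 * u1) * (u0 * v1 - u1 * v0)) * hI +
    ((1 / 4) * (u0 + 2 * u1) * (u0 * v1 - u1 * v0)) * hT

theorem exists_CD (Q : QF F D) {d g : ℤ} (hp : Par d g D) (h3 : Module.finrank ℚ K = 3)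
    (htr : ∀ (φ : K →+* ℂ) (x : K), (φ x).im = 0) (hd : discr K = d) (hdpos : 0 < d) :
    ∃ A : CD Q d g,
      (∀ m : ℤ, Nat.card {x : 𝓞 K // Algebra.trace ℚ K (x : K) = 0 ∧
        Algebra.trace ℚ K ((x : K) ^ 2) = ((2 * g * m : ℤ) : ℚ)} =
        Nat.card {v : ℤ × ℤ // A.f.q v.1 v.2 = m}) ∧
      (∀ s t : ℤ, A.f.q s t ≠ 0 → ∃ θ : K,
        θ ^ 3 = ((g * A.f.q s t : ℤ) : K) * θ + ((A.N s t : ℤ) : K) ∧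
        θ ∉ Set.range (algebraMap ℚ K)) := by
  have h9 : ¬ (9 : ℤ) ∣ d := by
    rcases hp with ⟨-, -, h⟩ | ⟨-, h, h'⟩ <;> omega
  obtain ⟨φ, u, v, hφ, hu, hv, hspan, hind, hW, hV, hdiv⟩ := lattice_data h3 hd h9 hdpos
  have htz : ∀ s t : ℤ, Algebra.trace ℤ (𝓞 K) (s • u + t • v) = 0 := by
    intro s t
    rw [map_add, map_smul, map_smul, hu, hv]; simp
  have hlin : ∀ (s t : ℤ) (i : Fin 3), φ i ((s • u + t • v : 𝓞 K) : K) =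
      s * φ i u + t * φ i v := by
    intro s t i
    simp
  choose e N hs he hN using fun s t : ℤ => sym_int φ hφ (s • u + t • v) (htz s t)
  choose I hI using fun s t : ℤ => hV (s • u + t • v)
  have su : φ 0 u + φ 1 u + φ 2 u = 0 := by have := hs 1 0; simpa [hlin] using this
  have sv : φ 0 v + φ 1 v + φ 2 v = 0 := by have := hs 0 1; simpa [hlin] using this
  obtain ⟨B, hB⟩ : ∃ B, B = e 1 1 - e 1 0 - e 0 1 := ⟨_, rfl⟩
  have hgdvd : ∀ s t, g ∣ e s t := by
    intro s t
    rcases hp with ⟨rfl, -, -⟩ | ⟨rfl, h, -⟩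
    · exact one_dvd _
    · exact hdiv _ _ (htz s t) ⟨-D, by rw [h]; ring⟩ (he s t)
  simp only [hlin] at hs he hN hI
  have u2 : φ 2 u = - φ 0 u - φ 1 u := by linear_combination su
  have v2 : φ 2 v = - φ 0 v - φ 1 v := by linear_combination sv
  have e10 : (e 1 0 : ℂ) = φ 0 u ^ 2 + φ 0 u * φ 1 u + φ 1 u ^ 2 := by
    rw [← he, u2]; push_cast; ring
  have e01 : (e 0 1 : ℂ) = φ 0 v ^ 2 + φ 0 v * φ 1 v + φ 1 v ^ 2 := by
    rw [← he, v2]; push_cast; ring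
  have eB : (B : ℂ) = 2 * φ 0 u * φ 0 v + φ 0 u * φ 1 v + φ 1 u * φ 0 v + 2 * φ 1 u * φ 1 v := by
    rw [hB]; push_cast; rw [e10, e01, ← he, u2, v2]; push_cast; ring
  have eform : ∀ s t, e s t = e 1 0 * s ^ 2 + B * s * t + e 0 1 * t ^ 2 := by
    intro s t
    have : (e s t : ℂ) = ((e 1 0 * s ^ 2 + B * s * t + e 0 1 * t ^ 2 : ℤ) : ℂ) := by
      push_cast
      rw [e10, e01, eB, ← he, u2, v2]; ring
    exact_mod_cast this
  obtain ⟨a, ha⟩ := hgdvd 1 0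
  obtain ⟨c, hc⟩ := hgdvd 0 1
  obtain ⟨b, hb⟩ : g ∣ B := by
    rw [hB]; exact dvd_sub (dvd_sub (hgdvd 1 1) (hgdvd 1 0)) (hgdvd 0 1)
  have hg := hp.gpos
  have hS2 : ((Real.sqrt d : ℝ) : ℂ) ^ 2 = d := by
    have : (Real.sqrt d) ^ 2 = (d : ℝ) := Real.sq_sqrt (by exact_mod_cast hdpos.le)
    rw [← Complex.ofReal_pow, this]; simp
  have hdisc : b ^ 2 - 4 * a * c = D := by
    have h1 : ((B ^ 2 - 4 * e 1 0 * e 0 1 : ℤ) : ℂ) = ((-3 * d : ℤ) : ℂ) := by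
      push_cast
      rw [← hS2, ← hW, e10, e01, eB]; ring
    have h2 : B ^ 2 - 4 * e 1 0 * e 0 1 = -3 * d := by exact_mod_cast h1
    rw [← hp.rel, hb, ha, hc] at h2
    have : g ^ 2 ≠ 0 := by positivity
    apply mul_left_cancel₀ this
    linear_combination h2
  have hu0 : u ≠ 0 := by
    intro h
    have := (hind 1 0 (by simp [h])).1
    norm_num at this
  have hpos : 0 < a := by
    have h1 : 0 < e 1 0 := by
      have hre : ∀ i, φ i u = (((φ i u).re : ℝ) : ℂ) := fun i =>
        Complex.ext (by simp) (by simp [htr])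
      have h0 : (φ 0 u).re ≠ 0 := by
        intro h
        have := hre 0
        rw [h, Complex.ofReal_zero, map_eq_zero] at this
        exact hu0 (by exact_mod_cast this)
      have h2 : (e 1 0 : ℝ) = (φ 0 u).re ^ 2 + (φ 0 u).re * (φ 1 u).re + (φ 1 u).re ^ 2 := by
        have := e10
        rw [hre 0, hre 1] at this
        exact_mod_cast this
      have h3 : (0 : ℝ) < e 1 0 := by
        rw [h2]
        have : 0 < (φ 0 u).re ^ 2 := by positivity
        nlinarith [sq_nonneg ((φ 0 u).re + 2 * (φ 1 u).re)]
      exact_mod_cast h3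
    rw [ha] at h1
    exact pos_of_mul_pos_right h1 hg.le
  let f : Form D := ⟨a, b, c, hpos, hdisc⟩
  have hfq : ∀ s t, e s t = g * f.q s t := by
    intro s t
    rw [eform, ha, hb, hc, Form.q]; ring
  -- the complex numbers z
  obtain ⟨T, hTdef⟩ : ∃ T : ℂ, T = ((Real.sqrt 3 : ℝ) : ℂ) := ⟨_, rfl⟩
  have hT : T ^ 2 = 3 := by
    rw [hTdef, ← Complex.ofReal_pow, Real.sq_sqrt (by norm_num)]; simp
  have hR : (g : ℂ) * ((Real.sqrt (-D) : ℝ) : ℂ) = T * ((Real.sqrt d : ℝ) : ℂ) := by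
    have hg' : (0 : ℝ) ≤ g := by exact_mod_cast hg.le
    have h1 : (g : ℝ) * Real.sqrt (-D) = Real.sqrt 3 * Real.sqrt d := by
      rw [← Real.sqrt_mul (by norm_num)]
      nth_rewrite 1 [← Real.sqrt_sq hg']
      rw [← Real.sqrt_mul (by positivity)]
      congr 1
      have := hp.rel
      have h2 : ((g ^ 2 * D : ℤ) : ℝ) = ((-3 * d : ℤ) : ℝ) := by rw [this]
      push_cast at h2
      linear_combination -h2
    rw [hTdef]
    exact_mod_cast congrArg (Complex.ofReal) h1
  obtain ⟨S, hS⟩ : ∃ S : ℂ, S = ((Real.sqrt d : ℝ) : ℂ) := ⟨_, rfl⟩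
  obtain ⟨R, hRd⟩ : ∃ R : ℂ, R = ((Real.sqrt (-D) : ℝ) : ℂ) := ⟨_, rfl⟩
  rw [← hS] at hR hW
  simp only [← hS] at hI
  rw [← hRd] at hR
  obtain ⟨z, hz⟩ : ∃ z : ℤ → ℤ → ℂ, ∀ s t, z s t = 3 / 2 * (s * φ 0 u + t * φ 0 v) +
    Complex.I * T / 2 * ((s * φ 0 u + t * φ 0 v) + 2 * (s * φ 1 u + t * φ 1 v)) := ⟨_, fun _ _ => rfl⟩
  have hσδ : Q.σ Q.δ = Complex.I * R := by rw [Q.σδ, hRd]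
  have hgC : (g : ℂ) ≠ 0 := by exact_mod_cast hg.ne'
  have hzc : ∀ s t, Q.σ (alp Q g (N s t) (-I s t)) = z s t ^ 3 := by
    intro s t
    rw [hz, zcube _ _ _ T hT (hs s t), hN, hI, alp, map_add, map_mul, hσδ, map_ratCast, map_ratCast]
    push_cast
    linear_combination (-3 / 2 * I s t * Complex.I) * hR
  have hzb : ∀ s t, Q.σ (f.β Q s t : F) * z 1 0 = a * z s t := by
    intro s t
    rw [Form.β, Q.el_coe, map_add, map_mul, hσδ, map_ratCast, map_ratCast]
    have h1 := zmul (φ 0 u) (φ 1 u) (φ 0 v) (φ 1 v) T hT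
    rw [← e10, ← eB, hW, ha, hb] at h1
    have hz10 : z 1 0 = 3 / 2 * φ 0 u + Complex.I * T / 2 * (φ 0 u + 2 * φ 1 u) := by
      rw [hz]; push_cast; ring
    have hzst : z s t = s * (3 / 2 * φ 0 u + Complex.I * T / 2 * (φ 0 u + 2 * φ 1 u)) +
      t * (3 / 2 * φ 0 v + Complex.I * T / 2 * (φ 0 v + 2 * φ 1 v)) := by rw [hz]; ring
    rw [hz10, hzst]
    apply mul_left_cancel₀ hgC
    push_cast at h1 ⊢
    show (g : ℂ) * ((((2 * a * s + b * t) / 2 : ℂ) + (t / 2 : ℂ) * (Complex.I * R)) * _) = _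
    linear_combination (-t : ℂ) * h1 + (t / 2 : ℂ) * Complex.I * (3 / 2 * φ 0 u + Complex.I * T / 2 * (φ 0 u + 2 * φ 1 u)) * hR
  have hrel : ∀ s t, 27 * N s t ^ 2 + d * (-I s t) ^ 2 = 4 * g ^ 3 * f.q s t ^ 3 := by
    intro s t
    have h1 : ((27 * N s t ^ 2 + d * (-I s t) ^ 2 : ℤ) : ℂ) = ((4 * (e s t) ^ 3 : ℤ) : ℂ) := by
      push_cast
      have : (I s t * S) ^ 2 = (d : ℂ) * (- (I s t : ℂ)) ^ 2 := by rw [mul_pow, hS, hS2]; ring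
      rw [← this, ← hI, ← he, ← hN]
      have := hs s t
      generalize (s * φ 0 u + t * φ 0 v : ℂ) = x0 at *
      generalize (s * φ 1 u + t * φ 1 v : ℂ) = x1 at *
      generalize (s * φ 2 u + t * φ 2 v : ℂ) = x2 at *
      rw [show x2 = - x0 - x1 by linear_combination this]
      ring
    have h2 : 27 * N s t ^ 2 + d * (-I s t) ^ 2 = 4 * (e s t) ^ 3 := by exact_mod_cast h1
    rw [h2, hfq]; ring
  let A : CD Q d g := ⟨f, N, fun s t => -I s t, hrel, by
    intro s t
    apply Q.σ.injective
    rw [map_mul, map_mul, hzc, hzc, map_pow, map_pow, map_intCast]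
    have h1 := hzb s t
    rw [← mul_pow, ← mul_pow]
    congr 1
    change z s t * (a : ℂ) = _
    linear_combination -h1⟩
  refine ⟨A, ?_, ?_⟩
  · intro m
    have hcond : ∀ s t : ℤ, Algebra.trace ℚ K (((s • u + t • v : 𝓞 K) : K) ^ 2) =
        ((2 * (g * f.q s t) : ℤ) : ℚ) := by
      intro s t
      have h1 := hφ (((s • u + t • v : 𝓞 K) : K) ^ 2)
      simp only [map_pow, hlin] at h1
      have h2 : ((Algebra.trace ℚ K (((s • u + t • v : 𝓞 K) : K) ^ 2) : ℚ) : ℂ) =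
        (((2 * (g * f.q s t) : ℤ) : ℚ) : ℂ) := by
        rw [h1, ← hfq]
        push_cast
        rw [← he]
        have := hs s t
        generalize (s * φ 0 u + t * φ 0 v : ℂ) = x0 at *
        generalize (s * φ 1 u + t * φ 1 v : ℂ) = x1 at *
        generalize (s * φ 2 u + t * φ 2 v : ℂ) = x2 at *
        rw [show x2 = - x0 - x1 by linear_combination this]
        ring
      exact_mod_cast h2
    symm
    refine Nat.card_congr (Equiv.ofBijective (fun w : {v : ℤ × ℤ // A.f.q v.1 v.2 = m} =>
      (⟨w.1.1 • u + w.1.2 • v, ?_, ?_⟩ : {x : 𝓞 K // Algebra.trace ℚ K (x : K) = 0 ∧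
        Algebra.trace ℚ K ((x : K) ^ 2) = ((2 * g * m : ℤ) : ℚ)})) ⟨?_, ?_⟩)
    · rw [← Algebra.coe_trace_int, htz]; simp
    · rw [hcond]
      have := w.2
      change f.q w.1.1 w.1.2 = m at this
      rw [this, mul_assoc]
    · intro w w' h
      have h1 : w.1.1 • u + w.1.2 • v = w'.1.1 • u + w'.1.2 • v := congrArg Subtype.val h
      have h2 := hind (w.1.1 - w'.1.1) (w.1.2 - w'.1.2) (by
        rw [sub_smul, sub_smul]
        calc _ = (w.1.1 • u + w.1.2 • v) - (w'.1.1 • u + w'.1.2 • v) := by abel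
          _ = 0 := by rw [h1, sub_self])
      exact Subtype.ext (Prod.ext (by omega) (by omega))
    · rintro ⟨x, hx1, hx2⟩
      obtain ⟨s, t, rfl⟩ := hspan x (by
        rw [← Algebra.coe_trace_int] at hx1
        exact_mod_cast hx1)
      refine ⟨⟨(s, t), ?_⟩, rfl⟩
      rw [hcond] at hx2
      have h1 : 2 * (g * f.q s t) = 2 * g * m := by exact_mod_cast hx2
      change f.q s t = m
      have : 2 * g ≠ 0 := by positivity
      apply mul_left_cancel₀ this
      linear_combination h1
  · intro s t hq
    refine ⟨((s • u + t • v : 𝓞 K) : K), ?_, ?_⟩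
    · apply (φ 0).injective
      rw [map_add, map_mul, map_pow, map_intCast, map_intCast, hlin]
      change _ = ((g * f.q s t : ℤ) : ℂ) * _ + ((N s t : ℤ) : ℂ)
      rw [← hfq, ← he, ← hN]
      have := hs s t
      generalize (s * φ 0 u + t * φ 0 v : ℂ) = x0 at *
      generalize (s * φ 1 u + t * φ 1 v : ℂ) = x1 at *
      generalize (s * φ 2 u + t * φ 2 v : ℂ) = x2 at *
      rw [show x2 = - x0 - x1 by linear_combination this]
      ring
    · rintro ⟨r, hr⟩
      apply hq
      have hx : ∀ i, (s * φ i u + t * φ i v : ℂ) = r := by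
        intro i
        rw [← hlin, ← hr]; simp
      have h0 := hs s t
      have h1 := he s t
      rw [hx, hx, hx] at h0 h1
      have hr0 : (r : ℂ) = 0 := by linear_combination h0 / 3
      rw [hr0, hfq] at h1
      have h2 : g * f.q s t = 0 := by
        have : ((g * f.q s t : ℤ) : ℂ) = 0 := by rw [← h1]; ring
        exact_mod_cast this
      exact (mul_eq_zero.1 h2).resolve_left hg.ne'
end C3
end ThetaIndep

namespace ThetaIndep
section C4
open NumberField Polynomial

theorem sqf3 {m : ℤ} (hm : Squarefree m) (h : ¬ (3 : ℤ) ∣ m) : Squarefree (-3 * m) := by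
  rw [squarefree_mul_iff]
  refine ⟨?_, ?_, hm⟩
  · have : IsCoprime (3 : ℤ) m := (Int.prime_three.coprime_iff_not_dvd).2 h
    exact this.neg_left.isRelPrime
  · have : Prime (-3 : ℤ) := Int.prime_three.neg
    exact this.squarefree

theorem sqf3' {m : ℤ} (hm : Squarefree (3 * m)) : Squarefree (-m) ∧ ¬ (3 : ℤ) ∣ m := by
  refine ⟨hm.squarefree_of_dvd ⟨-3, by ring⟩, ?_⟩
  rintro ⟨k, rfl⟩
  have := hm 3 ⟨k, by ring⟩
  rw [Int.isUnit_iff] at this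
  omega

theorem exists_D {d : ℤ} (hd : 0 < d) (hf : IsFundamentalDiscriminant d) :
    ∃ D, D < 0 ∧ FD D ∧ Par d (Int.gcd 3 d : ℤ) D := by
  obtain ⟨-, hf⟩ := hf
  by_cases h3 : (3 : ℤ) ∣ d
  · have hg : (Int.gcd 3 d : ℤ) = 3 := by
      rw [Int.gcd_eq_left_iff_dvd (by norm_num)]; exact h3
    obtain ⟨d', rfl⟩ := h3
    refine ⟨-d', by omega, ?_, ?_⟩
    · rcases hf with ⟨h1, h2⟩ | ⟨h1, h2, h4⟩
      · exact Or.inl ⟨by omega, (sqf3' h2).1⟩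
      · obtain ⟨k, rfl⟩ : ∃ k, d' = 4 * k := ⟨d' / 4, by omega⟩
        have e1 : 3 * (4 * k) / 4 = 3 * k := by omega
        have e2 : -(4 * k) / 4 = -k := by omega
        rw [e1] at h2 h4
        refine Or.inr ⟨by omega, ?_, ?_⟩
        · rw [e2]; exact (sqf3' h2).1
        · rw [e2]; omega
    · refine Or.inr ⟨hg, by ring, ?_⟩
      rcases hf with ⟨h1, h2⟩ | ⟨h1, h2, h4⟩
      · have := (sqf3' h2).2
        omega
      · obtain ⟨k, rfl⟩ : ∃ k, d' = 4 * k := ⟨d' / 4, by omega⟩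
        have e1 : 3 * (4 * k) / 4 = 3 * k := by omega
        rw [e1] at h2
        have := (sqf3' h2).2
        omega
  · have hg : (Int.gcd 3 d : ℤ) = 1 := by
      have : IsCoprime (3 : ℤ) d := (Int.prime_three.coprime_iff_not_dvd).2 h3
      rw [Int.isCoprime_iff_gcd_eq_one] at this
      rw [this]; rfl
    refine ⟨-3 * d, by omega, ?_, Or.inl ⟨hg, rfl, h3⟩⟩
    rcases hf with ⟨h1, h2⟩ | ⟨h1, h2, h4⟩
    · exact Or.inl ⟨by omega, sqf3 h2 h3⟩
    · have e1 : -3 * d / 4 = -3 * (d / 4) := by omega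
      refine Or.inr ⟨by omega, ?_, by omega⟩
      rw [e1]
      exact sqf3 h2 (by omega)

variable {K : Type*} [Field K] [NumberField K]

theorem minpoly_cubic (h3 : Module.finrank ℚ K = 3) (p n : ℤ) (θ : K)
    (h : θ ^ 3 = (p : K) * θ + (n : K)) (hθ : θ ∉ Set.range (algebraMap ℚ K)) :
    minpoly ℚ θ = X ^ 3 - (C (p : ℚ) * X + C (n : ℚ)) := by
  have hi : IsIntegral ℚ θ := Algebra.IsIntegral.isIntegral θ
  have hdeg : (C (p : ℚ) * X + C (n : ℚ) : ℚ[X]).degree < 3 :=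
    degree_linear_le.trans_lt (by norm_num)
  have hmon : (X ^ 3 - (C (p : ℚ) * X + C (n : ℚ)) : ℚ[X]).Monic := monic_X_pow_sub hdeg
  have hnd : (X ^ 3 - (C (p : ℚ) * X + C (n : ℚ)) : ℚ[X]).natDegree = 3 := by
    compute_degree!
  have hdvd : minpoly ℚ θ ∣ X ^ 3 - (C (p : ℚ) * X + C (n : ℚ)) := by
    apply minpoly.dvd
    simp [h]
  have hmd : (minpoly ℚ θ).natDegree = 3 := by
    have h1 := minpoly.degree_dvd hi
    rw [h3] at h1
    rcases (Nat.dvd_prime Nat.prime_three).1 h1 with h2 | h2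
    · exact absurd (minpoly.natDegree_eq_one_iff.1 h2) hθ
    · exact h2
  exact (eq_of_monic_of_dvd_of_natDegree_le (minpoly.monic hi) hmon hdvd (by rw [hnd, hmd])).symm

theorem equiv_adjoinRoot (h3 : Module.finrank ℚ K = 3) (P : ℚ[X]) (θ : K) (hP : minpoly ℚ θ = P)
    (hd : P.natDegree = 3) : Nonempty (AdjoinRoot P ≃+* K) := by
  have hi : IsIntegral ℚ θ := Algebra.IsIntegral.isIntegral θ
  have hirr : Irreducible P := hP ▸ minpoly.irreducible hi
  have : Fact (Irreducible P) := ⟨hirr⟩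
  let f : AdjoinRoot P →ₐ[ℚ] K := AdjoinRoot.liftAlgHom P (Algebra.ofId ℚ K) θ (by
    have := minpoly.aeval ℚ θ
    rw [hP] at this
    exact this)
  have hinj : Function.Injective f := f.toRingHom.injective
  have hfin : Module.finrank ℚ (AdjoinRoot P) = Module.finrank ℚ K := by
    rw [h3, (AdjoinRoot.powerBasis hirr.ne_zero).finrank, AdjoinRoot.powerBasis_dim, hd]
  have : FiniteDimensional ℚ (AdjoinRoot P) := (AdjoinRoot.powerBasis hirr.ne_zero).finite
  have hsurj : Function.Surjective f :=
    (LinearMap.injective_iff_surjective_of_finrank_eq_finrank hfin (f := f.toLinearMap)).1 hinj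
  exact ⟨(AlgEquiv.ofBijective f ⟨hinj, hsurj⟩).toRingEquiv⟩

theorem iso_cubic {K' : Type*} [Field K'] [NumberField K'] (h3 : Module.finrank ℚ K = 3)
    (h3' : Module.finrank ℚ K' = 3) (p n n' ε : ℤ) (hε : ε = 1 ∨ ε = -1) (hn : n' = ε * n)
    (θ : K) (h : θ ^ 3 = (p : K) * θ + (n : K)) (hθ : θ ∉ Set.range (algebraMap ℚ K))
    (θ' : K') (h' : θ' ^ 3 = (p : K') * θ' + (n' : K')) (hθ' : θ' ∉ Set.range (algebraMap ℚ K')) :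
    Nonempty (K ≃+* K') := by
  obtain ⟨η, hη, hηr⟩ : ∃ η : K', η ^ 3 = (p : K') * η + (n : K') ∧
      η ∉ Set.range (algebraMap ℚ K') := by
    rcases hε with rfl | rfl
    · exact ⟨θ', by rw [h', hn]; push_cast; ring, hθ'⟩
    · refine ⟨-θ', ?_, ?_⟩
      · rw [hn] at h'
        push_cast at h'
        linear_combination -h'
      · rintro ⟨r, hr⟩
        exact hθ' ⟨-r, by rw [map_neg, hr, neg_neg]⟩
  have m1 := minpoly_cubic h3 p n θ h hθ
  have m2 := minpoly_cubic h3' p n η hη hηr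
  have hnd : (X ^ 3 - (C (p : ℚ) * X + C (n : ℚ)) : ℚ[X]).natDegree = 3 := by
    compute_degree!
  obtain ⟨e1⟩ := equiv_adjoinRoot h3 _ θ m1 hnd
  obtain ⟨e2⟩ := equiv_adjoinRoot h3' _ η m2 hnd
  exact ⟨e1.symm.trans e2⟩

theorem final
    (d : ℤ) (hdpos : 0 < d) (hfund : IsFundamentalDiscriminant d)
    (n : ℕ) (K : Fin n → Type*) [∀ i, Field (K i)] [∀ i, NumberField (K i)]
    (hdeg : ∀ i, Module.finrank ℚ (K i) = 3)
    (htr : ∀ i, ∀ (φ : K i →+* ℂ) (x : K i), (φ x).im = 0)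
    (hdisc : ∀ i, NumberField.discr (K i) = d)
    (hnoniso : ∀ i j, i ≠ j → ¬ Nonempty (K i ≃+* K j))
    (lam : Fin n → ℂ)
    (hlin : ∀ m : ℕ,
      ∑ i, lam i *
        (Nat.card {x : NumberField.RingOfIntegers (K i) //
          Algebra.trace ℚ (K i) (x : K i) = 0 ∧
            Algebra.trace ℚ (K i) ((x : K i) ^ 2) =
              ((2 * (Int.gcd 3 d : ℤ) * (m : ℤ) : ℤ) : ℚ)} : ℂ) = 0) :
    ∀ i, lam i = 0 := by
  intro i0
  obtain ⟨D, hD, hFD, hp⟩ := exists_D hdpos hfund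
  generalize (Int.gcd 3 d : ℤ) = g at hp hlin
  obtain ⟨F, _, _, ⟨Q⟩⟩ := exists_QF D hD hFD
  have hd20 : 20 < d := by
    have := real_discr (hdeg i0) (htr i0)
    rw [hdisc, abs_of_pos hdpos] at this
    exact this
  choose A hA hθ using fun i => exists_CD Q hp (hdeg i) (htr i) (hdisc i) hdpos
  have : Finite (𝓞 F)ˣ := QF.finite_units Q
  have hq0 : ∀ i, (A i).f.q 1 0 ≠ 0 := fun i => by rw [(A i).f.q10]; exact (A i).f.pos.ne'
  have hiso : ∀ i j, (∃ ε u v : ℤ, (ε = 1 ∨ ε = -1) ∧ (A j).f.q u v = (A i).f.q 1 0 ∧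
      (A j).N u v = ε * (A i).N 1 0) → i = j := by
    rintro i j ⟨ε, u, v, hε, hq, hN⟩
    by_contra hij
    apply hnoniso i j hij
    obtain ⟨θ, h, hr⟩ := hθ i 1 0 (hq0 i)
    obtain ⟨θ', h', hr'⟩ := hθ j u v (by rw [hq]; exact hq0 i)
    rw [hq] at h'
    exact iso_cubic (hdeg i) (hdeg j) _ _ _ ε hε hN θ h hr θ' h' hr'
  refine classTheorem Q.rank (anClaim Q.normCompat) (fun i => (cl ((A i).f.idl Q))⁻¹) lam
    ?_ ?_ ?_ ?_ i0
  · intro i j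
    have := torsion Q hp (A i) (A j)
    rw [inv_pow, inv_pow, ← mul_inv, this, inv_one]
  · intro i j h
    exact hiso i j (case_same Q hp (by omega) (by omega) (A i) (A j) (inv_injective h))
  · intro i j h
    exact hiso i j (case_inv Q hp (by omega) (by omega) (A i) (A j) (inv_injective h))
  · intro m hm
    have h := hlin m
    have hw : (Nat.card (𝓞 F)ˣ : ℂ) ≠ 0 := by exact_mod_cast Nat.card_pos.ne'
    apply mul_left_cancel₀ hw
    rw [mul_zero, Finset.mul_sum, ← h]
    apply Finset.sum_congr rfl
    intro i _
    rw [hA i m, (A i).f.card_form Q hm]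
    push_cast
    ring
end C4
end ThetaIndep

/-- The theta series of pairwise non-isomorphic totally real cubic fields of the same
positive fundamental discriminant `d` are linearly independent over ℂ: if a ℂ-linear
combination of their coefficient functions `m ↦ #{x ∈ O_{K_i}^0 : Tr(x²) = 2·gcd(3,d)·m}`
vanishes identically, then all the coefficients vanish. -/
theorem theta_series_linearly_independent
    (d : ℤ) (hdpos : 0 < d) (hfund : IsFundamentalDiscriminant d)
    (n : ℕ) (K : Fin n → Type*) [∀ i, Field (K i)] [∀ i, NumberField (K i)]
    (hdeg : ∀ i, Module.finrank ℚ (K i) = 3)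
    (htr : ∀ i, ∀ (φ : K i →+* ℂ) (x : K i), (φ x).im = 0)
    (hdisc : ∀ i, NumberField.discr (K i) = d)
    (hnoniso : ∀ i j, i ≠ j → ¬ Nonempty (K i ≃+* K j))
    (lam : Fin n → ℂ)
    (hlin : ∀ m : ℕ,
      ∑ i, lam i *
        (Nat.card {x : NumberField.RingOfIntegers (K i) //
          Algebra.trace ℚ (K i) (x : K i) = 0 ∧
            Algebra.trace ℚ (K i) ((x : K i) ^ 2) =
              ((2 * (Int.gcd 3 d : ℤ) * (m : ℤ) : ℤ) : ℚ)} : ℂ) = 0) :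
    ∀ i, lam i = 0 := by
  exact ThetaIndep.final d hdpos hfund n K hdeg htr hdisc hnoniso lam hlin
end

section
/- Let Q and Q₁ be integral binary quadratic forms with the same discriminant. If there exists a prime p that is represented by both Q and Q₁, then Q and Q₁ are GL₂(ℤ)-equivalent. -/
/-- An integral binary quadratic form `a x² + b x y + c y²`. -/
structure BinaryQF where
  a : ℤ
  b : ℤ
  c : ℤ

namespace BinaryQF

/-- Evaluation of the form at `(x, y)`. -/
def eval (Q : BinaryQF) (x y : ℤ) : ℤ := Q.a * x ^ 2 + Q.b * x * y + Q.c * y ^ 2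

/-- The discriminant `b² − 4ac`. -/
def disc (Q : BinaryQF) : ℤ := Q.b ^ 2 - 4 * Q.a * Q.c

/-- A form is primitive if `gcd(a, b, c) = 1`. -/
def IsPrimitive (Q : BinaryQF) : Prop := Int.gcd Q.a (Int.gcd Q.b Q.c) = 1

/-- A form is positive definite if `a > 0` and its discriminant is negative. -/
def IsPosDef (Q : BinaryQF) : Prop := 0 < Q.a ∧ Q.disc < 0

/-- `Q` and `Q'` are GL₂(ℤ)-equivalent if there is an integer matrix of
determinant `±1` taking one to the other. -/
def Equiv (Q Q' : BinaryQF) : Prop :=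
  ∃ p q r s : ℤ, (p * s - q * r = 1 ∨ p * s - q * r = -1) ∧
    ∀ x y : ℤ, Q'.eval x y = Q.eval (p * x + q * y) (r * x + s * y)

/-- The number of representations of `n` by `Q`. -/
noncomputable def rep (Q : BinaryQF) (n : ℤ) : ℕ :=
  Nat.card {v : ℤ × ℤ // Q.eval v.1 v.2 = n}

/-- `n` is represented by `Q` if `Q(x, y) = n` for some integers `x, y`. -/
def Represents (Q : BinaryQF) (n : ℤ) : Prop := ∃ x y : ℤ, Q.eval x y = n

end BinaryQF

theorem BinaryQF.Equiv.symm' {Q R : BinaryQF} (h : Q.Equiv R) : R.Equiv Q := by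
  obtain ⟨p, q, r, s, hd, h⟩ := h
  refine ⟨s, -q, -r, p, ?_, ?_⟩
  · rcases hd with hd | hd
    · left; linarith
    · right; linarith
  · intro x y
    rw [h]
    have e1 : p * (s * x + -q * y) + q * (-r * x + p * y) = (p * s - q * r) * x := by ring
    have e2 : r * (s * x + -q * y) + s * (-r * x + p * y) = (p * s - q * r) * y := by ring
    rw [e1, e2]
    rcases hd with hd | hd <;> rw [hd] <;> simp only [BinaryQF.eval] <;> ring

theorem BinaryQF.Equiv.trans' {Q R S : BinaryQF} (h : Q.Equiv R) (h' : R.Equiv S) :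
    Q.Equiv S := by
  obtain ⟨p, q, r, s, hd, h⟩ := h
  obtain ⟨p', q', r', s', hd', h'⟩ := h'
  refine ⟨p * p' + q * r', p * q' + q * s', r * p' + s * r', r * q' + s * s', ?_, ?_⟩
  · have e : (p * p' + q * r') * (r * q' + s * s') - (p * q' + q * s') * (r * p' + s * r')
        = (p * s - q * r) * (p' * s' - q' * r') := by ring
    rw [e]
    rcases hd with hd | hd <;> rcases hd' with hd' | hd' <;> simp [hd, hd']
  · intro x y
    rw [h', h]
    simp only [BinaryQF.eval]
    ring

theorem BinaryQF.exists_normal (Q : BinaryQF) (p : ℕ) (hp : p.Prime)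
    (hQ : Q.Represents (p : ℤ)) :
    ∃ b c : ℤ, Q.Equiv ⟨p, b, c⟩ ∧ b ^ 2 - 4 * p * c = Q.disc := by
  obtain ⟨x, y, h⟩ := hQ
  have hcop : IsCoprime x y := by
    rw [Int.isCoprime_iff_gcd_eq_one]
    have hx : ((Int.gcd x y : ℕ) : ℤ) ∣ x := Int.gcd_dvd_left x y
    have hy : ((Int.gcd x y : ℕ) : ℤ) ∣ y := Int.gcd_dvd_right x y
    generalize Int.gcd x y = g at hx hy
    obtain ⟨u, rfl⟩ := hx
    obtain ⟨v, rfl⟩ := hy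
    have hg : g * g ∣ p := by
      have : ((g * g : ℕ) : ℤ) ∣ (p : ℤ) := by
        refine ⟨Q.eval u v, ?_⟩
        rw [← h]; simp only [BinaryQF.eval]; push_cast; ring
      exact_mod_cast this
    exact Nat.isUnit_iff.mp (hp.prime.irreducible.squarefree g hg)
  obtain ⟨s, t, hst⟩ := hcop
  refine ⟨2 * Q.a * x * (-t) + Q.b * (x * s + (-t) * y) + 2 * Q.c * y * s, Q.eval (-t) s,
    ⟨x, -t, y, s, Or.inl (by linarith), ?_⟩, ?_⟩
  · intro X Y
    rw [← h]
    simp only [BinaryQF.eval]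
    ring
  · rw [← h]
    simp only [BinaryQF.eval, BinaryQF.disc]
    linear_combination (Q.b ^ 2 - 4 * Q.a * Q.c) * (s * x + t * y + 1) * hst

/-- Two integral binary quadratic forms of the same discriminant both representing a
common prime `p` are GL₂(ℤ)-equivalent. -/
theorem equiv_of_common_prime (Q Q₁ : BinaryQF) (hdisc : Q.disc = Q₁.disc)
    (p : ℕ) (hp : p.Prime)
    (hQ : Q.Represents (p : ℤ)) (hQ₁ : Q₁.Represents (p : ℤ)) :
    Q.Equiv Q₁ := by
  obtain ⟨b, c, hE, hd⟩ := Q.exists_normal p hp hQ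
  obtain ⟨b', c', hE', hd'⟩ := Q₁.exists_normal p hp hQ₁
  refine hE.trans' (BinaryQF.Equiv.trans' ?_ hE'.symm')
  have key : b ^ 2 - 4 * p * c = b' ^ 2 - 4 * p * c' := by rw [hd, hd', hdisc]
  have hp0 : (p : ℤ) ≠ 0 := by exact_mod_cast hp.ne_zero
  have hpar : Even (b' - b) := by
    have h1 : Even (b' ^ 2 - b ^ 2) := ⟨2 * p * c' - 2 * p * c, by linarith⟩
    simpa [Int.even_sub, Int.even_pow] using h1
  obtain ⟨m, hm⟩ := hpar
  obtain rfl : b' = b + 2 * m := by linarith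
  have hdvd : (p : ℤ) ∣ m * (b + m) := ⟨c' - c, by linarith⟩
  rcases (Nat.prime_iff_prime_int.mp hp).dvd_or_dvd hdvd with ⟨k, hk⟩ | ⟨k, hk⟩
  · subst hk
    have hc : c' = p * k ^ 2 + b * k + c := by
      apply mul_left_cancel₀ hp0
      linarith
    subst hc
    refine ⟨1, k, 0, 1, Or.inl (by ring), ?_⟩
    intro x y
    simp only [BinaryQF.eval]
    ring
  · obtain rfl : m = p * k - b := by linarith
    have hc : c' = p * k ^ 2 - b * k + c := by
      apply mul_left_cancel₀ hp0
      linarith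
    subst hc
    refine ⟨1, k, 0, -1, Or.inr (by ring), ?_⟩
    intro x y
    simp only [BinaryQF.eval]
    ring
end
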